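/- Let d ≥ 3, n ≥ 1 and r ≥ 1 be integers with r·(n+1) < C(n+d,d) and with (d,n,r) not equal to any of (6,2,9), (4,3,8), (3,5,9). Then for a generic choice of points p₁,…,p_r ∈ ℂ^{n+1}, the following holds: every nonzero vector q ∈ ℂ^{n+1} such that every homogeneous polynomial of degree d in ℂ[x₀,…,xₙ] that is singular at all of p₁,…,p_r is also singular at q, is a scalar multiple of some pᵢ. That is, the common singular locus of the space of degree-d hypersurfaces in ℙ^n singular at r general points consists exactly of these r points. -/

import Mathlib

/-!
Write `k = n + 1` for the number of variables. The theorem follows from the property `BJ σ d i`: for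
some configuration of `r` points the gradient conditions are independent on forms of degree `d`, and
the Hessians at the `i`-th point of the forms singular at all the points have no common kernel
vector except the multiples of that point. There are two parts.

*From `BJ` to the theorem.* Take points `P` whose coordinates are independent transcendentals over
`ℂ`, and let `K` be an algebraic closure of the field these generate. Nondegeneracy of one
configuration passes to this one (`bj_generic`). Let `q` be a common singular point over `K` of the
forms singular at `P`. As such forms vanish at `q`, there are coefficients with `g(q) = ∑ λ_{lb} ∂_b
g(P_l)` for all forms `g` of degree `d`. For a form `f` singular at `P`, with coefficients in `K`,
apply to `f(q) = 0` the derivation of `K` extending the partial derivative by the `a`-th coordinate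
of `P_i` (`exists_derivation`). The coordinates of `q` may move as well, but that contributes
nothing because the gradient of `f` at `q` vanishes. What remains says that the Hessian of `f` at
`P_i` kills the vector `λ_i` (`hessB_kernel`), so `λ_i` is a multiple of `P_i` by `BJ`. The Euler
relation turns the formula for `g(q)` into a combination of the values `g(P_l)`, and testing it on
products of a coordinate with derivatives of forms that are dual to the gradient conditions shows
that `q` is a multiple of some `P_l` (`core`). The polynomial `F` is obtained from this by the
Nullstellensatz over the field of fractions and by clearing denominators (`generic_of_BJ`).

*Proof of `BJ`.* The stronger property `BS` asks for independent gradient conditions (`AH`) and for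
a single form, singular at all the points, whose Hessian at one of them has corank one; it implies
`BJ` (`BS.bj`). It fails in the three excluded cases `(d, n, r)`; for `(6, 2, 9)`, the only singular
sextic is the square of the plane cubic through nine general points. In degree at least four `BS` is
proved by induction on the degree and the number of variables, with points specialised to the
hyperplane `x₀ = 0`: `u` of them lie on it, `e` approach it with a parameter `t`, and `s` remain
general. Forms are written as `t h(x₁, …, x_k) + x₀ g`. At `t = 0` the conditions on `h` and on `g`
separate (`stepT_surj_zero`): `h` carries `u` double points and `e` simple ones, and `g` has degree
one less and carries `e + s` points together with `u` simple points on the hyperplane. Simple points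
on the hyperplane impose independent conditions as long as few forms divisible by `x₀` remain
(`exists_points`), and this is bounded in degree two less (`KK`), where each additional general
point lowers the dimension by at least two (`KK.succ`). The conclusions are `step_AH` and `step_BS`;
the numbers `u`, `e`, `s` are found uniformly in `quartic_large` and `uniform`, and explicitly in
finitely many other cases.

Cubics are different, since quadrics are too special to support the induction. In nine or more
variables, group the variables into blocks of three and `c ≤ 2` further ones, and take as points the
unit vectors of the blocks, three points for each pair of blocks, and some points involving the
further variables. Any three variables lie in the span of three blocks, so a cubic satisfying the
conditions is determined by its restrictions to triples of blocks (`full_injective`), and cubics on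
triples extend (`exists_glue`). Hence `BJ` reduces to three blocks, that is to a numerical statement
in `9`, `10` or `11` variables (`bj_of_good`), which is verified by elimination modulo `101`
(`good_of_chk`). Cubics with somewhat fewer points, which start the induction for quartics, do
follow by degeneration (`cubic_bs`). Cubics in fewer variables, and `21` double points on quartics
in six variables, are verified directly in the same way (`BS.of_chk`, `AH.of_chk`).
-/

open MvPolynomial

noncomputable section

/-- The linear form `a₀x₀ + ⋯ + aₙxₙ` with coefficient vector `a`. -/
def linForm {n : ℕ} (a : Fin (n + 1) → ℂ) : MvPolynomial (Fin (n + 1)) ℂ :=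
  ∑ i, C (a i) * X i

/-- Evaluation at the point `v`, as a linear map. -/
def evalAt {n : ℕ} (v : Fin (n + 1) → ℂ) : MvPolynomial (Fin (n + 1)) ℂ →ₗ[ℂ] ℂ :=
  (aeval v).toLinearMap

/-- The linear map `f ↦ (∂f/∂xᵢ)(p)`. -/
def evalPDeriv {n : ℕ} (p : Fin (n + 1) → ℂ) (i : Fin (n + 1)) :
    MvPolynomial (Fin (n + 1)) ℂ →ₗ[ℂ] ℂ :=
  evalAt p ∘ₗ (pderiv i).toLinearMap

/-- `f` is singular at `p`: all partial derivatives of `f` vanish at `p`. -/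
def SingularAt {n : ℕ} (f : MvPolynomial (Fin (n + 1)) ℂ) (p : Fin (n + 1) → ℂ) : Prop :=
  ∀ i, evalPDeriv p i f = 0

/-- The space of homogeneous degree-`d` polynomials in `n+1` variables that vanish at every
point of `V` and are singular at every point of `S`. -/
def SingSpace (n : ℕ) (d : ℕ) (S V : Set (Fin (n + 1) → ℂ)) :
    Submodule ℂ (MvPolynomial (Fin (n + 1)) ℂ) :=
  homogeneousSubmodule (Fin (n + 1)) ℂ d ⊓ (⨅ v ∈ V, LinearMap.ker (evalAt v)) ⊓
    ⨅ p ∈ S, ⨅ i, LinearMap.ker (evalPDeriv p i)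

/-- A property of parameters `t : ι → ℂ` holds for a generic choice of `t` if there is a
nonzero polynomial `F` in the variables `ι` such that the property holds whenever
`F(t) ≠ 0`. -/
def Generic {ι : Type} [Fintype ι] (P : (ι → ℂ) → Prop) : Prop :=
  ∃ F : MvPolynomial ι ℂ, F ≠ 0 ∧ ∀ t : ι → ℂ, eval t F ≠ 0 → P t

end

set_option linter.unusedSectionVars false

section Main

open scoped Matrix

/-! ### Polynomial functions and genericity -/

/-- A function on a complex vector space whose restriction to every affine line is a polynomial
in the parameter of the line. -/
def PolyLine {X : Type*} [AddCommGroup X] [Module ℂ X] (φ : X → ℂ) : Prop :=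
  ∀ x v : X, ∃ q : Polynomial ℂ, ∀ s : ℂ, φ (x + s • v) = q.eval s

/-- `P` holds off the zero set of some function that is polynomial on lines and not identically
zero. -/
def Gen {X : Type*} [AddCommGroup X] [Module ℂ X] (P : X → Prop) : Prop :=
  ∃ φ : X → ℂ, PolyLine φ ∧ (∃ x, φ x ≠ 0) ∧ ∀ x, φ x ≠ 0 → P x

section PolyLine
variable {X Y : Type*} [AddCommGroup X] [Module ℂ X] [AddCommGroup Y] [Module ℂ Y]

namespace PolyLine

lemma const (c : ℂ) : PolyLine (fun _ : X => c) := fun _ _ => ⟨Polynomial.C c, by simp⟩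

lemma add {φ ψ : X → ℂ} (h : PolyLine φ) (k : PolyLine ψ) : PolyLine (fun x => φ x + ψ x) := by
  intro x v
  obtain ⟨a, ha⟩ := h x v
  obtain ⟨b, hb⟩ := k x v
  exact ⟨a + b, fun s => by simp [ha, hb]⟩

lemma mul {φ ψ : X → ℂ} (h : PolyLine φ) (k : PolyLine ψ) : PolyLine (fun x => φ x * ψ x) := by
  intro x v
  obtain ⟨a, ha⟩ := h x v
  obtain ⟨b, hb⟩ := k x v
  exact ⟨a * b, fun s => by simp [ha, hb]⟩

lemma neg {φ : X → ℂ} (h : PolyLine φ) : PolyLine (fun x => - φ x) := by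
  simpa using (const (-1)).mul h

lemma sub {φ ψ : X → ℂ} (h : PolyLine φ) (k : PolyLine ψ) : PolyLine (fun x => φ x - ψ x) := by
  simpa [sub_eq_add_neg] using h.add k.neg

lemma sum {ι : Type*} (s : Finset ι) {φ : ι → X → ℂ} (h : ∀ i, PolyLine (φ i)) :
    PolyLine (fun x => ∑ i ∈ s, φ i x) := by
  classical
  induction s using Finset.induction_on with
  | empty => simpa using const (X := X) 0
  | insert a s ha ih => simpa [Finset.sum_insert ha] using (h a).add ih

lemma prod {ι : Type*} (s : Finset ι) {φ : ι → X → ℂ} (h : ∀ i, PolyLine (φ i)) :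
    PolyLine (fun x => ∏ i ∈ s, φ i x) := by
  classical
  induction s using Finset.induction_on with
  | empty => simpa using const (X := X) 1
  | insert a s ha ih => simpa [Finset.prod_insert ha] using (h a).mul ih

lemma linear (l : X →ₗ[ℂ] ℂ) : PolyLine (fun x => l x) := fun x v =>
  ⟨Polynomial.C (l x) + Polynomial.X * Polynomial.C (l v), fun s => by simp; ring⟩

lemma comp {φ : Y → ℂ} (h : PolyLine φ) (l : X →ₗ[ℂ] Y) (y : Y) :
    PolyLine (fun x => φ (l x + y)) := by
  intro x v
  obtain ⟨a, ha⟩ := h (l x + y) (l v)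
  refine ⟨a, fun s => ?_⟩
  rw [← ha]
  simp only [map_add, map_smul]
  congr 1
  abel

lemma compL {φ : Y → ℂ} (h : PolyLine φ) (l : X →ₗ[ℂ] Y) : PolyLine (fun x => φ (l x)) := by
  simpa using h.comp l 0

lemma det {κ : Type*} [Fintype κ] [DecidableEq κ] {M : X → Matrix κ κ ℂ}
    (h : ∀ i j, PolyLine (fun x => M x i j)) : PolyLine (fun x => (M x).det) := by
  simp only [Matrix.det_apply]
  refine sum _ fun σ => ?_
  have := (const (X := X) ((Equiv.Perm.sign σ : ℤ) : ℂ)).mul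
    (prod Finset.univ (φ := fun i x => M x (σ i) i) fun i => h _ _)
  simpa [Units.smul_def, zsmul_eq_mul] using this

lemma adjugate {κ : Type*} [Fintype κ] [DecidableEq κ] {M : X → Matrix κ κ ℂ}
    (h : ∀ i j, PolyLine (fun x => M x i j)) (i j : κ) :
    PolyLine (fun x => (M x).adjugate i j) := by
  simp only [Matrix.adjugate_apply]
  refine det fun a b => ?_
  by_cases hab : a = j
  · subst hab
    simpa using const (X := X) (Pi.single (M := fun _ => ℂ) i 1 b)
  · simpa [Matrix.updateRow_ne hab] using h a b

lemma mvEval {σ : Type*} (f : MvPolynomial σ ℂ) {φ : σ → X → ℂ} (h : ∀ i, PolyLine (φ i)) :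
    PolyLine (fun x => eval (fun i => φ i x) f) := by
  induction f using MvPolynomial.induction_on with
  | C a => simpa using const (X := X) a
  | add p q hp hq => simpa using hp.add hq
  | mul_X p i hp => simpa using hp.mul (h i)

lemma mul_ne {φ ψ : X → ℂ} (h : PolyLine φ) (k : PolyLine ψ) (hφ : ∃ x, φ x ≠ 0)
    (hψ : ∃ x, ψ x ≠ 0) : ∃ x, φ x * ψ x ≠ 0 := by
  obtain ⟨x, hx⟩ := hφ
  obtain ⟨y, hy⟩ := hψ
  obtain ⟨a, ha⟩ := h x (y - x)
  obtain ⟨b, hb⟩ := k x (y - x)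
  have ha0 : a ≠ 0 := by
    rintro rfl
    exact hx (by simpa using ha 0)
  have hb0 : b ≠ 0 := by
    rintro rfl
    exact hy (by simpa using hb 1)
  obtain ⟨s, hs⟩ : ∃ s, (a * b).eval s ≠ 0 := by
    by_contra! hc
    exact mul_ne_zero ha0 hb0 (Polynomial.funext (by simpa using hc))
  exact ⟨x + s • (y - x), by rw [ha, hb]; simpa using hs⟩

lemma prod_ne {ι : Type*} (s : Finset ι) {φ : ι → X → ℂ} (h : ∀ i, PolyLine (φ i))
    (h0 : ∀ i ∈ s, ∃ x, φ i x ≠ 0) : ∃ x, ∏ i ∈ s, φ i x ≠ 0 := by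
  classical
  induction s using Finset.induction_on with
  | empty => exact ⟨0, by simp⟩
  | insert a s ha ih =>
    simp only [Finset.prod_insert ha]
    exact (h a).mul_ne (prod s h) (h0 a (by simp)) (ih fun i hi => h0 i (by simp [hi]))

end PolyLine

namespace Gen

lemma of_polyLine {φ : X → ℂ} (h : PolyLine φ) (x : X) (hx : φ x ≠ 0) : Gen (fun x => φ x ≠ 0) :=
  ⟨φ, h, ⟨x, hx⟩, fun _ h => h⟩

lemma mono {P Q : X → Prop} (h : Gen P) (hPQ : ∀ x, P x → Q x) : Gen Q := by
  obtain ⟨φ, h1, h2, h3⟩ := h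
  exact ⟨φ, h1, h2, fun x hx => hPQ x (h3 x hx)⟩

lemma and {P Q : X → Prop} (h : Gen P) (k : Gen Q) : Gen (fun x => P x ∧ Q x) := by
  obtain ⟨φ, h1, h2, h3⟩ := h
  obtain ⟨ψ, k1, k2, k3⟩ := k
  refine ⟨fun x => φ x * ψ x, h1.mul k1, h1.mul_ne k1 h2 k2, fun x hx => ?_⟩
  exact ⟨h3 x (left_ne_zero_of_mul hx), k3 x (right_ne_zero_of_mul hx)⟩

lemma all {ι : Type*} [Finite ι] {P : ι → X → Prop} (h : ∀ i, Gen (P i)) :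
    Gen (fun x => ∀ i, P i x) := by
  classical
  have := Fintype.ofFinite ι
  choose φ h1 h2 h3 using h
  refine ⟨fun x => ∏ i, φ i x, PolyLine.prod _ h1, PolyLine.prod_ne _ h1 fun i _ => h2 i,
    fun x hx i => h3 i x ?_⟩
  exact (Finset.prod_ne_zero_iff.1 hx) i (Finset.mem_univ i)

lemma exists_ {P : X → Prop} (h : Gen P) : ∃ x, P x := by
  obtain ⟨φ, -, ⟨x, hx⟩, h3⟩ := h
  exact ⟨x, h3 x hx⟩

lemma trivial_ {P : X → Prop} (h : ∀ x, P x) : Gen P :=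
  ⟨fun _ => 1, PolyLine.const 1, ⟨0, one_ne_zero⟩, fun x _ => h x⟩

lemma compL {P : Y → Prop} (h : Gen P) (l : X →ₗ[ℂ] Y) (hl : Function.Surjective l) :
    Gen (fun x => P (l x)) := by
  obtain ⟨φ, h1, ⟨y, hy⟩, h3⟩ := h
  obtain ⟨x, rfl⟩ := hl y
  exact ⟨fun x => φ (l x), h1.compL l, ⟨x, hy⟩, fun x hx => h3 _ hx⟩

/-- A generic property of pairs holds, for generic `y`, at generic `x`. -/
lemma slice {P : X → Y → Prop} (h : Gen (fun z : X × Y => P z.1 z.2)) :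
    Gen (fun y => Gen (fun x => P x y)) := by
  obtain ⟨φ, h1, ⟨⟨x0, y0⟩, hy⟩, h3⟩ := h
  refine ⟨fun y => φ (x0, y), ?_, ⟨y0, hy⟩, fun y hy => ?_⟩
  · simpa using h1.comp (LinearMap.inr ℂ X Y) (x0, 0)
  · refine ⟨fun x => φ (x, y), ?_, ⟨x0, hy⟩, fun x hx => h3 _ hx⟩
    simpa using h1.comp (LinearMap.inl ℂ X Y) (0, y)

end Gen

section Open
variable {E : Type*} [AddCommGroup E] [Module ℂ E] {κ : Type*} [Fintype κ]

/-- Openness of surjectivity together with a nonvanishing condition `Ψ` on a kernel vector: the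
kernel vector is moved along by Cramer's rule. -/
lemma Gen.surj_ker {T : X → E →ₗ[ℂ] (κ → ℂ)} (hT : ∀ e k, PolyLine (fun x => T x e k))
    {Ψ : X → E → ℂ}
    (hΨ : ∀ (e0 : E) (f : κ → E) (c : X → ℂ) (a : κ → X → ℂ), PolyLine c → (∀ k, PolyLine (a k)) →
      PolyLine (fun x => Ψ x (c x • e0 + ∑ k, a k x • f k)))
    {x0 : X} (hs : Function.Surjective (T x0)) {e0 : E} (he0 : T x0 e0 = 0) (hu : Ψ x0 e0 ≠ 0) :
    Gen (fun x => Function.Surjective (T x) ∧ ∃ e, T x e = 0 ∧ Ψ x e ≠ 0) := by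
  classical
  choose f hf using fun k : κ => hs (Pi.single k 1)
  let M : X → Matrix κ κ ℂ := fun x => Matrix.of fun k j => T x (f j) k
  have hM : ∀ i j, PolyLine (fun x => M x i j) := fun i j => hT _ _
  have hM0 : M x0 = 1 := by
    ext i j
    simp [M, hf, Matrix.one_apply, Pi.single_apply]
  have hMv : ∀ x (a : κ → ℂ), T x (∑ k, a k • f k) = M x *ᵥ a := by
    intro x a
    ext i
    simp [M, Matrix.mulVec, dotProduct, mul_comm]
  let a : κ → X → ℂ := fun k x => -(((M x).adjugate *ᵥ (T x e0)) k)
  have ha : ∀ k, PolyLine (a k) := by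
    intro k
    refine PolyLine.neg ?_
    simp only [Matrix.mulVec, dotProduct]
    exact PolyLine.sum _ fun j => (PolyLine.adjugate hM _ _).mul (hT _ _)
  let e : X → E := fun x => (M x).det • e0 + ∑ k, a k x • f k
  have hdet : PolyLine (fun x => (M x).det) := PolyLine.det hM
  have he : e x0 = e0 := by
    simp [e, a, he0, hM0]
  refine ⟨fun x => (M x).det * Ψ x (e x), hdet.mul (hΨ e0 f _ a hdet ha),
    ⟨x0, by simpa [hM0, he] using hu⟩, fun x hx => ⟨?_, e x, ?_, right_ne_zero_of_mul hx⟩⟩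
  · intro y
    have hd : IsUnit (M x).det := isUnit_iff_ne_zero.2 (left_ne_zero_of_mul hx)
    refine ⟨∑ k, ((M x)⁻¹ *ᵥ y) k • f k, ?_⟩
    rw [hMv, Matrix.mulVec_mulVec, Matrix.mul_nonsing_inv _ hd, Matrix.one_mulVec]
  · have : T x (e x) = (M x).det • T x e0 + M x *ᵥ (fun k => a k x) := by
      simp only [e, map_add, map_smul, hMv]
    rw [this]
    have h2 : (fun k => a k x) = -((M x).adjugate *ᵥ (T x e0)) := rfl
    rw [h2, Matrix.mulVec_neg, Matrix.mulVec_mulVec, Matrix.mul_adjugate, Matrix.smul_mulVec,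
      Matrix.one_mulVec, add_neg_cancel]

lemma Gen.surj {T : X → E →ₗ[ℂ] (κ → ℂ)} (hT : ∀ e k, PolyLine (fun x => T x e k))
    {x0 : X} (hs : Function.Surjective (T x0)) : Gen (fun x => Function.Surjective (T x)) :=
  (Gen.surj_ker (Ψ := fun _ _ => 1) hT (fun _ _ _ _ _ _ => PolyLine.const 1) hs (map_zero _)
    one_ne_zero).mono fun _ h => h.1

/-- The kernel of `T` has dimension at most `k`: `k` further functionals cut it down to `0`. -/
def KerLE {F : Type*} [AddCommGroup F] [Module ℂ F] (T : E →ₗ[ℂ] F) (k : ℕ) : Prop :=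
  ∃ l : E →ₗ[ℂ] (Fin k → ℂ), ∀ e, T e = 0 → l e = 0 → e = 0

lemma Gen.kerLE [FiniteDimensional ℂ E] {T : X → E →ₗ[ℂ] (κ → ℂ)}
    (hT : ∀ e k, PolyLine (fun x => T x e k)) {k : ℕ} {x0 : X} (hs : KerLE (T x0) k) :
    Gen (fun x => KerLE (T x) k) := by
  classical
  obtain ⟨l, hl⟩ := hs
  let S : X → E →ₗ[ℂ] (κ ⊕ Fin k → ℂ) := fun x =>
    LinearMap.pi (Sum.elim (fun j => LinearMap.proj j ∘ₗ T x) (fun j => LinearMap.proj j ∘ₗ l))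
  have hS : ∀ x e, S x e = 0 → T x e = 0 ∧ l e = 0 := by
    intro x e h
    refine ⟨funext fun j => ?_, funext fun j => ?_⟩
    · simpa [S] using congrFun h (Sum.inl j)
    · simpa [S] using congrFun h (Sum.inr j)
  have hinj : Function.Injective (S x0) := by
    rw [← LinearMap.ker_eq_bot, LinearMap.ker_eq_bot']
    exact fun e h => hl e (hS _ _ h).1 (hS _ _ h).2
  obtain ⟨L, hL⟩ := LinearMap.exists_leftInverse_of_injective (S x0)
    (LinearMap.ker_eq_bot.2 hinj)
  let b := Module.finBasis ℂ E
  have hp : ∀ i j, PolyLine (fun x => LinearMap.toMatrix b b (L ∘ₗ S x) i j) := by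
    intro i j
    have h1 : ∀ x, LinearMap.toMatrix b b (L ∘ₗ S x) i j
        = ∑ c, S x (b j) c * (b.repr (L (Pi.single c 1)) i) := by
      intro x
      have h2 : S x (b j) = ∑ c, S x (b j) c • (Pi.single c 1 : κ ⊕ Fin k → ℂ) := by
        ext c
        simp only [Finset.sum_apply, Pi.smul_apply, Pi.single_apply, smul_eq_mul, mul_ite, mul_one,
          mul_zero, Finset.sum_ite_eq, Finset.mem_univ, if_true]
      rw [LinearMap.toMatrix_apply, LinearMap.comp_apply]
      conv_lhs => rw [h2]
      simp only [map_sum, map_smul, Finsupp.finsetSum_apply, Finsupp.smul_apply, smul_eq_mul]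
    simp only [h1]
    refine PolyLine.sum _ fun c => PolyLine.mul ?_ (PolyLine.const _)
    rcases c with c | c
    · simpa [S] using hT (b j) c
    · simpa [S] using PolyLine.const (X := X) (l (b j) c)
  refine (Gen.of_polyLine (PolyLine.det hp) x0 ?_).mono fun x hx => ⟨l, fun e h1 h2 => ?_⟩
  · rw [hL]; simp
  · have hSe : S x e = 0 := by
      ext j
      rcases j with j | j
      · simp [S, h1]
      · simp [S, h2]
    rw [LinearMap.det_toMatrix] at hx
    have := (LinearMap.equivOfDetNeZero _ hx).injective
    apply this
    show (L ∘ₗ S x) e = (L ∘ₗ S x) 0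
    simp [hSe]

end Open
end PolyLine

/-! ### Gradients, Hessians and configurations -/

section Forms
variable {σ : Type} [Fintype σ]

/-- The space of forms of degree `d` in the variables `σ`. -/
abbrev Sf (σ : Type) (d : ℕ) : Submodule ℂ (MvPolynomial σ ℂ) := homogeneousSubmodule σ ℂ d

/-- The gradient of a polynomial at a point. -/
noncomputable def grad (p : σ → ℂ) : MvPolynomial σ ℂ →ₗ[ℂ] (σ → ℂ) :=
  LinearMap.pi fun i => (aeval p).toLinearMap ∘ₗ (pderiv i).toLinearMap

/-- The Hessian matrix of a polynomial at a point. -/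
noncomputable def hess (p : σ → ℂ) : MvPolynomial σ ℂ →ₗ[ℂ] Matrix σ σ ℂ :=
  LinearMap.pi fun i => LinearMap.pi fun j =>
    (aeval p).toLinearMap ∘ₗ (pderiv i).toLinearMap ∘ₗ (pderiv j).toLinearMap

lemma grad_apply (p : σ → ℂ) (f : MvPolynomial σ ℂ) (i : σ) :
    grad p f i = eval p (pderiv i f) := by
  simp [grad, aeval_eq_eval]

lemma hess_apply (p : σ → ℂ) (f : MvPolynomial σ ℂ) (i j : σ) :
    hess p f i j = eval p (pderiv i (pderiv j f)) := by
  rfl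

/-- The joint gradient map of a family of points, on forms of degree `d`. -/
noncomputable def gmap {ι : Type} (d : ℕ) (p : ι → σ → ℂ) : Sf σ d →ₗ[ℂ] (ι × σ → ℂ) :=
  LinearMap.pi fun a => LinearMap.proj a.2 ∘ₗ grad (p a.1) ∘ₗ (Sf σ d).subtype

lemma gmap_apply {ι : Type} (d : ℕ) (p : ι → σ → ℂ) (f : Sf σ d) (a : ι × σ) :
    gmap d p f a = eval (p a.1) (pderiv a.2 f.1) := by
  simp [gmap, grad_apply]

lemma gmap_eq_zero {ι : Type} {d : ℕ} {p : ι → σ → ℂ} {f : Sf σ d} :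
    gmap d p f = 0 ↔ ∀ i, grad (p i) f.1 = 0 := by
  constructor
  · intro h i
    ext j
    simpa [gmap_apply, grad_apply] using congrFun h (i, j)
  · intro h
    ext ⟨i, j⟩
    simpa [gmap_apply, grad_apply] using congrFun (h i) j

lemma euler {d : ℕ} {f : MvPolynomial σ ℂ} (hf : f.IsHomogeneous d) (p : σ → ℂ) :
    ∑ i, p i * eval p (pderiv i f) = d * eval p f := by
  have := congrArg (eval p) hf.sum_X_mul_pderiv
  simpa using this

lemma eval_eq_zero_of_grad {d : ℕ} {f : MvPolynomial σ ℂ} (hf : f.IsHomogeneous d) (hd : d ≠ 0)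
    {p : σ → ℂ} (h : grad p f = 0) : eval p f = 0 := by
  have h1 := euler hf p
  have h2 : ∀ i, eval p (pderiv i f) = 0 := fun i => by
    simpa [grad_apply] using congrFun h i
  simp only [h2, mul_zero, Finset.sum_const_zero] at h1
  have : (d : ℂ) ≠ 0 := by exact_mod_cast hd
  exact (mul_eq_zero.1 h1.symm).resolve_left this

lemma pderiv_comm (i j : σ) (f : MvPolynomial σ ℂ) :
    pderiv i (pderiv j f) = pderiv j (pderiv i f) := by
  classical
  have h : ⁅pderiv (R := ℂ) i, pderiv (R := ℂ) j⁆ = 0 := by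
    refine MvPolynomial.derivation_ext fun k => ?_
    rw [Derivation.commutator_apply]
    simp [pderiv_X, Pi.single_apply, apply_ite]
  have := congrArg (fun D => D f) h
  rw [Derivation.commutator_apply] at this
  exact sub_eq_zero.1 this

lemma hess_symm (p : σ → ℂ) (f : MvPolynomial σ ℂ) (i j : σ) : hess p f i j = hess p f j i := by
  rw [hess_apply, hess_apply, pderiv_comm]

/-- The Hessian of a form at `p`, applied to `p`, is a multiple of the gradient. -/
lemma hess_mulVec_self {d : ℕ} {f : MvPolynomial σ ℂ} (hf : f.IsHomogeneous (d + 1)) (p : σ → ℂ) :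
    hess p f *ᵥ p = (d : ℂ) • grad p f := by
  ext j
  have h1 := euler (hf.pderiv (i := j)) p
  rw [Pi.smul_apply, grad_apply, smul_eq_mul]
  change ∑ i, hess p f j i * p i = _
  rw [Nat.add_sub_cancel] at h1
  rw [← h1]
  refine Finset.sum_congr rfl fun i _ => ?_
  have h2 := hess_symm p f j i
  rw [hess_apply p f i j] at h2
  rw [h2]
  ring

/-- The Hessian of `f` at `p` has corank at most one: together with one further linear form `w`
it has trivial kernel. -/
def Corank1 (f : MvPolynomial σ ℂ) (p : σ → ℂ) : Prop :=
  ∃ w : σ → ℂ, ∀ v, hess p f *ᵥ v = 0 → w ⬝ᵥ v = 0 → v = 0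

/-- The gradient conditions at some family of points indexed by `ι` are independent on forms of
degree `d`. -/
def AH (σ : Type) [Fintype σ] (d : ℕ) (ι : Type) : Prop :=
  ∃ p : ι → σ → ℂ, Function.Surjective (gmap d p)

/-- Independent gradient conditions, and some form singular at all the points has a Hessian of
corank one at one of them. -/
def BS (σ : Type) [Fintype σ] (d : ℕ) (ι : Type) : Prop :=
  ∃ p : ι → σ → ℂ, Function.Surjective (gmap d p) ∧
    ∃ i, ∃ f : Sf σ d, gmap d p f = 0 ∧ Corank1 f.1 (p i)

lemma BS.ah {d : ℕ} {ι : Type} (h : BS σ d ι) : AH σ d ι := by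
  obtain ⟨p, h, -⟩ := h
  exact ⟨p, h⟩

lemma AH.of_injective {d : ℕ} {ι κ : Type} (h : AH σ d ι) (j : κ → ι)
    (hj : Function.Injective j) : AH σ d κ := by
  obtain ⟨p, hp⟩ := h
  refine ⟨p ∘ j, fun c => ?_⟩
  obtain ⟨f, hf⟩ := hp (fun a => Function.extend j (fun k => c (k, a.2)) 0 a.1)
  refine ⟨f, funext fun a => ?_⟩
  have := congrFun hf (j a.1, a.2)
  simpa [gmap_apply, hj.extend_apply] using this

lemma AH.of_card {d : ℕ} {ι κ : Type} [Fintype ι] [Fintype κ] (h : AH σ d ι)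
    (hc : Fintype.card κ ≤ Fintype.card ι) : AH σ d κ := by
  obtain ⟨j⟩ := Function.Embedding.nonempty_of_card_le hc
  exact h.of_injective j j.2

lemma BS.of_card {d : ℕ} {ι κ : Type} [Fintype ι] [Fintype κ] [Nonempty κ] (h : BS σ d ι)
    (hc : Fintype.card κ ≤ Fintype.card ι) : BS σ d κ := by
  classical
  obtain ⟨p, hp, i, f, hf, hc1⟩ := h
  obtain ⟨j⟩ := Function.Embedding.nonempty_of_card_le hc
  -- rearrange the embedding so that the distinguished index is hit
  obtain ⟨k0⟩ := ‹Nonempty κ›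
  let j' : κ → ι := Equiv.swap (j k0) i ∘ j
  have hj' : Function.Injective j' := (Equiv.injective _).comp j.2
  refine ⟨p ∘ j', fun c => ?_, k0, f, ?_, ?_⟩
  · obtain ⟨f, hf⟩ := hp (fun a => Function.extend j' (fun k => c (k, a.2)) 0 a.1)
    refine ⟨f, funext fun a => ?_⟩
    have := congrFun hf (j' a.1, a.2)
    rw [gmap_apply] at this ⊢
    simpa [hj'.extend_apply] using this
  · rw [gmap_eq_zero] at hf ⊢
    exact fun k => hf _
  · simpa [j'] using hc1

lemma degree_set_eq (d : ℕ) : {s : σ →₀ ℕ | s.degree = d} =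
    ((@Finset.finsuppAntidiag σ ℕ (Classical.decEq σ) _ _ _ Finset.univ d :
      Finset (σ →₀ ℕ)) : Set (σ →₀ ℕ)) := by
  classical
  ext s
  simp [Finsupp.degree_eq_sum]

/-- Forms of degree `d` are the functions on the monomials of degree `d`. -/
noncomputable def SfEquiv (σ : Type) [Fintype σ] (d : ℕ) :
    Sf σ d ≃ₗ[ℂ] ({s : σ →₀ ℕ | s.degree = d} →₀ ℂ) :=
  (LinearEquiv.ofEq _ _ (homogeneousSubmodule_eq_finsupp_supported σ ℂ d)).trans
    (AddMonoidAlgebra.supportedEquivFinsupp _)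

instance (d : ℕ) : Finite {s : σ →₀ ℕ | s.degree = d} := by
  rw [degree_set_eq]; exact Finset.finite_toSet _

instance (d : ℕ) : FiniteDimensional ℂ (Sf σ d) := (SfEquiv σ d).symm.finiteDimensional

lemma finrank_Sf (d : ℕ) : Module.finrank ℂ (Sf σ d) = (Fintype.card σ).multichoose d := by
  classical
  have := Fintype.ofFinite {s : σ →₀ ℕ | s.degree = d}
  rw [(SfEquiv σ d).finrank_eq, Module.finrank_finsupp_self, ← Nat.card_eq_fintype_card,
    Nat.card_coe_set_eq, degree_set_eq, Set.ncard_coe_finset,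
    Finset.card_finsuppAntidiag_nat_eq_multichoose, Finset.card_univ]

end Forms

/-! ### Hyperplane coordinates -/

section Hyperplane
variable {k : ℕ}

/-- The point with first coordinate `t` and remaining coordinates `z`. -/
def pt (t : ℂ) (z : Fin k → ℂ) : Fin (k + 1) → ℂ := Fin.cons t z

@[simp] lemma pt_zero (t : ℂ) (z : Fin k → ℂ) : pt t z 0 = t := rfl
@[simp] lemma pt_succ (t : ℂ) (z : Fin k → ℂ) (i : Fin k) : pt t z i.succ = z i := rfl

/-- A polynomial in the variables `x₁, …, x_k`, seen as a polynomial in `x₀, …, x_k`. -/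
noncomputable def up (h : MvPolynomial (Fin k) ℂ) : MvPolynomial (Fin (k + 1)) ℂ :=
  rename Fin.succ h

lemma eval_up (t : ℂ) (z : Fin k → ℂ) (h : MvPolynomial (Fin k) ℂ) :
    eval (pt t z) (up h) = eval z h := by
  rw [up, eval_rename]; rfl

lemma eval_up' (P : Fin (k + 1) → ℂ) (h : MvPolynomial (Fin k) ℂ) :
    eval P (up h) = eval (fun i => P i.succ) h := by
  rw [up, eval_rename]; rfl

lemma pderiv_succ_up (i : Fin k) (h : MvPolynomial (Fin k) ℂ) :
    pderiv i.succ (up h) = up (pderiv i h) :=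
  pderiv_rename (Fin.succ_injective k) i h

lemma pderiv_zero_up (h : MvPolynomial (Fin k) ℂ) : pderiv 0 (up h) = 0 := by
  induction h using MvPolynomial.induction_on with
  | C a => simp [up]
  | add p q hp hq =>
    have : up (p + q) = up p + up q := by simp [up]
    rw [this, map_add, hp, hq, add_zero]
  | mul_X p i hp =>
    have : up (p * X i) = up p * X i.succ := by simp [up]
    rw [this, pderiv_mul, hp, pderiv_X_of_ne (Fin.succ_ne_zero i)]
    simp

lemma up_hom {d : ℕ} {h : MvPolynomial (Fin k) ℂ} (hh : h.IsHomogeneous d) :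
    (up h).IsHomogeneous d := hh.rename_isHomogeneous

lemma pderiv_zero_X0 (g : MvPolynomial (Fin (k + 1)) ℂ) :
    pderiv 0 (X 0 * g) = g + X 0 * pderiv 0 g := by
  rw [pderiv_mul]; simp

lemma pderiv_succ_X0 (i : Fin k) (g : MvPolynomial (Fin (k + 1)) ℂ) :
    pderiv i.succ (X 0 * g) = X 0 * pderiv i.succ g := by
  rw [pderiv_mul, pderiv_X_of_ne (Fin.succ_ne_zero i).symm]; simp

lemma X0_dvd {f : MvPolynomial (Fin (k + 1)) ℂ} (hf : ∀ y : Fin k → ℂ, eval (pt 0 y) f = 0) :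
    X 0 ∣ f := by
  let ρ : MvPolynomial (Fin (k + 1)) ℂ →ₐ[ℂ] MvPolynomial (Fin k) ℂ :=
    aeval (Fin.cons 0 X : Fin (k + 1) → MvPolynomial (Fin k) ℂ)
  have key : ∀ f : MvPolynomial (Fin (k + 1)) ℂ, X 0 ∣ f - up (ρ f) := by
    intro f
    induction f using MvPolynomial.induction_on with
    | C a => simp [up, ρ, algebraMap_eq]
    | add p q hp hq =>
      have : p + q - up (ρ (p + q)) = (p - up (ρ p)) + (q - up (ρ q)) := by
        simp only [up, map_add]; ring
      rw [this]
      exact dvd_add hp hq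
    | mul_X p i hp =>
      have : p * X i - up (ρ (p * X i)) = (p - up (ρ p)) * X i + up (ρ p) * (X i - up (ρ (X i))) := by
        simp only [up, map_mul]; ring
      rw [this]
      refine dvd_add (hp.mul_right _) (Dvd.dvd.mul_left ?_ _)
      refine Fin.cases ?_ (fun j => ?_) i
      · simp [ρ, up]
      · simp [ρ, up]
  have h0 : ρ f = 0 := by
    refine MvPolynomial.funext fun y => ?_
    have : ∀ f, eval y (ρ f) = eval (pt 0 y) f := by
      intro f
      induction f using MvPolynomial.induction_on with
      | C a => simp [ρ, algebraMap_eq]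
      | add p q hp hq => simp [hp, hq]
      | mul_X p i hp =>
        rw [map_mul, map_mul, map_mul, hp]
        congr 1
        refine Fin.cases ?_ (fun j => ?_) i
        · simp [ρ]
        · simp [ρ]
    rw [this, hf, map_zero]
  have := key f
  rwa [h0, up, map_zero, sub_zero] at this

lemma hom_of_X0_mul {d : ℕ} {g : MvPolynomial (Fin (k + 1)) ℂ}
    (h : (X 0 * g).IsHomogeneous (d + 1)) : g.IsHomogeneous d := by
  intro m hm
  have h1 : coeff (Finsupp.single 0 1 + m) (X 0 * g) ≠ 0 := by
    rwa [coeff_X_mul]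
  have := h h1
  simp only [map_add, Finsupp.weight_single] at this
  simp at this
  omega

lemma X0_mul_hom {d : ℕ} {g : MvPolynomial (Fin (k + 1)) ℂ} (h : g.IsHomogeneous d) :
    (X 0 * g).IsHomogeneous (d + 1) := by
  have := (isHomogeneous_X ℂ (0 : Fin (k + 1))).mul h
  rwa [add_comm 1 d] at this

/-- Where `x₀` does not vanish, `x₀ g` is singular exactly where `g` is. -/
lemma grad_X0_mul {d : ℕ} {g : MvPolynomial (Fin (k + 1)) ℂ} (hg : g.IsHomogeneous d)
    {P : Fin (k + 1) → ℂ} (hP : P 0 ≠ 0) (h : grad P (X 0 * g) = 0) : grad P g = 0 := by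
  have e : eval P (X 0 * g) = 0 := eval_eq_zero_of_grad (X0_mul_hom hg) (Nat.succ_ne_zero d) h
  have e0 : eval P g = 0 := by simpa [hP] using e
  ext i
  have := congrFun h i
  rw [grad_apply] at this ⊢
  refine Fin.cases (fun h => ?_) (fun j h => ?_) i this
  · simpa [pderiv_zero_X0, e0, hP] using h
  · simpa [pderiv_succ_X0, hP] using h

lemma hess_X0_mul {g : MvPolynomial (Fin (k + 1)) ℂ} {P : Fin (k + 1) → ℂ} (h : grad P g = 0) :
    hess P (X 0 * g) = P 0 • hess P g := by
  have h' : ∀ i, eval P (pderiv i g) = 0 := fun i => by simpa [grad_apply] using congrFun h i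
  ext i j
  rw [Matrix.smul_apply, hess_apply, hess_apply]
  refine Fin.cases ?_ (fun j => ?_) j <;> refine Fin.cases ?_ (fun i => ?_) i <;>
  simp [pderiv_zero_X0, pderiv_succ_X0, h']

lemma Corank1.X0_mul {g : MvPolynomial (Fin (k + 1)) ℂ} {P : Fin (k + 1) → ℂ} (h : grad P g = 0)
    (hP : P 0 ≠ 0) (hc : Corank1 g P) : Corank1 (X 0 * g) P := by
  obtain ⟨w, hw⟩ := hc
  refine ⟨w, fun v h1 h2 => hw v ?_ h2⟩
  rw [hess_X0_mul h, Matrix.smul_mulVec] at h1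
  exact (smul_eq_zero.1 h1).resolve_left hP

end Hyperplane

/-! ### Simple points -/

section SimplePoints
variable {E X : Type} [AddCommGroup E] [Module ℂ E] [FiniteDimensional ℂ E]

/-- Evaluations at suitably chosen points impose independent conditions, up to the dimension of
the space of restrictions. -/
lemma exists_points (ev : X → E →ₗ[ℂ] ℂ) (c : ℕ) (l : E →ₗ[ℂ] (Fin c → ℂ)) :
    ∀ (u : ℕ) (F : Type) [AddCommGroup F] [Module ℂ F] [FiniteDimensional ℂ F] (T : E →ₗ[ℂ] F),
      Function.Surjective T → (∀ e, T e = 0 → (∀ x, ev x e = 0) → l e = 0 → e = 0) →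
      Module.finrank ℂ F + u + c ≤ Module.finrank ℂ E →
      ∃ x : Fin u → X, ∀ (a : F) (b : Fin u → ℂ), ∃ e, T e = a ∧ ∀ i, ev (x i) e = b i := by
  intro u
  induction u with
  | zero =>
    intro F _ _ _ T hT _ _
    exact ⟨fun i => i.elim0, fun a b => (hT a).imp fun e he => ⟨he, fun i => i.elim0⟩⟩
  | succ u ih =>
    intro F _ _ _ T hT hl hc
    obtain ⟨e, he, x, hx⟩ : ∃ e, T e = 0 ∧ ∃ x, ev x e ≠ 0 := by
      by_contra! hcon
      have hinj : Function.Injective (T.prod l) := by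
        rw [← LinearMap.ker_eq_bot, LinearMap.ker_eq_bot']
        intro e he
        have h1 : T e = 0 := congrArg Prod.fst he
        exact hl e h1 (hcon e h1) (congrArg Prod.snd he)
      have := LinearMap.finrank_le_finrank_of_injective hinj
      simp at this
      omega
    have hT' : Function.Surjective (T.prod (ev x)) := by
      rintro ⟨a, b⟩
      obtain ⟨g, rfl⟩ := hT a
      refine ⟨g + ((b - ev x g) / ev x e) • e, ?_⟩
      simp [he, hx]
    obtain ⟨y, hy⟩ := ih (F × ℂ) (T.prod (ev x)) hT' (fun e h1 => hl e (congrArg Prod.fst h1))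
      (by simp; omega)
    refine ⟨Fin.cons x y, fun a b => ?_⟩
    obtain ⟨g, hg1, hg2⟩ := hy (a, b 0) (fun i => b i.succ)
    refine ⟨g, congrArg Prod.fst hg1, fun i => ?_⟩
    refine Fin.cases ?_ (fun j => ?_) i
    · exact congrArg Prod.snd hg1
    · exact hg2 j

/-- As `exists_points`, keeping a member of the kernel on which the polynomial function `Ψ` does
not vanish: in a pencil `g₀ + λ g₁` only finitely many values of `λ` are excluded, so the base
point can be chosen where the member of the pencil vanishing there has an admissible `λ`. -/
lemma exists_points_pencil [AddCommGroup X] [Module ℂ X] (ev : X → E →ₗ[ℂ] ℂ)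
    (hev : ∀ e, PolyLine (fun x => ev x e)) (Ψ : E → ℂ) (hΨ : PolyLine Ψ)
    (c : ℕ) (l : E →ₗ[ℂ] (Fin c → ℂ)) :
    ∀ (u : ℕ) (F : Type) [AddCommGroup F] [Module ℂ F] [FiniteDimensional ℂ F] (T : E →ₗ[ℂ] F),
      Function.Surjective T → (∀ e, T e = 0 → (∀ x, ev x e = 0) → l e = 0 → e = 0) →
      Module.finrank ℂ F + u + c < Module.finrank ℂ E → (∃ g, T g = 0 ∧ Ψ g ≠ 0) →
      ∃ x : Fin u → X, (∀ (a : F) (b : Fin u → ℂ), ∃ e, T e = a ∧ ∀ i, ev (x i) e = b i) ∧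
        ∃ g, T g = 0 ∧ (∀ i, ev (x i) g = 0) ∧ Ψ g ≠ 0 := by
  intro u
  induction u with
  | zero =>
    intro F _ _ _ T hT _ _ ⟨g, hg, hg'⟩
    exact ⟨fun i => i.elim0, fun a b => (hT a).imp fun e he => ⟨he, fun i => i.elim0⟩,
      g, hg, fun i => i.elim0, hg'⟩
  | succ u ih =>
    intro F _ _ _ T hT hl hc ⟨g0, hg0, hΨ0⟩
    obtain ⟨g1, hg1, hg2⟩ : ∃ g1, T g1 = 0 ∧ ∀ a : ℂ, ∃ x, ev x (g1 + a • g0) ≠ 0 := by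
      by_contra! hcon
      let Z : Submodule ℂ E := LinearMap.ker T ⊓ ⨅ x, LinearMap.ker (ev x)
      have hZ : ∀ e, e ∈ Z ↔ T e = 0 ∧ ∀ x, ev x e = 0 := by
        intro e; simp [Z, Submodule.mem_iInf]
      have hZc : Module.finrank ℂ Z ≤ c := by
        have hinj : Function.Injective (l ∘ₗ Z.subtype) := by
          rw [← LinearMap.ker_eq_bot, LinearMap.ker_eq_bot']
          rintro ⟨e, he⟩ h
          have := (hZ e).1 he
          exact Subtype.ext (hl e this.1 this.2 h)
        simpa using LinearMap.finrank_le_finrank_of_injective hinj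
      have hle : LinearMap.ker T ≤ Z ⊔ Submodule.span ℂ {g0} := by
        intro g hg
        obtain ⟨a, ha⟩ := hcon g hg
        rw [Submodule.mem_sup]
        refine ⟨g + a • g0, (hZ _).2 ⟨?_, ha⟩, (-a) • g0,
          Submodule.smul_mem _ _ (Submodule.mem_span_singleton_self _), by simp⟩
        rw [map_add, map_smul, hg0, LinearMap.mem_ker.1 hg]; simp
      have h1 := Submodule.finrank_mono hle
      have h2 := Submodule.finrank_add_le_finrank_add_finrank Z (Submodule.span ℂ {g0})
      have h3 : Module.finrank ℂ (Submodule.span ℂ {g0}) ≤ 1 :=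
        (finrank_span_le_card ({g0} : Set E)).trans (by simp)
      have h4 := LinearMap.finrank_range_add_finrank_ker T
      rw [LinearMap.range_eq_top.2 hT, finrank_top] at h4
      omega
    obtain ⟨q, hq⟩ := hΨ g0 g1
    have hq0 : q ≠ 0 := by
      rintro rfl
      exact hΨ0 (by simpa using hq 0)
    obtain ⟨x, hx⟩ := (hev g1).mul_ne
      (PolyLine.prod (X := X) q.roots.toFinset (φ := fun b x => ev x (g0 + b • g1))
        (fun b => hev _)) (by simpa using hg2 0)
      (PolyLine.prod_ne _ (fun b => hev _) (by
        intro b hb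
        rw [Multiset.mem_toFinset, Polynomial.mem_roots hq0, Polynomial.IsRoot.def] at hb
        have hb0 : b ≠ 0 := by
          rintro rfl
          rw [← hq] at hb
          exact hΨ0 (by simpa using hb)
        obtain ⟨x, hx⟩ := hg2 b⁻¹
        refine ⟨x, fun h => hx ?_⟩
        have : g1 + b⁻¹ • g0 = b⁻¹ • (g0 + b • g1) := by
          rw [smul_add, smul_smul, inv_mul_cancel₀ hb0, one_smul, add_comm]
        rw [this, map_smul, h, smul_zero]))
    have hx1 := left_ne_zero_of_mul hx
    have hx2 := Finset.prod_ne_zero_iff.1 (right_ne_zero_of_mul hx)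
    let b : ℂ := - ev x g0 / ev x g1
    have hb : ev x (g0 + b • g1) = 0 := by
      rw [map_add, map_smul, smul_eq_mul, div_mul_cancel₀ _ hx1]; ring
    have hΨb : Ψ (g0 + b • g1) ≠ 0 := by
      intro h
      refine hx2 b ?_ hb
      rw [Multiset.mem_toFinset, Polynomial.mem_roots hq0, Polynomial.IsRoot.def, ← hq]
      exact h
    have hT' : Function.Surjective (T.prod (ev x)) := by
      rintro ⟨a, b⟩
      obtain ⟨g, rfl⟩ := hT a
      refine ⟨g + ((b - ev x g) / ev x g1) • g1, ?_⟩
      simp [hg1, hx1]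
    obtain ⟨y, hy, g, hg3, hg4, hg5⟩ := ih (F × ℂ) (T.prod (ev x)) hT'
      (fun e h1 => hl e (congrArg Prod.fst h1)) (by simp; omega)
      ⟨g0 + b • g1, Prod.ext (by
        change T (g0 + b • g1) = 0
        rw [map_add, map_smul, hg0, hg1]; simp) hb, hΨb⟩
    refine ⟨Fin.cons x y, fun a b => ?_, g, congrArg Prod.fst hg3, fun i => ?_, hg5⟩
    · obtain ⟨g, hg1, hg2⟩ := hy (a, b 0) (fun i => b i.succ)
      refine ⟨g, congrArg Prod.fst hg1, fun i => ?_⟩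
      refine Fin.cases ?_ (fun j => ?_) i
      · exact congrArg Prod.snd hg1
      · exact hg2 j
    · refine Fin.cases ?_ (fun j => ?_) i
      · exact congrArg Prod.snd hg3
      · exact hg4 j

end SimplePoints

/-! ### Moving points linearly -/

section Moving
variable {σ : Type} [Fintype σ]

/-- Linear substitution of the variables by a matrix. -/
noncomputable def lsub (A : Matrix σ σ ℂ) : MvPolynomial σ ℂ →ₐ[ℂ] MvPolynomial σ ℂ :=
  aeval fun i => ∑ j, C (A i j) * X j

lemma eval_lsub (A : Matrix σ σ ℂ) (p : σ → ℂ) (f : MvPolynomial σ ℂ) :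
    eval p (lsub A f) = eval (A *ᵥ p) f := by
  induction f using MvPolynomial.induction_on with
  | C a => simp [lsub]
  | add f g hf hg => rw [map_add, map_add, map_add, hf, hg]
  | mul_X f i hf =>
    rw [map_mul, map_mul, map_mul, hf]
    simp [lsub, Matrix.mulVec, dotProduct]

lemma pderiv_lsub (A : Matrix σ σ ℂ) (j : σ) (f : MvPolynomial σ ℂ) :
    pderiv j (lsub A f) = ∑ i, C (A i j) * lsub A (pderiv i f) := by
  classical
  induction f using MvPolynomial.induction_on with
  | C a => simp [lsub]
  | add f g hf hg =>
    simp only [map_add, hf, hg, mul_add, Finset.sum_add_distrib]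
  | mul_X f i hf =>
    have h1 : pderiv j (lsub A (X i)) = C (A i j) := by
      simp only [lsub, aeval_X, map_sum, pderiv_mul, pderiv_C, zero_mul, zero_add]
      simp [pderiv_X, Pi.single_apply]
    have h2 : ∀ x, pderiv x (f * X i) = pderiv x f * X i + f * Pi.single (M := fun _ => _) x 1 i := by
      intro x
      rw [pderiv_mul, pderiv_X]
    simp only [h2, map_mul, pderiv_mul, hf, h1, map_add, mul_add, Finset.sum_add_distrib,
      Finset.sum_mul]
    congr 1
    · exact Finset.sum_congr rfl fun x _ => by ring
    · rw [Finset.sum_eq_single i]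
      · simp; ring
      · intro b _ hb
        rw [Pi.single_eq_of_ne hb.symm]; simp
      · simp

lemma lsub_hom (A : Matrix σ σ ℂ) {d : ℕ} {f : MvPolynomial σ ℂ} (hf : f.IsHomogeneous d) :
    (lsub A f).IsHomogeneous d := by
  have := hf.aeval (fun i => ∑ j, C (A i j) * X j) (n := 1) fun i =>
    IsHomogeneous.sum _ _ _ fun j _ => (by simpa using (isHomogeneous_C σ (A i j)).mul (isHomogeneous_X ℂ j))
  simpa [lsub] using this

lemma grad_lsub (A : Matrix σ σ ℂ) (p : σ → ℂ) (f : MvPolynomial σ ℂ) :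
    grad p (lsub A f) = Aᵀ *ᵥ grad (A *ᵥ p) f := by
  ext j
  rw [grad_apply, pderiv_lsub]
  simp [Matrix.mulVec, dotProduct, grad_apply, eval_lsub]

lemma hess_lsub (A : Matrix σ σ ℂ) (p : σ → ℂ) (f : MvPolynomial σ ℂ) :
    hess p (lsub A f) = Aᵀ * hess (A *ᵥ p) f * A := by
  ext i j
  rw [hess_apply, pderiv_lsub, map_sum, map_sum]
  rw [Matrix.mul_apply]
  refine Finset.sum_congr rfl fun a _ => ?_
  rw [pderiv_mul, pderiv_C, zero_mul, zero_add, map_mul, eval_C, pderiv_lsub, map_sum, mul_comm,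
    Matrix.mul_apply]
  congr 1
  refine Finset.sum_congr rfl fun b _ => ?_
  rw [map_mul, eval_C, eval_lsub, Matrix.transpose_apply, hess_apply]

/-- The points may be moved by an invertible matrix. -/
lemma gmap_surj_move [DecidableEq σ] {ι : Type} {d : ℕ} {p : ι → σ → ℂ} (A : Matrix σ σ ℂ) (hA : IsUnit A.det)
    (hs : Function.Surjective (gmap d p)) :
    Function.Surjective (gmap d fun i => A *ᵥ p i) := by
  intro c
  obtain ⟨f, hf⟩ := hs fun a => (Aᵀ *ᵥ fun j => c (a.1, j)) a.2
  refine ⟨⟨lsub A⁻¹ f.1, lsub_hom _ f.2⟩, funext fun a => ?_⟩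
  have h1 : grad (p a.1) f.1 = Aᵀ *ᵥ fun j => c (a.1, j) := by
    ext j
    have := congrFun hf (a.1, j)
    rwa [gmap_apply, ← grad_apply] at this
  rw [gmap_apply, ← grad_apply, grad_lsub, Matrix.mulVec_mulVec, Matrix.nonsing_inv_mul _ hA,
    Matrix.one_mulVec, h1, Matrix.mulVec_mulVec, ← Matrix.transpose_mul, Matrix.mul_nonsing_inv _ hA]
  simp

lemma exists_move [DecidableEq σ] {d : ℕ} (A : Matrix σ σ ℂ) (hA : IsUnit A.det) {ι : Type} {p : ι → σ → ℂ}
    {f : Sf σ d} (hf : gmap d p f = 0) {i : ι} (hc : Corank1 f.1 (p i)) :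
    ∃ f' : Sf σ d, gmap d (fun i => A *ᵥ p i) f' = 0 ∧ Corank1 f'.1 (A *ᵥ p i) := by
  refine ⟨⟨lsub A⁻¹ f.1, lsub_hom _ f.2⟩, ?_, ?_⟩
  · rw [gmap_eq_zero] at hf ⊢
    intro j
    rw [grad_lsub, Matrix.mulVec_mulVec, Matrix.nonsing_inv_mul _ hA, Matrix.one_mulVec, hf,
      Matrix.mulVec_zero]
  · obtain ⟨w, hw⟩ := hc
    have hA' : IsUnit (A⁻¹)ᵀ.det := by
      rw [Matrix.det_transpose]; exact Matrix.isUnit_nonsing_inv_det _ hA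
    have hinj : ∀ v, (A⁻¹)ᵀ *ᵥ v = 0 → v = 0 := by
      intro v hv
      have := congrArg (fun u => ((A⁻¹)ᵀ)⁻¹ *ᵥ u) hv
      simpa [Matrix.mulVec_mulVec, Matrix.nonsing_inv_mul _ hA'] using this
    refine ⟨(A⁻¹)ᵀ *ᵥ w, fun v h1 h2 => ?_⟩
    rw [hess_lsub, Matrix.mulVec_mulVec, Matrix.nonsing_inv_mul _ hA, Matrix.one_mulVec,
      ← Matrix.mulVec_mulVec, ← Matrix.mulVec_mulVec] at h1
    have h3 := hw (A⁻¹ *ᵥ v) (hinj _ h1) (by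
      rw [Matrix.dotProduct_mulVec, ← Matrix.mulVec_transpose]; exact h2)
    have := congrArg (fun u => A *ᵥ u) h3
    simpa [Matrix.mulVec_mulVec, Matrix.mul_nonsing_inv _ hA] using this

/-- At most `k` vectors of `ℂ^{k+1}` can be moved to the hyperplane `x₀ = 0`. -/
lemma exists_matrix {k : ℕ} {ι : Type} [Fintype ι] (hι : Fintype.card ι ≤ k)
    (z : ι → Fin (k + 1) → ℂ) :
    ∃ A : Matrix (Fin (k + 1)) (Fin (k + 1)) ℂ, IsUnit A.det ∧ ∀ i, (A *ᵥ z i) 0 = 0 := by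
  obtain ⟨l, hl0, hl⟩ : ∃ l : Fin (k + 1) → ℂ, l ≠ 0 ∧ ∀ i, l ⬝ᵥ z i = 0 := by
    have hlt : Module.finrank ℂ (ι → ℂ) < Module.finrank ℂ (Fin (k + 1) → ℂ) := by
      simp; omega
    have hker := LinearMap.ker_ne_bot_of_finrank_lt (f := (Matrix.of z).mulVecLin) hlt
    obtain ⟨l, hl, hl0⟩ := (Submodule.ne_bot_iff _).1 hker
    refine ⟨l, hl0, fun i => ?_⟩
    have := congrFun (LinearMap.mem_ker.1 hl) i
    rw [dotProduct_comm]
    simpa [Matrix.mulVec] using this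
  obtain ⟨j, hj⟩ := Function.ne_iff.1 hl0
  refine ⟨Matrix.of (Fin.cons l fun i => Pi.single (j.succAbove i) 1), ?_, fun i => ?_⟩
  · rw [← Matrix.isUnit_iff_isUnit_det, ← Matrix.mulVec_injective_iff_isUnit]
    rw [← Matrix.coe_mulVecLin, ← LinearMap.ker_eq_bot, LinearMap.ker_eq_bot']
    intro v hv
    have h1 : ∀ i, v (j.succAbove i) = 0 := fun i => by
      have := congrFun hv i.succ
      simpa [Matrix.mulVec] using this
    have h0 : l ⬝ᵥ v = 0 := by
      have := congrFun hv 0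
      simpa [Matrix.mulVec] using this
    have h2 : v j = 0 := by
      rw [dotProduct, Fin.sum_univ_succAbove _ j] at h0
      simpa [h1, show l j ≠ 0 from hj] using h0
    ext a
    rcases Fin.eq_self_or_eq_succAbove j a with rfl | ⟨b, rfl⟩
    · exact h2
    · exact h1 b
  · simpa [Matrix.mulVec] using hl i

end Moving

lemma corank1_iff {σ : Type} [Fintype σ] [DecidableEq σ] {f : MvPolynomial σ ℂ} {p : σ → ℂ} :
    Corank1 f p ↔ ∃ (L : Matrix σ σ ℂ) (u w : σ → ℂ),
      (L * hess p f + Matrix.vecMulVec u w).det ≠ 0 := by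
  constructor
  · rintro ⟨w, hw⟩
    let W : (σ → ℂ) →ₗ[ℂ] ℂ :=
      { toFun := fun v => w ⬝ᵥ v
        map_add' := fun _ _ => dotProduct_add _ _ _
        map_smul' := fun _ _ => dotProduct_smul _ _ _ }
    have hker : LinearMap.ker ((hess p f).mulVecLin.prod W) = ⊥ := by
      rw [LinearMap.ker_eq_bot']
      exact fun v hv => hw v (congrArg Prod.fst hv) (congrArg Prod.snd hv)
    obtain ⟨g, hg⟩ := LinearMap.exists_leftInverse_of_injective _ hker
    refine ⟨LinearMap.toMatrix' (g ∘ₗ LinearMap.inl ℂ _ _), g (0, 1), w, ?_⟩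
    have : LinearMap.toMatrix' (g ∘ₗ LinearMap.inl ℂ _ _) * hess p f +
        Matrix.vecMulVec (g (0, 1)) w = 1 := by
      refine Matrix.ext_of_mulVec_single fun j => ?_
      rw [Matrix.add_mulVec, ← Matrix.mulVec_mulVec, Matrix.vecMulVec_mulVec, Matrix.one_mulVec,
        LinearMap.toMatrix'_mulVec]
      have h1 := LinearMap.congr_fun hg (Pi.single j 1)
      have h2 : ∀ (a : σ → ℂ) (b : ℂ), g (a, b) = g (a, 0) + b • g (0, 1) := by
        intro a b
        rw [← map_smul, ← map_add]; simp
      have h3 : g (hess p f *ᵥ Pi.single j 1, w ⬝ᵥ Pi.single j 1) = Pi.single j 1 := h1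
      rw [h2] at h3
      simpa using h3
    rw [this]; simp
  · rintro ⟨L, u, w, h⟩
    refine ⟨w, fun v h1 h2 => ?_⟩
    have : (L * hess p f + Matrix.vecMulVec u w) *ᵥ v = 0 := by
      rw [Matrix.add_mulVec, ← Matrix.mulVec_mulVec, h1, Matrix.vecMulVec_mulVec, h2]
      simp
    exact Matrix.eq_zero_of_mulVec_eq_zero h this

/-! ### Degeneration to a hyperplane -/

/-- The function whose nonvanishing witnesses corank one of the Hessian. -/
noncomputable def psi {σ : Type} [Fintype σ] [DecidableEq σ] (L : Matrix σ σ ℂ) (u w : σ → ℂ)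
    (p : σ → ℂ) (f : MvPolynomial σ ℂ) : ℂ :=
  (L * hess p f + Matrix.vecMulVec u w).det

lemma psi_polyLine {σ : Type} [Fintype σ] [DecidableEq σ] (L : Matrix σ σ ℂ) (u w : σ → ℂ)
    {Y : Type} [AddCommGroup Y] [Module ℂ Y]
    {p : Y → σ → ℂ} {f : Y → MvPolynomial σ ℂ}
    (h : ∀ i j, PolyLine fun x => hess (p x) (f x) i j) : PolyLine fun x => psi L u w (p x) (f x) := by
  refine PolyLine.det fun i j => ?_
  simp only [Matrix.add_apply, Matrix.mul_apply]
  exact (PolyLine.sum _ fun a => (PolyLine.const _).mul (h a j)).add (PolyLine.const _)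

/-- The Hessian of a polynomial combination of fixed polynomials. -/
lemma hess_polyLine {σ κ : Type} [Fintype σ] [DecidableEq σ] [Fintype κ] {Y : Type} [AddCommGroup Y] [Module ℂ Y]
    {p : Y → σ → ℂ} (hp : ∀ i, PolyLine fun x => p x i) {d : ℕ} (e0 : Sf σ d) (f : κ → Sf σ d)
    {c : Y → ℂ} {a : κ → Y → ℂ} (hc : PolyLine c) (ha : ∀ k, PolyLine (a k)) (i j : σ) :
    PolyLine fun x => hess (p x) (c x • e0 + ∑ k, a k x • f k : Sf σ d).1 i j := by
  have : ∀ x, hess (p x) (c x • e0 + ∑ k, a k x • f k : Sf σ d).1 i j =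
      c x * eval (p x) (pderiv i (pderiv j e0.1)) +
        ∑ k, a k x * eval (p x) (pderiv i (pderiv j (f k).1)) := by
    intro x
    rw [hess_apply]
    simp only [Submodule.coe_add, Submodule.coe_smul, Submodule.coe_sum, map_add, map_sum, Derivation.map_smul,
      smul_eval]
  simp only [this]
  exact (hc.mul (PolyLine.mvEval _ hp)).add
    (PolyLine.sum _ fun k => (ha k).mul (PolyLine.mvEval _ hp))

/-- Evaluation at a point, as a linear map. -/
noncomputable def evl {σ : Type} (p : σ → ℂ) : MvPolynomial σ ℂ →ₗ[ℂ] ℂ := (aeval p).toLinearMap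

lemma evl_apply {σ : Type} (p : σ → ℂ) (f : MvPolynomial σ ℂ) : evl p f = eval p f := by
  simp [evl, aeval_eq_eval]

section Step
variable {k d u e s : ℕ}

/-- The form `t h(x₁, …, x_k) + x₀ g(x₀, …, x_k)`. -/
noncomputable def combo (k d : ℕ) (t : ℂ) :
    (Sf (Fin k) (d + 2) × Sf (Fin (k + 1)) (d + 1)) →ₗ[ℂ] MvPolynomial (Fin (k + 1)) ℂ :=
  t • ((rename Fin.succ).toLinearMap ∘ₗ (Sf (Fin k) (d + 2)).subtype ∘ₗ LinearMap.fst ℂ _ _) +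
    LinearMap.mulLeft ℂ (X 0) ∘ₗ (Sf (Fin (k + 1)) (d + 1)).subtype ∘ₗ LinearMap.snd ℂ _ _

lemma combo_apply (t : ℂ) (h : Sf (Fin k) (d + 2)) (g : Sf (Fin (k + 1)) (d + 1)) :
    combo k d t (h, g) = t • up h.1 + X 0 * g.1 := rfl

lemma combo_hom (t : ℂ) (x : Sf (Fin k) (d + 2) × Sf (Fin (k + 1)) (d + 1)) :
    (combo k d t x).IsHomogeneous (d + 2) := by
  rw [show x = (x.1, x.2) from rfl, combo_apply, smul_eq_C_mul]
  refine IsHomogeneous.add ?_ (X0_mul_hom x.2.2)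
  simpa using (isHomogeneous_C _ t).mul (up_hom x.1.2)

lemma pderiv_zero_combo (t : ℂ) (h : Sf (Fin k) (d + 2)) (g : Sf (Fin (k + 1)) (d + 1)) :
    pderiv 0 (combo k d t (h, g)) = g.1 + X 0 * pderiv 0 g.1 := by
  rw [combo_apply, map_add, Derivation.map_smul, pderiv_zero_up, smul_zero, zero_add, pderiv_zero_X0]

lemma pderiv_succ_combo (t : ℂ) (j : Fin k) (h : Sf (Fin k) (d + 2)) (g : Sf (Fin (k + 1)) (d + 1)) :
    pderiv j.succ (combo k d t (h, g)) = t • up (pderiv j h.1) + X 0 * pderiv j.succ g.1 := by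
  rw [combo_apply, map_add, Derivation.map_smul, pderiv_succ_up, pderiv_succ_X0]

variable (y : Fin u → Fin k → ℂ) (z : Fin e → Fin k → ℂ) (P : Fin s → Fin (k + 1) → ℂ)

/-- The points of the degeneration: `u` points on the hyperplane `x₀ = 0`, `e` points tending to
it, and `s` fixed points. -/
def stepPts (t : ℂ) : Fin u ⊕ Fin e ⊕ Fin s → Fin (k + 1) → ℂ :=
  Sum.elim (fun i => pt 0 (y i)) (Sum.elim (fun i => pt t (z i)) P)

/-- The gradient conditions of the degeneration, the derivatives along the hyperplane at the first
two groups of points being divided by `t`. -/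
noncomputable def stepT (d : ℕ) (t : ℂ) : (Sf (Fin k) (d + 2) × Sf (Fin (k + 1)) (d + 1)) →ₗ[ℂ]
    ((Fin u ⊕ Fin e ⊕ Fin s) × Fin (k + 1) → ℂ) :=
  LinearMap.pi fun a => Sum.elim
    (fun i => Fin.cases (evl (pt 0 (y i)) ∘ₗ (Sf _ _).subtype ∘ₗ LinearMap.snd ℂ _ _)
      (fun j => evl (y i) ∘ₗ (pderiv j).toLinearMap ∘ₗ (Sf _ _).subtype ∘ₗ LinearMap.fst ℂ _ _) a.2)
    (Sum.elim
      (fun i => Fin.cases ((evl (pt t (z i)) + t • evl (pt t (z i)) ∘ₗ (pderiv 0).toLinearMap)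
          ∘ₗ (Sf _ _).subtype ∘ₗ LinearMap.snd ℂ _ _)
        (fun j => evl (z i) ∘ₗ (pderiv j).toLinearMap ∘ₗ (Sf _ _).subtype ∘ₗ LinearMap.fst ℂ _ _ +
          evl (pt t (z i)) ∘ₗ (pderiv j.succ).toLinearMap ∘ₗ (Sf _ _).subtype ∘ₗ
            LinearMap.snd ℂ _ _) a.2)
      (fun i => evl (P i) ∘ₗ (pderiv a.2).toLinearMap ∘ₗ combo k d t)) a.1

variable {y z P} {t : ℂ} {h : Sf (Fin k) (d + 2)} {g : Sf (Fin (k + 1)) (d + 1)}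

lemma stepT_u0 (i : Fin u) : stepT y z P d t (h, g) (Sum.inl i, 0) = eval (pt 0 (y i)) g.1 :=
  evl_apply _ _
lemma stepT_u (i : Fin u) (j : Fin k) :
    stepT y z P d t (h, g) (Sum.inl i, j.succ) = eval (y i) (pderiv j h.1) := evl_apply _ _
lemma stepT_e0 (i : Fin e) : stepT y z P d t (h, g) (Sum.inr (Sum.inl i), 0) =
    eval (pt t (z i)) g.1 + t * eval (pt t (z i)) (pderiv 0 g.1) := by
  rw [← evl_apply, ← evl_apply]; rfl
lemma stepT_e (i : Fin e) (j : Fin k) : stepT y z P d t (h, g) (Sum.inr (Sum.inl i), j.succ) =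
    eval (z i) (pderiv j h.1) + eval (pt t (z i)) (pderiv j.succ g.1) := by
  rw [← evl_apply, ← evl_apply]; rfl
lemma stepT_r (i : Fin s) (j : Fin (k + 1)) : stepT y z P d t (h, g) (Sum.inr (Sum.inr i), j) =
    eval (P i) (pderiv j (combo k d t (h, g))) := evl_apply _ _

lemma grad_combo (a : (Fin u ⊕ Fin e ⊕ Fin s) × Fin (k + 1)) :
    eval (stepPts y z P t a.1) (pderiv a.2 (combo k d t (h, g))) =
      Sum.elim (fun _ => Fin.cases 1 (fun _ => t) a.2)
        (Sum.elim (fun _ => Fin.cases 1 (fun _ => t) a.2) (fun _ => 1)) a.1 *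
          stepT y z P d t (h, g) a := by
  obtain ⟨i | i | i, j⟩ := a
  · refine Fin.cases ?_ (fun j => ?_) j
    · rw [stepT_u0, pderiv_zero_combo]; simp [stepPts]
    · rw [stepT_u, pderiv_succ_combo]; simp [stepPts, eval_up, smul_eval]
  · refine Fin.cases ?_ (fun j => ?_) j
    · rw [stepT_e0, pderiv_zero_combo]; simp [stepPts]
    · rw [stepT_e, pderiv_succ_combo]; simp [stepPts, eval_up, smul_eval]; ring
  · rw [stepT_r]; simp [stepPts]

lemma gmap_step_surj (ht : t ≠ 0) (hs : Function.Surjective (stepT y z P d t)) :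
    Function.Surjective (gmap (d + 2) (stepPts y z P t)) := by
  intro c
  let m : (Fin u ⊕ Fin e ⊕ Fin s) × Fin (k + 1) → ℂ := fun a =>
      Sum.elim (fun _ => Fin.cases 1 (fun _ => t) a.2)
        (Sum.elim (fun _ => Fin.cases 1 (fun _ => t) a.2) (fun _ => 1)) a.1
  have hm : ∀ a, m a ≠ 0 := by
    rintro ⟨i | i | i, j⟩
    · refine Fin.cases ?_ (fun j => ?_) j <;> simp [m, ht]
    · refine Fin.cases ?_ (fun j => ?_) j <;> simp [m, ht]
    · simp [m]
  obtain ⟨⟨h, g⟩, hx⟩ := hs fun a => c a / m a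
  refine ⟨⟨combo k d t (h, g), combo_hom _ _⟩, funext fun a => ?_⟩
  rw [gmap_apply, grad_combo, hx]
  exact mul_div_cancel₀ _ (hm a)

lemma gmap_step_zero (h0 : stepT y z P d t (h, g) = 0) :
    gmap (d + 2) (stepPts y z P t) ⟨combo k d t (h, g), combo_hom _ _⟩ = 0 := by
  ext a
  rw [gmap_apply, grad_combo, h0]; simp

variable (y z P) in
lemma stepT_polyLine (x : Sf (Fin k) (d + 2) × Sf (Fin (k + 1)) (d + 1))
    (a : (Fin u ⊕ Fin e ⊕ Fin s) × Fin (k + 1)) : PolyLine fun t => stepT y z P d t x a := by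
  obtain ⟨h, g⟩ := x
  have ht : PolyLine fun t : ℂ => t := PolyLine.linear LinearMap.id
  have hpt : ∀ (i : Fin e) l, PolyLine fun t : ℂ => pt t (z i) l := by
    intro i l
    refine Fin.cases ?_ (fun j => ?_) l
    · simpa using ht
    · simpa using PolyLine.const _
  obtain ⟨i | i | i, j⟩ := a
  · refine Fin.cases ?_ (fun j => ?_) j
    · simp only [stepT_u0]; exact PolyLine.const _
    · simp only [stepT_u]; exact PolyLine.const _
  · refine Fin.cases ?_ (fun j => ?_) j
    · simp only [stepT_e0]
      exact (PolyLine.mvEval _ (hpt i)).add (ht.mul (PolyLine.mvEval _ (hpt i)))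
    · simp only [stepT_e]
      exact (PolyLine.const _).add (PolyLine.mvEval _ (hpt i))
  · simp only [stepT_r, combo_apply, map_add, Derivation.map_smul, smul_eval]
    exact (ht.mul (PolyLine.const _)).add (PolyLine.const _)

/-- At `t = 0` the conditions on `h` and on `g` separate. The condition on `∂₀` at the points `z` is
one on the value of `h` there, because the Euler relation expresses it through `h` and the
derivatives along the hyperplane. -/
lemma stepT_surj_zero (hP : ∀ i, P i 0 ≠ 0)
    (H1 : ∀ (a : Fin u × Fin k → ℂ) (b : Fin e → ℂ), ∃ h : Sf (Fin k) (d + 2),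
      (∀ i j, eval (y i) (pderiv j h.1) = a (i, j)) ∧ ∀ i, eval (z i) h.1 = b i)
    (H2 : ∀ (a : Fin u → ℂ) (b : Fin e × Fin k → ℂ) (c : Fin s × Fin (k + 1) → ℂ),
      ∃ g : Sf (Fin (k + 1)) (d + 1), (∀ i, eval (pt 0 (y i)) g.1 = a i) ∧
        (∀ i j, eval (pt 0 (z i)) (pderiv j.succ g.1) = b (i, j)) ∧
        ∀ i j, eval (P i) (pderiv j g.1) = c (i, j)) :
    Function.Surjective (stepT y z P d 0) := by
  intro c
  have hd1 : (d : ℂ) + 1 ≠ 0 := by exact_mod_cast Nat.succ_ne_zero d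
  have hd2 : (d : ℂ) + 2 ≠ 0 := by exact_mod_cast (show d + 2 ≠ 0 by omega)
  obtain ⟨h, hh1, hh2⟩ := H1 (fun a => c (Sum.inl a.1, a.2.succ)) fun i =>
    (∑ j, z i j * c (Sum.inr (Sum.inl i), j.succ) - (d + 1) * c (Sum.inr (Sum.inl i), 0)) / (d + 2)
  obtain ⟨g, hg1, hg2, hg3⟩ := H2 (fun i => c (Sum.inl i, 0))
    (fun a => c (Sum.inr (Sum.inl a.1), a.2.succ) - eval (z a.1) (pderiv a.2 h.1))
    (fun a => Fin.cases ((c (Sum.inr (Sum.inr a.1), 0) -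
      (∑ j, P a.1 j * c (Sum.inr (Sum.inr a.1), j)) / ((d + 2) * P a.1 0)) / P a.1 0)
      (fun j => c (Sum.inr (Sum.inr a.1), j.succ) / P a.1 0) a.2)
  refine ⟨(h, g), funext fun a => ?_⟩
  obtain ⟨i | i | i, j⟩ := a
  · refine Fin.cases ?_ (fun j => ?_) j
    · rw [stepT_u0, hg1]
    · rw [stepT_u, hh1]
  · refine Fin.cases ?_ (fun j => ?_) j
    · rw [stepT_e0, zero_mul, add_zero]
      have e1 := euler g.2 (pt 0 (z i))
      have e2 := euler h.2 (z i)
      rw [hh2] at e2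
      rw [Fin.sum_univ_succ] at e1
      simp only [pt_zero, pt_succ, zero_mul, zero_add, hg2, mul_sub, Finset.sum_sub_distrib] at e1
      rw [e2] at e1
      push_cast at e1
      rw [mul_div_cancel₀ _ hd2] at e1
      apply mul_left_cancel₀ hd1
      rw [← e1]; ring
    · rw [stepT_e, hg2]; ring
  · have e1 := euler g.2 (P i)
    rw [Fin.sum_univ_succ] at e1
    simp only [hg3, Fin.cases_zero, Fin.cases_succ] at e1
    have hp := hP i
    have hS : ∑ j : Fin k, P i j.succ * (c (Sum.inr (Sum.inr i), j.succ) / P i 0) =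
        (∑ j : Fin k, P i j.succ * c (Sum.inr (Sum.inr i), j.succ)) / P i 0 := by
      rw [Finset.sum_div]; exact Finset.sum_congr rfl fun j _ => by ring
    rw [hS, Fin.sum_univ_succ] at e1
    set S := ∑ j : Fin k, P i j.succ * c (Sum.inr (Sum.inr i), j.succ)
    push_cast at e1
    have eg : eval (P i) g.1 = (P i 0 * c (Sum.inr (Sum.inr i), 0) + S) / ((d + 2) * P i 0) := by
      apply mul_left_cancel₀ hd1
      rw [← e1]
      field_simp
      ring
    refine Fin.cases ?_ (fun j => ?_) j
    · rw [stepT_r, pderiv_zero_combo, map_add, map_mul, eval_X, hg3, eg]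
      simp only [Fin.cases_zero]
      rw [Fin.sum_univ_succ]
      field_simp
      ring
    · rw [stepT_r, pderiv_succ_combo, map_add, map_mul, eval_X, hg3, smul_eval]
      simp only [Fin.cases_succ]
      field_simp
      ring

end Step

/-! ### The induction step by degeneration -/

section Coord
variable {Y Z : Type} [AddCommGroup Y] [Module ℂ Y] [AddCommGroup Z] [Module ℂ Z]

lemma PolyLine.fst {φ : Y → ℂ} (h : PolyLine φ) : PolyLine fun x : Y × Z => φ x.1 :=
  h.compL (LinearMap.fst ℂ Y Z)

lemma PolyLine.snd {φ : Z → ℂ} (h : PolyLine φ) : PolyLine fun x : Y × Z => φ x.2 :=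
  h.compL (LinearMap.snd ℂ Y Z)

lemma PolyLine.coord {ι σ : Type} (i : ι) (j : σ) : PolyLine fun x : ι → σ → ℂ => x i j :=
  fun x v => ⟨Polynomial.C (x i j) + Polynomial.X * Polynomial.C (v i j), fun s => by simp; ring⟩

lemma PolyLine.coord1 {σ : Type} (j : σ) : PolyLine fun x : σ → ℂ => x j :=
  fun x v => ⟨Polynomial.C (x j) + Polynomial.X * Polynomial.C (v j), fun s => by simp; ring⟩

lemma PolyLine.id : PolyLine fun t : ℂ => t :=
  fun x v => ⟨Polynomial.C x + Polynomial.X * Polynomial.C v, fun s => by simp; ring⟩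

lemma Gen.fst {Q : Y → Prop} (h : Gen Q) : Gen fun x : Y × Z => Q x.1 :=
  h.compL (LinearMap.fst ℂ Y Z) LinearMap.fst_surjective

lemma Gen.snd {Q : Z → Prop} (h : Gen Q) : Gen fun x : Y × Z => Q x.2 :=
  h.compL (LinearMap.snd ℂ Y Z) LinearMap.snd_surjective

end Coord

lemma hess_polyLine_form {σ : Type} [Fintype σ] {d : ℕ} (p : σ → ℂ) (i j : σ) :
    PolyLine fun g : Sf σ d => hess p g.1 i j :=
  fun x v => ⟨Polynomial.C (hess p x.1 i j) + Polynomial.X * Polynomial.C (hess p v.1 i j),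
    fun s => by
      beta_reduce
      rw [Submodule.coe_add, Submodule.coe_smul, map_add, map_smul, Matrix.add_apply,
        Matrix.smul_apply]
      simp; ring⟩

lemma gmap_polyLine {σ : Type} [Fintype σ] {ι : Type} {d : ℕ} {Y : Type} [AddCommGroup Y] [Module ℂ Y]
    {p : Y → ι → σ → ℂ} (hp : ∀ i j, PolyLine fun x => p x i j) (f : Sf σ d) (a : ι × σ) :
    PolyLine fun x => gmap d (p x) f a := by
  simp only [gmap_apply]
  exact PolyLine.mvEval _ (hp a.1)

/-- The distinguished index of `BS` may be prescribed. -/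
lemma BS.at {σ : Type} [Fintype σ] {d : ℕ} {ι : Type} (h : BS σ d ι) (i0 : ι) :
    ∃ p : ι → σ → ℂ, Function.Surjective (gmap d p) ∧
      ∃ f : Sf σ d, gmap d p f = 0 ∧ Corank1 f.1 (p i0) := by
  classical
  obtain ⟨p, hp, i, f, hf, hc1⟩ := h
  refine ⟨p ∘ Equiv.swap i0 i, fun c => ?_, f, ?_, by simpa using hc1⟩
  · obtain ⟨f, hf⟩ := hp (fun a => c (Equiv.swap i0 i a.1, a.2))
    refine ⟨f, funext fun a => ?_⟩
    have := congrFun hf (Equiv.swap i0 i a.1, a.2)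
    rw [gmap_apply] at this ⊢
    simpa using this
  · rw [gmap_eq_zero] at hf ⊢
    exact fun k => hf _

section Step2
variable {k d u e s : ℕ}

/-- `e` points on the hyperplane `x₀ = 0` followed by `s` arbitrary points. -/
def basePts (z : Fin e → Fin k → ℂ) (P : Fin s → Fin (k + 1) → ℂ) :
    Fin e ⊕ Fin s → Fin (k + 1) → ℂ := Sum.elim (fun i => pt 0 (z i)) P

lemma basePts_polyLine (i : Fin e ⊕ Fin s) (j : Fin (k + 1)) :
    PolyLine fun x : (Fin e → Fin k → ℂ) × (Fin s → Fin (k + 1) → ℂ) => basePts x.1 x.2 i j := by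
  rcases i with i | i
  · refine Fin.cases ?_ (fun j => ?_) j
    · exact PolyLine.const 0
    · exact (PolyLine.coord i j).fst
  · exact (PolyLine.coord i j).snd

lemma exists_basePts (he : e ≤ k) (p : Fin e ⊕ Fin s → Fin (k + 1) → ℂ) :
    ∃ (A : Matrix (Fin (k + 1)) (Fin (k + 1)) ℂ) (z : Fin e → Fin k → ℂ)
      (P : Fin s → Fin (k + 1) → ℂ), IsUnit A.det ∧ (fun i => A *ᵥ p i) = basePts z P := by
  obtain ⟨A, hA, h0⟩ := exists_matrix (k := k) (by simpa using he) fun i : Fin e => p (Sum.inl i)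
  refine ⟨A, fun i j => (A *ᵥ p (Sum.inl i)) j.succ, fun i => A *ᵥ p (Sum.inr i), hA, ?_⟩
  ext i j
  rcases i with i | i
  · refine Fin.cases ?_ (fun j => ?_) j
    · exact h0 i
    · rfl
  · rfl

lemma gen_base (he : e ≤ k) (hB : AH (Fin (k + 1)) (d + 1) (Fin e ⊕ Fin s)) :
    Gen fun x : (Fin e → Fin k → ℂ) × (Fin s → Fin (k + 1) → ℂ) =>
      Function.Surjective (gmap (d + 1) (basePts x.1 x.2)) := by
  obtain ⟨p, hp⟩ := hB
  obtain ⟨A, z, P, hA, h⟩ := exists_basePts he p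
  refine Gen.surj (fun f a => gmap_polyLine (fun i j => basePts_polyLine i j) f a) (x0 := (z, P)) ?_
  rw [← h]
  exact gmap_surj_move A hA hp

lemma gen_base_BS (he : e ≤ k) (hB : BS (Fin (k + 1)) (d + 1) (Fin e ⊕ Fin s)) (i0 : Fin s) :
    ∃ L v w, Gen fun x : (Fin e → Fin k → ℂ) × (Fin s → Fin (k + 1) → ℂ) =>
      Function.Surjective (gmap (d + 1) (basePts x.1 x.2)) ∧
        ∃ g : Sf (Fin (k + 1)) (d + 1), gmap (d + 1) (basePts x.1 x.2) g = 0 ∧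
          psi L v w (x.2 i0) g.1 ≠ 0 := by
  obtain ⟨p, hp, f, hf, hc⟩ := hB.at (Sum.inr i0)
  obtain ⟨A, z, P, hA, h⟩ := exists_basePts he p
  obtain ⟨f', hf', hc'⟩ := exists_move A hA hf hc
  obtain ⟨L, v, w, hL⟩ := corank1_iff.1 hc'
  refine ⟨L, v, w, ?_⟩
  refine Gen.surj_ker (fun f a => gmap_polyLine (fun i j => basePts_polyLine i j) f a)
    (Ψ := fun x (g : Sf (Fin (k + 1)) (d + 1)) => psi L v w (x.2 i0) g.1) ?_ (x0 := (z, P)) ?_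
    (e0 := f') ?_ ?_
  · intro e0 f c a hc ha
    exact psi_polyLine L v w fun i j =>
      hess_polyLine (fun i => basePts_polyLine (Sum.inr i0) i) e0 f hc ha i j
  · rw [← h]; exact gmap_surj_move A hA hp
  · rw [← h]; exact hf'
  · have : (A *ᵥ p (Sum.inr i0)) = P i0 := congrFun h (Sum.inr i0)
    rw [this] at hL
    exact hL

lemma gen_nonzero : Gen fun P : Fin s → Fin (k + 1) → ℂ => ∀ i, P i 0 ≠ 0 :=
  Gen.all fun i => Gen.of_polyLine (PolyLine.coord i 0) (fun _ _ => 1) (by simp)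

/-- Gradients at `y` and values at `z`. -/
noncomputable def T1 (d : ℕ) (y : Fin u → Fin k → ℂ) (z : Fin e → Fin k → ℂ) :
    Sf (Fin k) d →ₗ[ℂ] (Fin u × Fin k ⊕ Fin e → ℂ) :=
  LinearMap.pi fun a => Sum.elim
    (fun a => evl (y a.1) ∘ₗ (pderiv a.2).toLinearMap ∘ₗ (Sf _ _).subtype)
    (fun i => evl (z i) ∘ₗ (Sf _ _).subtype) a

lemma T1_inl {y : Fin u → Fin k → ℂ} {z : Fin e → Fin k → ℂ} (f : Sf (Fin k) d)
    (a : Fin u × Fin k) : T1 d y z f (Sum.inl a) = eval (y a.1) (pderiv a.2 f.1) := evl_apply _ _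

lemma T1_inr {y : Fin u → Fin k → ℂ} {z : Fin e → Fin k → ℂ} (f : Sf (Fin k) d)
    (i : Fin e) : T1 d y z f (Sum.inr i) = eval (z i) f.1 := evl_apply _ _

lemma T1_surj (hA : AH (Fin k) d (Fin u)) (hc1 : u * k + e ≤ k.multichoose d) :
    ∃ (y : Fin u → Fin k → ℂ) (z : Fin e → Fin k → ℂ), Function.Surjective (T1 d y z) := by
  obtain ⟨y, hy⟩ := hA
  obtain ⟨z, hz⟩ := exists_points (fun x : Fin k → ℂ => evl x ∘ₗ (Sf (Fin k) d).subtype) 0 0 e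
    (Fin u × Fin k → ℂ) (gmap d y) hy (by
      intro f _ h _
      apply Subtype.ext
      refine MvPolynomial.funext fun x => ?_
      rw [← evl_apply, Submodule.coe_zero, map_zero]
      exact h x) (by rw [finrank_Sf]; simpa using hc1)
  refine ⟨y, z, fun c => ?_⟩
  obtain ⟨f, hf1, hf2⟩ := hz (fun a => c (Sum.inl a)) (fun i => c (Sum.inr i))
  refine ⟨f, funext fun a => ?_⟩
  rcases a with a | i
  · rw [T1_inl, ← gmap_apply, hf1]
  · rw [T1_inr, ← hf2 i]
    exact (evl_apply _ _).symm

lemma T1_polyLine (f : Sf (Fin k) d) (a : Fin u × Fin k ⊕ Fin e) :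
    PolyLine fun x : (Fin u → Fin k → ℂ) × (Fin e → Fin k → ℂ) => T1 d x.1 x.2 f a := by
  rcases a with a | i
  · simp only [T1_inl]
    exact PolyLine.mvEval _ fun j => (PolyLine.coord a.1 j).fst
  · simp only [T1_inr]
    exact PolyLine.mvEval _ fun j => (PolyLine.coord i j).snd

lemma gen_T1 (hA : AH (Fin k) d (Fin u)) (hc1 : u * k + e ≤ k.multichoose d) :
    Gen fun z : Fin e → Fin k → ℂ => Gen fun y : Fin u → Fin k → ℂ =>
      Function.Surjective (T1 d y z) := by
  obtain ⟨y, z, hyz⟩ := T1_surj (e := e) hA hc1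
  have hg : Gen fun x : (Fin u → Fin k → ℂ) × (Fin e → Fin k → ℂ) =>
      Function.Surjective (T1 d x.1 x.2) := by
    refine Gen.surj (X := (Fin u → Fin k → ℂ) × (Fin e → Fin k → ℂ)) (E := Sf (Fin k) d)
      (κ := Fin u × Fin k ⊕ Fin e) (T := fun x => T1 d x.1 x.2) ?_ (x0 := (y, z)) ?_
    · exact fun f a => T1_polyLine f a
    · exact hyz
  exact Gen.slice hg

/-- Values at the points `(0, y)`, derivatives along the hyperplane at the points `(0, z)`, and
gradients at `P`. -/
noncomputable def T2a (d : ℕ) (z : Fin e → Fin k → ℂ) (P : Fin s → Fin (k + 1) → ℂ) :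
    Sf (Fin (k + 1)) d →ₗ[ℂ] (Fin e × Fin k ⊕ Fin s × Fin (k + 1) → ℂ) :=
  LinearMap.pi fun a => Sum.elim
    (fun a => evl (pt 0 (z a.1)) ∘ₗ (pderiv a.2.succ).toLinearMap ∘ₗ (Sf _ _).subtype)
    (fun a => evl (P a.1) ∘ₗ (pderiv a.2).toLinearMap ∘ₗ (Sf _ _).subtype) a

noncomputable def T2 (d : ℕ) (z : Fin e → Fin k → ℂ) (P : Fin s → Fin (k + 1) → ℂ)
    (y : Fin u → Fin k → ℂ) :
    Sf (Fin (k + 1)) d →ₗ[ℂ] (Fin u ⊕ (Fin e × Fin k ⊕ Fin s × Fin (k + 1)) → ℂ) :=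
  LinearMap.pi fun a => Sum.elim (fun i => evl (pt 0 (y i)) ∘ₗ (Sf _ _).subtype)
    (fun b => LinearMap.proj b ∘ₗ T2a d z P) a

section
variable {y : Fin u → Fin k → ℂ} {z : Fin e → Fin k → ℂ} {P : Fin s → Fin (k + 1) → ℂ}
  (f : Sf (Fin (k + 1)) d)

lemma T2a_inl (a : Fin e × Fin k) :
    T2a d z P f (Sum.inl a) = eval (pt 0 (z a.1)) (pderiv a.2.succ f.1) := evl_apply _ _

lemma T2a_inr (a : Fin s × Fin (k + 1)) :
    T2a d z P f (Sum.inr a) = eval (P a.1) (pderiv a.2 f.1) := evl_apply _ _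

lemma T2_inl (i : Fin u) : T2 d z P y f (Sum.inl i) = eval (pt 0 (y i)) f.1 := evl_apply _ _

lemma T2_inr (a : Fin e × Fin k ⊕ Fin s × Fin (k + 1)) :
    T2 d z P y f (Sum.inr a) = T2a d z P f a := rfl

end

lemma T2a_surj {z : Fin e → Fin k → ℂ} {P : Fin s → Fin (k + 1) → ℂ}
    (h : Function.Surjective (gmap d (basePts z P))) : Function.Surjective (T2a d z P) := by
  intro c
  obtain ⟨f, hf⟩ := h fun a => Sum.elim (fun i => Fin.cases 0 (fun j => c (Sum.inl (i, j))) a.2)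
    (fun i => c (Sum.inr (i, a.2))) a.1
  refine ⟨f, funext fun a => ?_⟩
  rcases a with ⟨i, j⟩ | ⟨i, j⟩
  · rw [T2a_inl]
    have := congrFun hf (Sum.inl i, j.succ)
    rwa [gmap_apply] at this
  · rw [T2a_inr]
    have := congrFun hf (Sum.inr i, j)
    rwa [gmap_apply] at this

lemma T2_polyLine (z : Fin e → Fin k → ℂ) (P : Fin s → Fin (k + 1) → ℂ)
    (f : Sf (Fin (k + 1)) d) (a : Fin u ⊕ (Fin e × Fin k ⊕ Fin s × Fin (k + 1))) :
    PolyLine fun y : Fin u → Fin k → ℂ => T2 d z P y f a := by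
  rcases a with i | a
  · simp only [T2_inl]
    refine PolyLine.mvEval _ fun j => Fin.cases ?_ (fun j => ?_) j
    · exact PolyLine.const 0
    · exact PolyLine.coord i j
  · simp only [T2_inr]
    exact PolyLine.const _

/-- The linear functional form of the bound on forms singular at `P` and divisible by `x₀`. -/
lemma T2_ker {κ : ℕ} {z : Fin e → Fin k → ℂ} {P : Fin s → Fin (k + 1) → ℂ}
    (hP : ∀ i, P i 0 ≠ 0) (hK : KerLE (gmap d P) κ) :
    ∃ l : Sf (Fin (k + 1)) (d + 1) →ₗ[ℂ] (Fin κ → ℂ), ∀ f, T2a (d + 1) z P f = 0 →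
      (∀ y : Fin k → ℂ, evl (pt 0 y) f.1 = 0) → l f = 0 → f = 0 := by
  obtain ⟨l, hl⟩ := hK
  let μ : Sf (Fin (k + 1)) d →ₗ[ℂ] Sf (Fin (k + 1)) (d + 1) :=
    (LinearMap.mulLeft ℂ (X 0) ∘ₗ (Sf (Fin (k + 1)) d).subtype).codRestrict _
      fun f => X0_mul_hom f.2
  have hμ : LinearMap.ker μ = ⊥ := by
    rw [LinearMap.ker_eq_bot']
    intro f hf
    have h1 : X 0 * f.1 = 0 := congrArg Subtype.val hf
    exact Subtype.ext ((mul_eq_zero.1 h1).resolve_left (X_ne_zero 0))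
  obtain ⟨π, hπ⟩ := LinearMap.exists_leftInverse_of_injective μ hμ
  refine ⟨l ∘ₗ π, fun f h1 h2 h3 => ?_⟩
  obtain ⟨g, hg⟩ := X0_dvd fun y => by rw [← evl_apply]; exact h2 y
  have hg' : g.IsHomogeneous d := hom_of_X0_mul (by rw [← hg]; exact f.2)
  have hfg : f = μ ⟨g, hg'⟩ := Subtype.ext hg
  rw [hfg, LinearMap.comp_apply] at h3
  rw [show π (μ ⟨g, hg'⟩) = ⟨g, hg'⟩ from LinearMap.congr_fun hπ _] at h3
  have : (⟨g, hg'⟩ : Sf (Fin (k + 1)) d) = 0 := by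
    refine hl _ (gmap_eq_zero.2 fun i => ?_) h3
    refine grad_X0_mul hg' (hP i) ?_
    rw [← hg]
    ext j
    rw [grad_apply]
    exact (T2a_inr f (i, j)).symm.trans (congrFun h1 _)
  rw [hfg, this, map_zero]

lemma gen_T2 {κ : ℕ} {z : Fin e → Fin k → ℂ} {P : Fin s → Fin (k + 1) → ℂ}
    (hP : ∀ i, P i 0 ≠ 0) (hK : KerLE (gmap d P) κ)
    (hs : Function.Surjective (gmap (d + 1) (basePts z P)))
    (hc2 : u + κ + e * k + s * (k + 1) ≤ (k + 1).multichoose (d + 1)) :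
    Gen fun y : Fin u → Fin k → ℂ => Function.Surjective (T2 (d + 1) z P y) := by
  obtain ⟨l, hl⟩ := T2_ker (z := z) hP hK
  obtain ⟨y, hy⟩ := exists_points (fun x : Fin k → ℂ => evl (pt 0 x) ∘ₗ (Sf (Fin (k + 1)) (d + 1)).subtype)
    κ l u _ (T2a (d + 1) z P) (T2a_surj hs) (fun f h1 h2 h3 => hl f h1 h2 h3) (by
      rw [finrank_Sf]; simp; omega)
  refine Gen.surj (T2_polyLine z P) (x0 := y) fun c => ?_
  obtain ⟨f, hf1, hf2⟩ := hy (fun a => c (Sum.inr a)) (fun i => c (Sum.inl i))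
  refine ⟨f, funext fun a => ?_⟩
  rcases a with i | a
  · rw [T2_inl, ← evl_apply]; exact hf2 i
  · rw [T2_inr, hf1]

lemma gen_T2_BS {κ : ℕ} {z : Fin e → Fin k → ℂ} {P : Fin s → Fin (k + 1) → ℂ}
    (hP : ∀ i, P i 0 ≠ 0) (hK : KerLE (gmap d P) κ)
    (hs : Function.Surjective (gmap (d + 1) (basePts z P))) (i0 : Fin s)
    {L : Matrix (Fin (k + 1)) (Fin (k + 1)) ℂ} {v w : Fin (k + 1) → ℂ}
    (hg : ∃ g : Sf (Fin (k + 1)) (d + 1), gmap (d + 1) (basePts z P) g = 0 ∧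
      psi L v w (P i0) g.1 ≠ 0)
    (hc2 : u + κ + e * k + s * (k + 1) < (k + 1).multichoose (d + 1)) :
    Gen fun y : Fin u → Fin k → ℂ => Function.Surjective (T2 (d + 1) z P y) ∧
      ∃ g : Sf (Fin (k + 1)) (d + 1), T2 (d + 1) z P y g = 0 ∧ psi L v w (P i0) g.1 ≠ 0 := by
  obtain ⟨l, hl⟩ := T2_ker (z := z) hP hK
  obtain ⟨g, hg1, hg2⟩ := hg
  rw [gmap_eq_zero] at hg1
  have hgr : ∀ i j, eval (basePts z P i) (pderiv j g.1) = 0 := by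
    intro i j
    rw [← grad_apply, hg1]; rfl
  have hpl : ∀ (Y : Type) [AddCommGroup Y] [Module ℂ Y] {κ' : Type} [Fintype κ']
      (e0 : Sf (Fin (k + 1)) (d + 1)) (f : κ' → Sf (Fin (k + 1)) (d + 1))
      (c : Y → ℂ) (a : κ' → Y → ℂ), PolyLine c → (∀ k, PolyLine (a k)) →
      PolyLine fun x => psi L v w (P i0) (c x • e0 + ∑ k, a k x • f k : Sf (Fin (k + 1)) (d + 1)).1 := by
    intro Y _ _ κ' _ e0 f c a hc ha
    exact psi_polyLine L v w (p := fun _ => P i0) fun i j =>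
      hess_polyLine (p := fun _ => P i0) (fun i => PolyLine.const (P i0 i)) e0 f hc ha i j
  have hΨ : PolyLine fun g : Sf (Fin (k + 1)) (d + 1) => psi L v w (P i0) g.1 := by
    refine psi_polyLine L v w (p := fun _ => P i0) fun i j => ?_
    exact hess_polyLine_form _ i j
  obtain ⟨y, hy, g', hg3, hg4, hg5⟩ := exists_points_pencil
    (fun x : Fin k → ℂ => evl (pt 0 x) ∘ₗ (Sf (Fin (k + 1)) (d + 1)).subtype)
    (fun f => by
      change PolyLine fun x : Fin k → ℂ => evl (pt 0 x) f.1
      simp only [evl_apply]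
      refine PolyLine.mvEval _ fun j => Fin.cases ?_ (fun j => ?_) j
      · exact PolyLine.const 0
      · exact PolyLine.coord1 j)
    (fun g : Sf (Fin (k + 1)) (d + 1) => psi L v w (P i0) g.1) hΨ
    κ l u _ (T2a (d + 1) z P) (T2a_surj hs) (fun f h1 h2 h3 => hl f h1 h2 h3) (by
      rw [finrank_Sf]; simp; omega)
    ⟨g, funext fun a => by
      rcases a with ⟨i, j⟩ | ⟨i, j⟩
      · rw [T2a_inl]; exact hgr (Sum.inl i) j.succ
      · rw [T2a_inr]; exact hgr (Sum.inr i) j, hg2⟩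
  refine Gen.surj_ker (T2_polyLine z P)
    (Ψ := fun _ (g : Sf (Fin (k + 1)) (d + 1)) => psi L v w (P i0) g.1) (fun e0 f c a => hpl _ e0 f c a)
    (x0 := y) (fun c => ?_) (e0 := g') ?_ hg5
  · obtain ⟨f, hf1, hf2⟩ := hy (fun a => c (Sum.inr a)) (fun i => c (Sum.inl i))
    refine ⟨f, funext fun a => ?_⟩
    rcases a with i | a
    · rw [T2_inl, ← evl_apply]; exact hf2 i
    · rw [T2_inr, hf1]
  · ext a
    rcases a with i | a
    · rw [T2_inl, ← evl_apply]; exact hg4 i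
    · rw [T2_inr, hg3]; rfl

lemma H1_of_T1 {y : Fin u → Fin k → ℂ} {z : Fin e → Fin k → ℂ}
    (h : Function.Surjective (T1 d y z)) (a : Fin u × Fin k → ℂ) (b : Fin e → ℂ) :
    ∃ h : Sf (Fin k) d,
      (∀ i j, eval (y i) (pderiv j h.1) = a (i, j)) ∧ ∀ i, eval (z i) h.1 = b i := by
  obtain ⟨f, hf⟩ := h (Sum.elim a b)
  refine ⟨f, fun i j => ?_, fun i => ?_⟩
  · rw [← T1_inl (y := y) (z := z) f (i, j), hf]; rfl
  · rw [← T1_inr (y := y) (z := z) f i, hf]; rfl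

lemma H2_of_T2 {y : Fin u → Fin k → ℂ} {z : Fin e → Fin k → ℂ} {P : Fin s → Fin (k + 1) → ℂ}
    (h : Function.Surjective (T2 d z P y))
    (a : Fin u → ℂ) (b : Fin e × Fin k → ℂ) (c : Fin s × Fin (k + 1) → ℂ) :
      ∃ g : Sf (Fin (k + 1)) d, (∀ i, eval (pt 0 (y i)) g.1 = a i) ∧
        (∀ i j, eval (pt 0 (z i)) (pderiv j.succ g.1) = b (i, j)) ∧
        ∀ i j, eval (P i) (pderiv j g.1) = c (i, j) := by
  obtain ⟨f, hf⟩ := h (Sum.elim a (Sum.elim b c))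
  refine ⟨f, fun i => ?_, fun i j => ?_, fun i j => ?_⟩
  · rw [← T2_inl (y := y) (z := z) (P := P) f i, hf]; rfl
  · rw [← T2a_inl (z := z) (P := P) f (i, j), ← T2_inr (y := y), hf]; rfl
  · rw [← T2a_inr (z := z) (P := P) f (i, j), ← T2_inr (y := y), hf]; rfl

lemma gen_kerLE {κ : ℕ} (hK : ∃ P : Fin s → Fin (k + 1) → ℂ, KerLE (gmap d P) κ) :
    Gen fun P : Fin s → Fin (k + 1) → ℂ => KerLE (gmap d P) κ := by
  obtain ⟨P, hP⟩ := hK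
  exact Gen.kerLE (fun f a => gmap_polyLine (fun i j => PolyLine.coord i j) f a) hP

/-- The inductive step for independence of gradient conditions, by degeneration of `u + e` of the
points to a hyperplane. -/
theorem step_AH {κ : ℕ} (hA : AH (Fin k) (d + 2) (Fin u))
    (hc1 : u * k + e ≤ k.multichoose (d + 2)) (he : e ≤ k)
    (hB : AH (Fin (k + 1)) (d + 1) (Fin e ⊕ Fin s))
    (hK : ∃ P : Fin s → Fin (k + 1) → ℂ, KerLE (gmap d P) κ)
    (hc2 : u + κ + e * k + s * (k + 1) ≤ (k + 1).multichoose (d + 1)) :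
    AH (Fin (k + 1)) (d + 2) (Fin u ⊕ Fin e ⊕ Fin s) := by
  obtain ⟨⟨z, P⟩, ⟨⟨h1, h2⟩, h3⟩, h4⟩ := ((((gen_base he hB).and
    (gen_nonzero (k := k) (s := s)).snd).and
    (gen_kerLE hK).snd).and
    (gen_T1 hA hc1).fst).exists_
  obtain ⟨y, hy1, hy2⟩ := (h4.and (gen_T2 h2 h3 h1 hc2)).exists_
  have h0 := stepT_surj_zero h2 (H1_of_T1 hy1) (H2_of_T2 hy2)
  obtain ⟨t, ht, ht0⟩ := ((Gen.surj (fun x a => stepT_polyLine y z P x a) h0).and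
    (Gen.of_polyLine (PolyLine.id) (1 : ℂ) (by simp))).exists_
  exact ⟨stepPts y z P t, gmap_step_surj ht0 ht⟩

/-- The inductive step keeping a form with a Hessian of corank one. -/
theorem step_BS {κ : ℕ} (hA : AH (Fin k) (d + 2) (Fin u))
    (hc1 : u * k + e ≤ k.multichoose (d + 2)) (he : e ≤ k) (hs : 0 < s)
    (hB : BS (Fin (k + 1)) (d + 1) (Fin e ⊕ Fin s))
    (hK : ∃ P : Fin s → Fin (k + 1) → ℂ, KerLE (gmap d P) κ)
    (hc2 : u + κ + e * k + s * (k + 1) < (k + 1).multichoose (d + 1)) :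
    BS (Fin (k + 1)) (d + 2) (Fin u ⊕ Fin e ⊕ Fin s) := by
  let i0 : Fin s := ⟨0, hs⟩
  obtain ⟨L, v, w, hL⟩ := gen_base_BS he hB i0
  obtain ⟨⟨z, P⟩, ⟨⟨⟨h1, h1'⟩, h2⟩, h3⟩, h4⟩ := (((hL.and
    (gen_nonzero (k := k) (s := s)).snd).and
    (gen_kerLE hK).snd).and
    (gen_T1 hA hc1).fst).exists_
  obtain ⟨y, hy1, hy2, g, hg1, hg2⟩ := (h4.and (gen_T2_BS h2 h3 h1 i0 h1' hc2)).exists_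
  have h0 := stepT_surj_zero h2 (H1_of_T1 hy1) (H2_of_T2 hy2)
  have ga : ∀ i, eval (pt 0 (y i)) g.1 = 0 := fun i => by
    rw [← T2_inl (y := y) (z := z) (P := P) g i, hg1]; rfl
  have gb : ∀ (i : Fin e) (j : Fin k), eval (pt 0 (z i)) (pderiv j.succ g.1) = 0 := fun i j => by
    rw [← T2a_inl (z := z) (P := P) g (i, j), ← T2_inr (y := y), hg1]; rfl
  have gc : ∀ i, grad (P i) g.1 = 0 := fun i => by
    ext j
    rw [grad_apply, ← T2a_inr (z := z) (P := P) g (i, j), ← T2_inr (y := y), hg1]; rfl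
  have gc0 : ∀ i, eval (P i) g.1 = 0 := fun i => eval_eq_zero_of_grad g.2 (Nat.succ_ne_zero d) (gc i)
  have gc1 : ∀ i j, eval (P i) (pderiv j g.1) = 0 := fun i j => by
    rw [← grad_apply, gc]; rfl
  have gb0 : ∀ i, eval (pt 0 (z i)) g.1 = 0 := by
    intro i
    have e1 := euler g.2 (pt 0 (z i))
    rw [Fin.sum_univ_succ] at e1
    simp only [pt_zero, pt_succ, zero_mul, zero_add, gb, mul_zero, Finset.sum_const_zero] at e1
    exact (mul_eq_zero.1 e1.symm).resolve_left (by exact_mod_cast Nat.succ_ne_zero d)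
  have hz0 : stepT y z P d 0 (0, g) = 0 := by
    ext a
    obtain ⟨i | i | i, j⟩ := a
    · refine Fin.cases ?_ (fun j => ?_) j
      · rw [stepT_u0, ga]; rfl
      · rw [stepT_u]; simp
    · refine Fin.cases ?_ (fun j => ?_) j
      · rw [stepT_e0, gb0]; simp
      · rw [stepT_e, gb]; simp
    · rw [stepT_r]
      refine Fin.cases ?_ (fun j => ?_) j
      · rw [pderiv_zero_combo]; simp [gc0, gc1]
      · rw [pderiv_succ_combo]; simp [gc1]
  have hpsi0 : ∃ L v w, psi L v w (P i0) (combo k d 0 (0, g)) ≠ 0 := by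
    refine corank1_iff.1 ?_
    rw [combo_apply]
    simp only [zero_smul, zero_add]
    exact Corank1.X0_mul (gc i0) (h2 i0) (corank1_iff.2 ⟨L, v, w, hg2⟩)
  obtain ⟨L', v', w', hL'⟩ := hpsi0
  have hid : PolyLine (fun t : ℂ => t) := PolyLine.id
  have hgen := Gen.surj_ker (fun x a => stepT_polyLine y z P (d := d) x a)
    (Ψ := fun t x => psi L' v' w' (P i0) (combo k d t x)) (by
      intro e0 f c a hc ha
      refine psi_polyLine L' v' w' (p := fun _ => P i0) fun i j => ?_
      have hkey : ∀ x : Sf (Fin k) (d + 2) × Sf (Fin (k + 1)) (d + 1),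
          PolyLine fun t => hess (P i0) (combo k d t x) i j := by
        intro x
        have : ∀ t, hess (P i0) (combo k d t x) i j =
            t * hess (P i0) (up x.1.1) i j + hess (P i0) (X 0 * x.2.1) i j := by
          intro t
          rw [show x = (x.1, x.2) from rfl, combo_apply, map_add, map_smul]; rfl
        simp only [this]
        exact (hid.mul (PolyLine.const _)).add (PolyLine.const _)
      have : ∀ t, hess (P i0) (combo k d t (c t • e0 + ∑ k, a k t • f k)) i j =
          c t * hess (P i0) (combo k d t e0) i j +
            ∑ l, a l t * hess (P i0) (combo k d t (f l)) i j := by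
        intro t
        simp only [map_add, map_sum, map_smul, Matrix.add_apply, Matrix.sum_apply,
          Matrix.smul_apply, smul_eq_mul]
      simp only [this]
      exact (hc.mul (hkey _)).add (PolyLine.sum _ fun l => (ha l).mul (hkey _))) h0 hz0 hL'
  obtain ⟨t, ⟨ht, ⟨h', g'⟩, hx1, hx2⟩, ht0⟩ := (hgen.and
    (Gen.of_polyLine hid (1 : ℂ) (by simp))).exists_
  exact ⟨stepPts y z P t, gmap_step_surj ht0 ht, Sum.inr (Sum.inr i0), _, gmap_step_zero hx1,
    corank1_iff.2 ⟨L', v', w', hx2⟩⟩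

end Step2

/-! ### Dimension bounds for kernels -/

section Kernels

lemma kerLE_iff {E F : Type*} [AddCommGroup E] [Module ℂ E] [FiniteDimensional ℂ E]
    [AddCommGroup F] [Module ℂ F] (T : E →ₗ[ℂ] F) (κ : ℕ) :
    KerLE T κ ↔ Module.finrank ℂ (LinearMap.ker T) ≤ κ := by
  constructor
  · rintro ⟨l, hl⟩
    have hinj : Function.Injective (l ∘ₗ (LinearMap.ker T).subtype) := by
      rw [← LinearMap.ker_eq_bot, LinearMap.ker_eq_bot']
      intro x hx
      exact Subtype.ext (hl x.1 x.2 hx)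
    simpa using LinearMap.finrank_le_finrank_of_injective hinj
  · intro h
    obtain ⟨π, hπ⟩ := (LinearMap.ker T).subtype.exists_leftInverse_of_injective
      (Submodule.ker_subtype _)
    let b := Module.finBasis ℂ (LinearMap.ker T)
    let j : LinearMap.ker T →ₗ[ℂ] (Fin κ → ℂ) :=
      Function.ExtendByZero.linearMap ℂ (Fin.castLE h) ∘ₗ b.equivFun.toLinearMap
    have hj : Function.Injective j := by
      intro x y hxy
      refine b.equivFun.injective (funext fun i => ?_)
      have := congrFun hxy (Fin.castLE h i)
      have he : ∀ z, j z (Fin.castLE h i) = b.equivFun z i := fun z =>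
        (Fin.castLE_injective h).extend_apply _ _ _
      rwa [he, he] at this
    refine ⟨j ∘ₗ π, fun e he h0 => ?_⟩
    have h1 : π e = ⟨e, he⟩ := LinearMap.congr_fun hπ ⟨e, he⟩
    rw [LinearMap.comp_apply, h1] at h0
    have := hj (h0.trans (map_zero j).symm)
    exact congrArg Subtype.val this

/-- Forms of degree `d` singular at some `s` points form a space of dimension at most `κ`. -/
def KK (k d s κ : ℕ) : Prop := ∃ P : Fin s → Fin k → ℂ, KerLE (gmap d P) κ

lemma KK.of_AH {k d s : ℕ} (h : AH (Fin k) d (Fin s)) {κ : ℕ}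
    (hκ : k.multichoose d ≤ κ + s * k) : KK k d s κ := by
  obtain ⟨p, hp⟩ := h
  refine ⟨p, (kerLE_iff _ _).2 ?_⟩
  have h1 := (gmap d p).finrank_range_add_finrank_ker
  rw [LinearMap.range_eq_top.2 hp, finrank_top, finrank_Sf] at h1
  simp at h1
  omega

lemma KK.mono {k d s κ κ' : ℕ} (h : KK k d s κ) (hκ : κ ≤ κ') : KK k d s κ' := by
  obtain ⟨p, hp⟩ := h
  exact ⟨p, (kerLE_iff _ _).2 (((kerLE_iff _ _).1 hp).trans hκ)⟩

section Lines
variable {σ : Type} [Fintype σ]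

/-- The restriction of a polynomial to a line. -/
noncomputable def lineP (x v : σ → ℂ) : MvPolynomial σ ℂ →ₐ[ℂ] Polynomial ℂ :=
  aeval fun i => Polynomial.C (x i) + Polynomial.X * Polynomial.C (v i)

lemma eval_lineP (x v : σ → ℂ) (f : MvPolynomial σ ℂ) (s : ℂ) :
    (lineP x v f).eval s = eval (x + s • v) f := by
  rw [lineP, ← Polynomial.coe_evalRingHom, ← AlgHom.coe_toRingHom, ← RingHom.comp_apply]
  refine congrFun (congrArg DFunLike.coe (?_ : _ = eval (x + s • v))) f
  refine MvPolynomial.ringHom_ext (fun r => ?_) fun i => ?_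
  · simp
  · simp; ring

lemma derivative_lineP (x v : σ → ℂ) (f : MvPolynomial σ ℂ) :
    (lineP x v f).derivative = ∑ i, lineP x v (pderiv i f) * Polynomial.C (v i) := by
  classical
  induction f using MvPolynomial.induction_on with
  | C a => simp [lineP]
  | add p q hp hq => simp [hp, hq, add_mul, Finset.sum_add_distrib]
  | mul_X p j hp =>
    rw [map_mul, Polynomial.derivative_mul, hp]
    simp only [pderiv_mul, map_add, map_mul, add_mul, Finset.sum_add_distrib]
    congr 1
    · rw [Finset.sum_mul]; refine Finset.sum_congr rfl fun i _ => ?_; ring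
    · rw [Finset.sum_eq_single j]
      · rw [pderiv_X_self]; simp [lineP]
      · intro b _ hb; rw [pderiv_X_of_ne hb.symm]; simp
      · simp

/-- Two forms of the same degree with everywhere proportional gradients are proportional. -/
lemma smul_eq_of_grad {d : ℕ} {f g : MvPolynomial σ ℂ} (hf : f.IsHomogeneous d)
    (hg : g.IsHomogeneous d)
    (h : ∀ x i j, eval x (pderiv i f) * eval x (pderiv j g) =
      eval x (pderiv j f) * eval x (pderiv i g)) (hd : d ≠ 0)
    {x₀ : σ → ℂ} (hx : eval x₀ g ≠ 0) : eval x₀ g • f = eval x₀ f • g := by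
  have hd' : (d : ℂ) ≠ 0 := by exact_mod_cast hd
  have h1 : ∀ i, g * pderiv i f = f * pderiv i g := by
    intro i
    refine MvPolynomial.funext fun x => ?_
    rw [map_mul, map_mul]
    refine mul_left_cancel₀ hd' ?_
    rw [← mul_assoc, ← mul_assoc, ← euler hf x, ← euler hg x, Finset.sum_mul, Finset.sum_mul]
    refine Finset.sum_congr rfl fun j _ => ?_
    linear_combination (x j) * h x i j
  set H : MvPolynomial σ ℂ := eval x₀ g • f - eval x₀ f • g with hH
  have h2 : ∀ i, g * pderiv i H = H * pderiv i g := by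
    intro i
    have e1 : ∀ c : ℂ, ∀ F : MvPolynomial σ ℂ, pderiv i (c • F) = c • pderiv i F :=
      fun c F => (pderiv i).map_smul c F
    rw [hH, map_sub, e1, e1, mul_sub, sub_mul, mul_smul_comm, mul_smul_comm, smul_mul_assoc,
      smul_mul_assoc, h1, mul_comm g]
  rw [← sub_eq_zero, ← hH]
  refine MvPolynomial.funext fun x => ?_
  have h3 : lineP x₀ (x - x₀) g * (lineP x₀ (x - x₀) H).derivative =
      lineP x₀ (x - x₀) H * (lineP x₀ (x - x₀) g).derivative := by
    rw [derivative_lineP, derivative_lineP, Finset.mul_sum, Finset.mul_sum]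
    refine Finset.sum_congr rfl fun i _ => ?_
    rw [← mul_assoc, ← mul_assoc, ← map_mul, ← map_mul, h2]
  have hG : (lineP x₀ (x - x₀) g).eval 0 ≠ 0 := by rw [eval_lineP]; simpa using hx
  have hH0 : (lineP x₀ (x - x₀) H).IsRoot 0 := by
    rw [Polynomial.IsRoot, eval_lineP]; simp [hH, smul_eval]; ring
  suffices hz : lineP x₀ (x - x₀) H = 0 by
    have := eval_lineP x₀ (x - x₀) H 1
    rw [hz] at this
    simpa using this.symm
  generalize lineP x₀ (x - x₀) H = a at *
  generalize lineP x₀ (x - x₀) g = b at *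
  by_contra ha
  have hda : a.derivative ≠ 0 := by
    intro h0
    rw [Polynomial.derivative_eq_zero.1 h0 |> Polynomial.eq_C_of_natDegree_eq_zero] at hH0 ha
    simp at hH0 ha
    exact ha hH0
  have hb : b ≠ 0 := by rintro rfl; simp at hG
  have hm : b * a.derivative ≠ 0 := mul_ne_zero hb hda
  have e1 := congrArg (Polynomial.rootMultiplicity 0) h3
  rw [Polynomial.rootMultiplicity_mul hm, Polynomial.rootMultiplicity_mul (h3 ▸ hm),
    Polynomial.derivative_rootMultiplicity_of_root hH0,
    Polynomial.rootMultiplicity_eq_zero (by simpa using hG)] at e1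
  have := (Polynomial.rootMultiplicity_pos ha).2 hH0
  omega

/-- Independent forms have independent gradients somewhere. -/
lemma grad_pair {d : ℕ} (f g : Sf σ (d + 1))
    (h : ∀ x, ¬ LinearIndependent ℂ ![grad x f.1, grad x g.1]) : ¬ LinearIndependent ℂ ![f, g] := by
  intro hv
  have hne : g.1 ≠ 0 := fun h0 => hv.ne_zero 1 (Subtype.ext h0)
  obtain ⟨x₀, hx₀⟩ : ∃ x₀, eval x₀ g.1 ≠ 0 := by
    by_contra! h0
    exact hne (MvPolynomial.funext fun x => by rw [h0 x, map_zero])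
  have := smul_eq_of_grad f.2 g.2 (fun x i j => ?_) (Nat.succ_ne_zero d) hx₀
  · have h3 : eval x₀ g.1 • f + (- eval x₀ f.1) • g = 0 := by
      refine Subtype.ext ?_
      rw [Submodule.coe_add, Submodule.coe_smul, Submodule.coe_smul, this, neg_smul,
        add_neg_cancel]; rfl
    exact hx₀ (LinearIndependent.pair_iff.1 hv _ _ h3).1
  · by_contra hm
    refine h x (LinearIndependent.pair_iff.2 fun a b hab => ?_)
    have ei : ∀ i, a * eval x (pderiv i f.1) + b * eval x (pderiv i g.1) = 0 := by
      intro i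
      have := congrFun hab i
      rwa [Pi.add_apply, Pi.smul_apply, Pi.smul_apply, grad_apply, grad_apply, smul_eq_mul,
        smul_eq_mul, Pi.zero_apply] at this
    have hm' := sub_ne_zero.2 hm
    constructor
    · refine (mul_eq_zero.1 (?_ : a * _ = 0)).resolve_right hm'
      linear_combination eval x (pderiv j g.1) * ei i - eval x (pderiv i g.1) * ei j
    · refine (mul_eq_zero.1 (?_ : b * _ = 0)).resolve_right hm'
      linear_combination eval x (pderiv i f.1) * ei j - eval x (pderiv j f.1) * ei i

end Lines

/-- A family of linear maps on `E` attains rank two, or rank `dim E` if that is smaller, at some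
parameter, provided that it does so on each pair of vectors separately. -/
lemma exists_rank_two {X E F : Type*} [Nonempty X] [AddCommGroup E] [Module ℂ E]
    [FiniteDimensional ℂ E] [AddCommGroup F] [Module ℂ F] (Φ : X → E →ₗ[ℂ] F)
    (h1 : ∀ f, (∀ x, Φ x f = 0) → f = 0)
    (h2 : ∀ f g, (∀ x, ¬ LinearIndependent ℂ ![Φ x f, Φ x g]) → ¬ LinearIndependent ℂ ![f, g]) :
    ∃ x, min 2 (Module.finrank ℂ E) ≤ Module.finrank ℂ (LinearMap.range (Φ x)) := by
  by_cases h : 2 ≤ Module.finrank ℂ E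
  · obtain ⟨v, hv⟩ := exists_linearIndependent_of_le_finrank (R := ℂ) (M := E) h
    have hv' : LinearIndependent ℂ ![v 0, v 1] := by
      convert hv using 1; ext i; fin_cases i <;> rfl
    by_contra! hcon
    refine h2 _ _ (fun x hli => ?_) hv'
    have h4 := finrank_span_eq_card hli
    have h5 : Submodule.span ℂ (Set.range ![Φ x (v 0), Φ x (v 1)]) ≤ LinearMap.range (Φ x) := by
      rw [Submodule.span_le]
      rintro _ ⟨i, rfl⟩
      fin_cases i
      · exact ⟨v 0, rfl⟩
      · exact ⟨v 1, rfl⟩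
    have h6 := Submodule.finrank_mono h5
    have h7 := hcon x
    rw [h4] at h6
    simp at h6
    omega
  · by_cases h0 : Module.finrank ℂ E = 0
    · exact ⟨Classical.arbitrary X, by omega⟩
    have : Nontrivial E := Module.nontrivial_of_finrank_pos (R := ℂ) (by omega)
    obtain ⟨f, hf⟩ := exists_ne (0 : E)
    by_contra! hcon
    refine hf (h1 f fun x => ?_)
    have h1 : Module.finrank ℂ (LinearMap.range (Φ x)) = 0 := by have := hcon x; omega
    have h2 : LinearMap.range (Φ x) = ⊥ := Submodule.finrank_eq_zero.1 h1
    exact LinearMap.congr_fun (LinearMap.range_eq_bot.1 h2) f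

/-- Adding the conditions `Φ x` for a suitable `x` lowers the bound for the dimension of the kernel by
two. -/
lemma kerLE_sub_two {X E F F' G : Type*} [Nonempty X] [AddCommGroup E] [Module ℂ E]
    [FiniteDimensional ℂ E] [AddCommGroup F] [Module ℂ F] [AddCommGroup F'] [Module ℂ F']
    [AddCommGroup G] [Module ℂ G] {T : E →ₗ[ℂ] F} {κ : ℕ} (hT : KerLE T κ) (Φ : X → E →ₗ[ℂ] G)
    (T' : X → E →ₗ[ℂ] F') (hT' : ∀ x e, T' x e = 0 → T e = 0 ∧ Φ x e = 0)
    (h1 : ∀ f, (∀ x, Φ x f = 0) → f = 0)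
    (h2 : ∀ f g, (∀ x, ¬ LinearIndependent ℂ ![Φ x f, Φ x g]) → ¬ LinearIndependent ℂ ![f, g]) :
    ∃ x, KerLE (T' x) (κ - 2) := by
  rw [kerLE_iff] at hT
  obtain ⟨x, hx⟩ := exists_rank_two (E := LinearMap.ker T) (F := G)
    (fun x => Φ x ∘ₗ (LinearMap.ker T).subtype)
    (fun f hf => Subtype.ext (h1 _ hf)) (fun f g hfg hli => by
      refine h2 f.1 g.1 hfg ?_
      rw [LinearIndependent.pair_iff] at hli ⊢
      exact fun a b hab => hli a b (Subtype.ext hab))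
  refine ⟨x, (kerLE_iff _ _).2 ?_⟩
  have h3 := LinearMap.finrank_range_add_finrank_ker (K := ℂ) (V := LinearMap.ker T)
    (Φ x ∘ₗ (LinearMap.ker T).subtype)
  have h4 : Module.finrank ℂ (LinearMap.ker (T' x)) ≤
      Module.finrank ℂ (LinearMap.ker (Φ x ∘ₗ (LinearMap.ker T).subtype)) := by
    refine LinearMap.finrank_le_finrank_of_injective (f :=
      { toFun := fun f => ⟨⟨f.1, (hT' x f.1 f.2).1⟩, (hT' x f.1 f.2).2⟩
        map_add' := fun _ _ => rfl
        map_smul' := fun _ _ => rfl }) ?_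
    intro f g hfg
    exact Subtype.ext (congrArg (fun z => z.1.1) hfg)
  omega

/-- One more general point lowers the dimension by two. -/
lemma KK.succ {k d s κ : ℕ} (h : KK k (d + 1) s κ) : KK k (d + 1) (s + 1) (κ - 2) := by
  obtain ⟨P, hP⟩ := h
  obtain ⟨x, hx⟩ := kerLE_sub_two hP
    (fun x : Fin k → ℂ => grad x ∘ₗ (Sf (Fin k) (d + 1)).subtype)
    (fun x => gmap (d + 1) (Fin.snoc (α := fun _ => Fin k → ℂ) P x))
    (fun x f hf => by
      have hf := gmap_eq_zero.1 hf
      refine ⟨gmap_eq_zero.2 fun i => ?_, ?_⟩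
      · simpa using hf i.castSucc
      · simpa using hf (Fin.last s))
    (fun f hf => by
      refine Subtype.ext (MvPolynomial.funext fun x => ?_)
      rw [Submodule.coe_zero, map_zero]
      exact eval_eq_zero_of_grad f.2 (Nat.succ_ne_zero d) (hf x))
    (fun f g h => grad_pair f g h)
  exact ⟨_, hx⟩

/-- Each additional general point lowers the dimension of the space of singular forms by at least two,
as independent forms have independent gradients somewhere. -/
lemma KK.add {k d s κ : ℕ} (h : KK k (d + 1) s κ) (m : ℕ) :
    KK k (d + 1) (s + m) (κ - 2 * m) := by
  induction m with
  | zero => simpa using h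
  | succ m ih => exact (ih.succ).mono (by omega)

/-- Quadratic forms singular at a basis vanish. -/
lemma KK.quadric {k s : ℕ} (hs : k ≤ s) : KK k 2 s 0 := by
  classical
  refine ⟨fun i j => if (i : ℕ) = j then 1 else 0, 0, fun f hf _ => ?_⟩
  rw [gmap_eq_zero] at hf
  have h1 : ∀ i j : Fin k, eval (Pi.single i 1) (pderiv j f.1) = 0 := by
    intro i j
    have := congrFun (hf (Fin.castLE hs i)) j
    rw [grad_apply, Pi.zero_apply] at this
    rw [← this]
    congr 2
    funext a
    simp [Pi.single_apply, Fin.ext_iff, eq_comm]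
  refine Subtype.ext (MvPolynomial.funext fun x => ?_)
  rw [Submodule.coe_zero, map_zero]
  refine eval_eq_zero_of_grad f.2 two_ne_zero (funext fun j => ?_)
  rw [grad_apply]
  obtain ⟨c, hc⟩ : ∃ c : Fin k → ℂ, ∀ y, eval y (pderiv j f.1) = ∑ i, y i * c i := by
    have hl : (pderiv j f.1).IsHomogeneous 1 := f.2.pderiv
    refine ⟨fun i => eval 0 (pderiv i (pderiv j f.1)), fun y => ?_⟩
    have := euler hl y
    rw [Nat.cast_one, one_mul] at this
    rw [← this]
    refine Finset.sum_congr rfl fun i _ => ?_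
    have h0 : (pderiv i (pderiv j f.1)).IsHomogeneous 0 := hl.pderiv
    obtain ⟨c, hc⟩ : ∃ c, pderiv i (pderiv j f.1) = C c :=
      ⟨_, totalDegree_eq_zero_iff_eq_C.1 (Nat.le_zero.1 h0.totalDegree_le)⟩
    simp [hc]
  rw [hc]
  refine Finset.sum_eq_zero fun i _ => ?_
  have := h1 i j
  rw [hc, Finset.sum_eq_single i (fun b _ hb => by simp [hb]) (by simp)] at this
  simp at this
  simp [this]

/-- Linear forms with a vanishing gradient vanish. -/
lemma KK.linear {k : ℕ} : KK k 1 1 0 := by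
  refine ⟨0, 0, fun f hf _ => ?_⟩
  rw [gmap_eq_zero] at hf
  refine Subtype.ext (MvPolynomial.funext fun x => ?_)
  rw [Submodule.coe_zero, map_zero]
  refine eval_eq_zero_of_grad f.2 one_ne_zero (funext fun j => ?_)
  have h0 : (pderiv j f.1).IsHomogeneous 0 := f.2.pderiv
  have h1 := congrFun (hf 0) j
  rw [grad_apply] at h1 ⊢
  rw [totalDegree_eq_zero_iff_eq_C.1 (Nat.le_zero.1 h0.totalDegree_le)] at h1 ⊢
  simpa using h1

/-- The cone over a smooth quadric. -/
lemma BS.quadric (k : ℕ) : BS (Fin (k + 1)) 2 (Fin 0 ⊕ Fin 1) := by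
  classical
  have hp : ∀ i, eval (Pi.single 0 1 : Fin (k + 1) → ℂ) (X i) = if i = 0 then 1 else 0 := by
    intro i; simp [Pi.single_apply]
  refine ⟨fun _ => Pi.single 0 1, fun c => ?_, Sum.inr 0, ⟨∑ i : Fin k, X i.succ ^ 2, ?_⟩, ?_, ?_⟩
  · let c' : Fin (k + 1) → ℂ := fun j => c (Sum.inr 0, j)
    refine ⟨⟨X 0 * (C (c' 0 / 2) * X 0 + ∑ i : Fin k, C (c' i.succ) * X i.succ), ?_⟩, ?_⟩
    · refine IsHomogeneous.mul (m := 1) (n := 1) (isHomogeneous_X ℂ _) (.add ?_ (.sum _ _ _ fun i _ => ?_)) <;>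
      · rw [C_mul']; exact (homogeneousSubmodule _ _ 1).smul_mem _ (isHomogeneous_X ℂ _)
    · funext a
      obtain ⟨i, j⟩ := a
      have hi : i = Sum.inr 0 := by
        rcases i with i | i
        · exact i.elim0
        · rw [Subsingleton.elim i 0]
      subst hi
      rw [gmap_apply]
      refine Fin.cases ?_ (fun j => ?_) j
      · simp [hp, c', pderiv_X]
      · simp [hp, c', pderiv_X, Pi.single_apply]
  · exact .sum _ _ _ fun i _ => by simpa using (isHomogeneous_X ℂ i.succ).pow 2
  · rw [gmap_eq_zero]
    intro i
    ext j
    rw [grad_apply]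
    simp [hp]
  · refine ⟨Pi.single 0 1, fun v h1 h2 => ?_⟩
    funext j
    refine Fin.cases ?_ (fun j => ?_) j
    · simpa using h2
    · have := congrFun h1 j.succ
      rw [Matrix.mulVec, dotProduct, Finset.sum_eq_single j.succ] at this
      · rw [hess_apply] at this
        simpa [pderiv_mul, pderiv_X, Pi.single_apply] using this
      · intro b _ hb
        rw [hess_apply]
        simp only [map_sum, pderiv_pow, pderiv_X, Pi.single_apply]
        refine mul_eq_zero_of_left (Finset.sum_eq_zero fun x _ => ?_) _
        split_ifs with hx
        · subst hx
          simp [pderiv_X, hb]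
        · simp
      · simp

end Kernels

/-! ### The induction step for given numbers, and binary forms -/

section Binary

lemma AH.sum {k d u e s r : ℕ} (h : AH (Fin k) d (Fin u ⊕ Fin e ⊕ Fin s)) (hr : r ≤ u + e + s) :
    AH (Fin k) d (Fin r) := h.of_card (by simp; omega)

lemma stepA {k d u e s κ r : ℕ} (hA : AH (Fin k) (d + 2) (Fin u))
    (hB : AH (Fin (k + 1)) (d + 1) (Fin (e + s))) (hK : KK (k + 1) d s κ) (he : e ≤ k)
    (hc1 : u * k + e ≤ k.multichoose (d + 2))
    (hc2 : u + κ + e * k + s * (k + 1) ≤ (k + 1).multichoose (d + 1)) (hr : r ≤ u + e + s) :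
    AH (Fin (k + 1)) (d + 2) (Fin r) :=
  (step_AH hA hc1 he (hB.of_card (by simp)) hK hc2).sum hr

lemma stepB {k d u e s κ r : ℕ} (hA : AH (Fin k) (d + 2) (Fin u))
    (hB : BS (Fin (k + 1)) (d + 1) (Fin (e + s))) (hK : KK (k + 1) d s κ) (hs : 0 < s) (he : e ≤ k)
    (hc1 : u * k + e ≤ k.multichoose (d + 2))
    (hc2 : u + κ + e * k + s * (k + 1) < (k + 1).multichoose (d + 1)) (hr0 : 0 < r)
    (hr : r ≤ u + e + s) : BS (Fin (k + 1)) (d + 2) (Fin r) := by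
  have : Nonempty (Fin e ⊕ Fin s) := ⟨Sum.inr ⟨0, hs⟩⟩
  have : Nonempty (Fin r) := ⟨⟨0, hr0⟩⟩
  exact (step_BS hA hc1 he hs (hB.of_card (by simp)) hK hc2).of_card (by simp; omega)

lemma AH.zero (k d : ℕ) : AH (Fin k) d (Fin 0) :=
  ⟨fun i => i.elim0, fun _ => ⟨0, funext fun a => a.1.elim0⟩⟩

lemma AH.le {k d r r' : ℕ} (h : AH (Fin k) d (Fin r)) (hr : r' ≤ r) : AH (Fin k) d (Fin r') :=
  h.of_card (by simpa)

lemma BS.le {k d r r' : ℕ} (h : BS (Fin k) d (Fin r)) (hr0 : 0 < r') (hr : r' ≤ r) :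
    BS (Fin k) d (Fin r') := by
  have : Nonempty (Fin r') := ⟨⟨0, hr0⟩⟩
  exact h.of_card (by simpa)

lemma AH.linear (k : ℕ) : AH (Fin k) 1 (Fin 1) := by
  classical
  refine ⟨0, fun c => ⟨⟨∑ i : Fin k, C (c (0, i)) * X i, ?_⟩, ?_⟩⟩
  · refine .sum _ _ _ fun i _ => ?_
    rw [C_mul']
    exact (homogeneousSubmodule _ _ 1).smul_mem _ (isHomogeneous_X ℂ _)
  · funext a
    obtain ⟨i, j⟩ := a
    rw [gmap_apply, Subsingleton.elim i 0]
    simp [pderiv_X, Pi.single_apply]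

lemma AH.one (d : ℕ) : AH (Fin 1) (d + 1) (Fin 1) := by
  have hd : (d : ℂ) + 1 ≠ 0 := by exact_mod_cast Nat.succ_ne_zero d
  refine ⟨1, fun c => ⟨⟨C (c (0, 0) / (d + 1)) * X 0 ^ (d + 1), ?_⟩, ?_⟩⟩
  · rw [C_mul']
    refine (homogeneousSubmodule _ _ (d + 1)).smul_mem _ ?_
    simpa using (isHomogeneous_X ℂ (0 : Fin 1)).pow (d + 1)
  · funext a
    rw [gmap_apply, Subsingleton.elim a (0, 0)]
    simp [pderiv_pow]
    field_simp

lemma multichoose_two' (d : ℕ) : (1 + 1 : ℕ).multichoose d = d + 1 := Nat.multichoose_two d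

/-- Binary forms: `r` double points impose independent conditions when `2 r ≤ d + 1`. -/
lemma AH.binary : ∀ d r : ℕ, 2 * r ≤ d + 1 → AH (Fin 2) d (Fin r)
  | d, 0, _ => AH.zero 2 d
  | 0, r + 1, h => by omega
  | 1, r + 1, h => (AH.linear 2).le (by omega)
  | d + 2, r + 1, h => by
    refine stepA (k := 1) (u := 1) (e := 0) (s := r) (κ := d + 1 - 2 * r) (AH.one (d + 1))
      ((AH.binary (d + 1) r (by omega)).le (by omega))
      ((KK.of_AH (AH.binary d r (by omega))) ?_) (by omega) ?_ ?_ (by omega)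
    · rw [Nat.multichoose_two]; omega
    · simp
    · rw [multichoose_two']; omega

/-- The linear form vanishing at a point of the projective line. -/
noncomputable def lin2 (p : Fin 2 → ℂ) : MvPolynomial (Fin 2) ℂ := C (p 1) * X 0 - C (p 0) * X 1

lemma lin2_hom (p : Fin 2 → ℂ) : (lin2 p).IsHomogeneous 1 := by
  refine IsHomogeneous.sub ?_ ?_ <;>
  · rw [C_mul']; exact (homogeneousSubmodule _ _ 1).smul_mem _ (isHomogeneous_X ℂ _)

lemma eval_lin2 (p q : Fin 2 → ℂ) : eval q (lin2 p) = p 1 * q 0 - p 0 * q 1 := by simp [lin2]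

/-- A form with a double factor through a point. -/
lemma corank1_sq {l g : MvPolynomial (Fin 2) ℂ} {p v₀ : Fin 2 → ℂ} (hl : eval p l = 0)
    (hg : eval p g ≠ 0) (h0 : ∀ i, pderiv i l = C (v₀ i)) (hv : v₀ 1 ≠ 0) :
    grad p (l ^ 2 * g) = 0 ∧ Corank1 (l ^ 2 * g) p := by
  have hH : ∀ i j, hess p (l ^ 2 * g) i j = 2 * eval p g * v₀ i * v₀ j := by
    intro i j
    rw [hess_apply]
    simp only [pderiv_mul, pderiv_pow, map_add, map_mul, h0, hl, map_pow, eval_C, map_natCast,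
      pderiv_C]
    simp [hl]
    ring
  constructor
  · ext i
    rw [grad_apply]
    simp [pderiv_mul, pderiv_pow, hl]
  · refine ⟨![1, 0], fun v h1 h2 => ?_⟩
    have e1 : ∀ i, v₀ i * (v₀ 0 * v 0 + v₀ 1 * v 1) = 0 := by
      intro i
      have := congrFun h1 i
      rw [Matrix.mulVec, dotProduct, Fin.sum_univ_two, hH, hH] at this
      refine (mul_eq_zero.1 (?_ : 2 * eval p g * _ = 0)).resolve_left
        (mul_ne_zero two_ne_zero hg)
      rw [Pi.zero_apply] at this
      linear_combination this
    have e2 : v 0 = 0 := by simpa [dotProduct, Fin.sum_univ_two] using h2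
    have e3 := (mul_eq_zero.1 (e1 1)).resolve_left hv
    rw [e2, mul_zero, zero_add] at e3
    have e4 := (mul_eq_zero.1 e3).resolve_left hv
    funext i
    fin_cases i
    · exact e2
    · exact e4

lemma BS.binary {d r : ℕ} (hr0 : 0 < r) (hr : 2 * r ≤ d) : BS (Fin 2) d (Fin r) := by
  classical
  obtain ⟨r, rfl⟩ : ∃ m, r = m + 1 := ⟨r - 1, by omega⟩
  obtain ⟨p₁, hp₁⟩ := AH.binary d (r + 1) (by omega)
  have hl : ∀ i j, PolyLine fun p : Fin (r + 1) → Fin 2 → ℂ => p i j := fun i j =>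
    PolyLine.linear ((LinearMap.proj j : (Fin 2 → ℂ) →ₗ[ℂ] ℂ) ∘ₗ
      (LinearMap.proj i : (Fin (r + 1) → Fin 2 → ℂ) →ₗ[ℂ] (Fin 2 → ℂ)))
  have g1 : Gen (fun p : Fin (r + 1) → Fin 2 → ℂ => Function.Surjective (gmap d p)) :=
    Gen.surj (X := Fin (r + 1) → Fin 2 → ℂ) (E := Sf (Fin 2) d) (κ := Fin (r + 1) × Fin 2)
      (T := fun p => gmap d p) (fun f a => gmap_polyLine (p := fun p => p)
        hl f a) hp₁
  have g2 : Gen (fun p : Fin (r + 1) → Fin 2 → ℂ => p 0 0 ≠ 0) :=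
    Gen.of_polyLine (hl 0 0) (fun _ _ => 1) one_ne_zero
  have g3 : Gen (fun p : Fin (r + 1) → Fin 2 → ℂ =>
      ∀ i : Fin r, p i.succ 1 * p 0 0 - p i.succ 0 * p 0 1 ≠ 0) :=
    Gen.all fun i => Gen.of_polyLine (((hl _ _).mul (hl _ _)).sub ((hl _ _).mul (hl _ _)))
      (fun k => if k = 0 then ![1, 0] else ![0, 1]) (by simp)
  obtain ⟨p, hp, h0, h1⟩ := (g1.and (g2.and g3)).exists_
  have hhom : (lin2 (p 0) ^ 2 * (X 0 ^ (d - 2 * (r + 1)) *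
      ∏ i : Fin r, lin2 (p i.succ) ^ 2)).IsHomogeneous d := by
    have := ((lin2_hom (p 0)).pow 2).mul (((isHomogeneous_X ℂ (0 : Fin 2)).pow
      (d - 2 * (r + 1))).mul (IsHomogeneous.prod Finset.univ (fun i : Fin r => lin2 (p i.succ) ^ 2)
        (fun _ => 1 * 2) fun i _ => (lin2_hom (p i.succ)).pow 2))
    convert this using 1
    simp
    omega
  have hd : ∀ q : Fin 2 → ℂ, ∀ i, pderiv i (lin2 q) = C (![q 1, - q 0] i) := by
    intro q i
    fin_cases i <;> simp [lin2, pderiv_X, Pi.single_apply]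
  have key := corank1_sq (l := lin2 (p 0)) (g := X 0 ^ (d - 2 * (r + 1)) *
      ∏ i : Fin r, lin2 (p i.succ) ^ 2) (p := p 0) (v₀ := ![p 0 1, - p 0 0])
      (by rw [eval_lin2]; ring) (by
        rw [map_mul, map_pow, eval_X, map_prod]
        refine mul_ne_zero (pow_ne_zero _ h0) (Finset.prod_ne_zero_iff.2 fun i _ => ?_)
        rw [map_pow, eval_lin2]
        exact pow_ne_zero _ (h1 i)) (hd _) (by simpa using h0)
  refine ⟨p, hp, 0, ⟨_, hhom⟩, gmap_eq_zero.2 fun i => ?_, key.2⟩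
  refine Fin.cases key.1 (fun i => ?_) i
  ext a
  rw [grad_apply]
  change eval _ (pderiv a (lin2 (p 0) ^ 2 * (X 0 ^ (d - 2 * (r + 1)) *
      ∏ i : Fin r, lin2 (p i.succ) ^ 2))) = 0
  rw [← Finset.mul_prod_erase _ _ (Finset.mem_univ i)]
  simp only [pderiv_mul, pderiv_pow, map_add, map_mul, map_pow, eval_lin2]
  simp [mul_comm (p i.succ 1)]

end Binary

/-! ### Derivations and the tangent argument -/

section Deriv
open TensorProduct

/-- Derivations extend along formally étale algebras. -/
lemma exists_derivation {R K : Type} [CommRing R] [Field K] [Algebra ℂ R] [Algebra ℂ K]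
    [Algebra R K] [IsScalarTower ℂ R K] [Algebra.FormallyEtale R K] (D₀ : Derivation ℂ R R) :
    ∃ D : Derivation ℂ K K, ∀ x, D (algebraMap R K x) = algebraMap R K (D₀ x) := by
  let L : K ⊗[R] Ω[R⁄ℂ] →ₗ[K] K :=
    (TensorProduct.AlgebraTensorModule.rid R K K).toLinearMap ∘ₗ D₀.liftKaehlerDifferential.baseChange K
  refine ⟨(L ∘ₗ (KaehlerDifferential.tensorKaehlerEquivOfFormallyEtale ℂ R K).symm.toLinearMap).compDer
    (KaehlerDifferential.D ℂ K), fun x => ?_⟩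
  have h := KaehlerDifferential.tensorKaehlerEquivOfFormallyEtale_symm_D_algebraMap ℂ R K x
  change L ((KaehlerDifferential.tensorKaehlerEquivOfFormallyEtale ℂ R K).symm
    (KaehlerDifferential.D ℂ K (algebraMap R K x))) = _
  rw [h]
  simp [L, Algebra.smul_def]

variable {σ : Type} [Fintype σ]

lemma derivation_aeval {B : Type} [CommRing B] [Algebra ℂ B] (D : Derivation ℂ B B) (q : σ → B)
    (f : MvPolynomial σ ℂ) :
    D (aeval q f) = ∑ b, D (q b) * aeval q (pderiv b f) := by
  classical
  induction f using MvPolynomial.induction_on with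
  | C a => simp
  | add f g hf hg => simp only [map_add, hf, hg, mul_add, Finset.sum_add_distrib]
  | mul_X f i hf =>
    rw [map_mul, aeval_X, Derivation.leibniz, hf]
    simp only [pderiv_mul, map_add, map_mul, aeval_X, mul_add, Finset.sum_add_distrib, smul_eq_mul,
      pderiv_X, Pi.single_apply]
    rw [Finset.sum_eq_single (f := fun x => D (q x) * (aeval q f * aeval q (if i = x then 1 else 0))) i
      (fun b _ hb => by simp [hb.symm]) (by simp), Finset.mul_sum, add_comm]
    congr 1
    · exact Finset.sum_congr rfl fun b _ => by ring
    · simp [mul_comm]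

lemma euler_aeval {B : Type} [CommRing B] [Algebra ℂ B] {d : ℕ} {f : MvPolynomial σ ℂ}
    (hf : f.IsHomogeneous d) (q : σ → B) :
    ∑ b, q b * aeval q (pderiv b f) = d * aeval q f := by
  have := congrArg (aeval q) hf.sum_X_mul_pderiv
  simpa using this

end Deriv

section Lift
variable {σ ι : Type} [Fintype σ] [Fintype ι] [DecidableEq ι] [DecidableEq σ]
variable {B : Type} [CommRing B] [Algebra ℂ B]

/-- The gradients of `f` at a family of points with coordinates in `B`. -/
noncomputable def gradB (P : ι → σ → B) (f : MvPolynomial σ ℂ) (κ : ι × σ) : B :=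
  aeval (P κ.1) (pderiv κ.2 f)

/-- The square matrix of the gradient conditions on a family `c` of forms. -/
noncomputable def matB (c : ι × σ → MvPolynomial σ ℂ) (P : ι → σ → B) : Matrix (ι × σ) (ι × σ) B :=
  fun κ κ' => gradB P (c κ') κ

/-- The coefficients, up to the factor `det (matB c P)`, of the combination of the forms `c` that has
the same gradients as `f` at the points `P`. -/
noncomputable def corrB (c : ι × σ → MvPolynomial σ ℂ) (P : ι → σ → B) (f : MvPolynomial σ ℂ) :
    ι × σ → B := (matB c P).adjugate *ᵥ gradB P f

/-- By Cramer's rule `det • f - ∑ corr κ • c κ` is singular at all points of the family `P`; this is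
the value of the operator `T` on that form. -/
noncomputable def liftB (c : ι × σ → MvPolynomial σ ℂ) (P : ι → σ → B)
    (T : MvPolynomial σ ℂ → B) (f : MvPolynomial σ ℂ) : B :=
  (matB c P).det * T f - ∑ κ, corrB c P f κ * T (c κ)

variable (c : ι × σ → MvPolynomial σ ℂ) (P : ι → σ → B)

lemma liftB_grad (f : MvPolynomial σ ℂ) (κ : ι × σ) :
    liftB c P (fun g => gradB P g κ) f = 0 := by
  have h : matB c P *ᵥ corrB c P f = (matB c P).det • gradB P f := by
    rw [corrB, Matrix.mulVec_mulVec, Matrix.mul_adjugate, Matrix.smul_mulVec, Matrix.one_mulVec]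
  have := congrFun h κ
  rw [liftB, Pi.smul_apply, smul_eq_mul] at *
  rw [← this, sub_eq_zero]
  exact Finset.sum_congr rfl fun _ _ => mul_comm _ _

lemma liftB_sum {α : Type} (s : Finset α) (y : α → B) (T : α → MvPolynomial σ ℂ → B)
    (f : MvPolynomial σ ℂ) :
    liftB c P (fun g => ∑ b ∈ s, y b * T b g) f = ∑ b ∈ s, y b * liftB c P (T b) f := by
  simp only [liftB, mul_sub, Finset.sum_sub_distrib, Finset.mul_sum]
  congr 1
  · exact Finset.sum_congr rfl fun _ _ => by ring
  · rw [Finset.sum_comm]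
    exact Finset.sum_congr rfl fun _ _ => Finset.sum_congr rfl fun _ _ => by ring

lemma liftB_map {B' : Type} [CommRing B'] [Algebra ℂ B'] (φ : B →ₐ[ℂ] B')
    (T : MvPolynomial σ ℂ → B) (f : MvPolynomial σ ℂ) :
    φ (liftB c P T f) = liftB c (fun i j => φ (P i j)) (fun g => φ (T g)) f := by
  have h1 : ∀ f, φ ∘ gradB P f = gradB (fun i j => φ (P i j)) f := by
    intro f
    funext κ
    change φ (aeval _ _) = aeval _ _
    rw [← comp_aeval_apply]
  have h2 : (φ : B →+* B').mapMatrix (matB c P) = matB c (fun i j => φ (P i j)) := by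
    ext κ κ'
    exact congrFun (h1 (c κ')) κ
  have h3 : ∀ κ, φ (corrB c P f κ) = corrB c (fun i j => φ (P i j)) f κ := by
    intro κ
    rw [corrB, corrB, ← h1, ← h2, ← RingHom.map_adjugate, Matrix.mulVec, Matrix.mulVec, dotProduct,
      dotProduct, map_sum]
    exact Finset.sum_congr rfl fun x _ => by rw [map_mul]; rfl
  have h4 : φ (matB c P).det = (matB c (fun i j => φ (P i j))).det := by
    rw [← h2, ← RingHom.map_det]; rfl
  rw [liftB, liftB, map_sub, map_mul, map_sum, h4]
  simp only [map_mul, h3]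

lemma detB_map {B' : Type} [CommRing B'] [Algebra ℂ B'] (φ : B →ₐ[ℂ] B') :
    φ (matB c P).det = (matB c (fun i j => φ (P i j))).det := by
  have h2 : (φ : B →+* B').mapMatrix (matB c P) = matB c (fun i j => φ (P i j)) := by
    ext κ κ'
    change φ (aeval _ _) = aeval _ _
    rw [← comp_aeval_apply]
  rw [← h2, ← RingHom.map_det]; rfl

/-- The Hessian at the `i`-th point of the singular form lifting `f`. -/
noncomputable def hessB (i : ι) (f : MvPolynomial σ ℂ) (a b : σ) : B :=
  liftB c P (fun g => aeval (P i) (pderiv a (pderiv b g))) f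

lemma derivation_liftB (D : Derivation ℂ B B) (T : MvPolynomial σ ℂ → B) (f : MvPolynomial σ ℂ) :
    D (liftB c P T f) = (D (matB c P).det * T f - ∑ κ, D (corrB c P f κ) * T (c κ)) +
      liftB c P (fun g => D (T g)) f := by
  simp only [liftB, map_sub, map_sum, Derivation.leibniz, smul_eq_mul, Finset.sum_add_distrib]
  rw [Finset.sum_congr rfl fun κ _ => mul_comm (T (c κ)) _]
  ring

end Lift

section Core
variable {σ ι : Type} [Fintype σ] [Fintype ι] [DecidableEq ι] [DecidableEq σ]
variable {K : Type} [Field K] [Algebra ℂ K]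

lemma liftB_aeval {c : ι × σ → MvPolynomial σ ℂ} {P : ι → σ → K} {d : ℕ} (hd : d ≠ 0)
    (hc : ∀ κ, (c κ).IsHomogeneous d) {f : MvPolynomial σ ℂ} (hf : f.IsHomogeneous d) {q : σ → K}
    (h : ∀ b, liftB c P (fun g => aeval q (pderiv b g)) f = 0) :
    liftB c P (fun g => aeval q g) f = 0 := by
  have : CharZero K := (RingHom.charZero_iff (algebraMap ℂ K).injective).1 inferInstance
  have h1 := liftB_sum c P Finset.univ q (fun b g => aeval q (pderiv b g)) f
  simp only [h, mul_zero, Finset.sum_const_zero] at h1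
  have h2 : (d : K) * liftB c P (fun g => aeval q g) f = 0 := by
    rw [← h1, liftB, liftB, mul_sub, euler_aeval hf, Finset.mul_sum]
    congr 1
    · ring
    · refine Finset.sum_congr rfl fun κ _ => ?_
      rw [euler_aeval (hc κ)]; ring
  exact (mul_eq_zero.1 h2).resolve_left (Nat.cast_ne_zero.2 hd)

/-- If the singular forms vanish at `q` together with their gradients, and `lam` expresses evaluation
at `q` through the gradients at the points, then the part of `lam` at the `i`-th point is killed by
the Hessians there: differentiate the vanishing at `q` along `D a`, which moves the `a`-th coordinate
of the `i`-th point. -/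
lemma hessB_kernel {c : ι × σ → MvPolynomial σ ℂ} {P : ι → σ → K}
    {i : ι} (D : σ → Derivation ℂ K K)
    (hD : ∀ a l b, D a (P l b) = if l = i ∧ b = a then 1 else 0)
    {q : σ → K} {f : MvPolynomial σ ℂ}
    (h0 : liftB c P (fun g => aeval q g) f = 0)
    (h : ∀ b, liftB c P (fun g => aeval q (pderiv b g)) f = 0) (lam : ι × σ → K)
    (hlam : aeval q f = ∑ κ, lam κ * gradB P f κ)
    (hlamc : ∀ κ', aeval q (c κ') = ∑ κ, lam κ * gradB P (c κ') κ) (a : σ) :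
    ∑ b, hessB c P i f a b * lam (i, b) = 0 := by
  have e1 := derivation_liftB c P (D a) (fun g => aeval q g) f
  have e2 : liftB c P (fun g => D a (aeval q g)) f = 0 := by
    simp only [derivation_aeval, liftB_sum, h, mul_zero, Finset.sum_const_zero]
  rw [h0, e2, map_zero, add_zero] at e1
  have e3 : ∀ l b, (D a (matB c P).det * gradB P f (l, b) -
      ∑ κ, D a (corrB c P f κ) * gradB P (c κ) (l, b)) =
      if l = i then - hessB c P i f a b else 0 := by
    intro l b
    have e4 := derivation_liftB c P (D a) (fun g => gradB P g (l, b)) f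
    rw [liftB_grad, map_zero] at e4
    have e5 : liftB c P (fun g => D a (gradB P g (l, b))) f =
        if l = i then hessB c P i f a b else 0 := by
      simp only [gradB, derivation_aeval, liftB_sum, hD]
      split_ifs with hl
      · subst hl
        simp [hessB, ite_mul]
      · simp [hl]
    rw [e5] at e4
    split_ifs at e4 ⊢ with hl
    · linear_combination -e4
    · linear_combination -e4
  have e6 : ∑ x : ι × σ, lam x * (if x.1 = i then - hessB c P i f a x.2 else 0) = 0 := by
    refine Eq.trans ?_ e1.symm
    simp only [hlam, hlamc]
    rw [Finset.sum_congr rfl fun (x : ι × σ) _ => by rw [← e3 x.1 x.2]]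
    simp only [mul_sub, Finset.sum_sub_distrib, Finset.mul_sum]
    congr 1
    · exact Finset.sum_congr rfl fun _ _ => by ring
    · rw [Finset.sum_comm]
      exact Finset.sum_congr rfl fun _ _ => Finset.sum_congr rfl fun _ _ => by ring
  rw [Fintype.sum_prod_type, Finset.sum_eq_single i (fun l _ hl => by simp [hl]) (by simp)] at e6
  simp only [if_true, mul_neg, Finset.sum_neg_distrib, neg_eq_zero] at e6
  rw [← e6]
  exact Finset.sum_congr rfl fun _ _ => mul_comm _ _

/-- Tangent argument: a common singular point `q` of the generic system is one of the points. -/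
lemma core {c : ι → ι × σ → MvPolynomial σ ℂ} {P : ι → σ → K} {d : ℕ} (hd : d ≠ 0) [Nonempty ι]
    (hc : ∀ i κ, (c i κ).IsHomogeneous d) (hdet : ∀ i, (matB (c i) P).det ≠ 0)
    (D : ι → σ → Derivation ℂ K K)
    (hD : ∀ i a l b, D i a (P l b) = if l = i ∧ b = a then 1 else 0)
    (hBJ : ∀ i (v : σ → K), (∀ f : MvPolynomial σ ℂ, f.IsHomogeneous d →
      ∀ a, ∑ b, hessB (c i) P i f a b * v b = 0) → ∃ s : K, ∀ a, v a = s * P i a)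
    {q : σ → K} (h : ∀ i (f : MvPolynomial σ ℂ), f.IsHomogeneous d → ∀ b,
      liftB (c i) P (fun g => aeval q (pderiv b g)) f = 0) :
    ∃ l, ∀ a b, q a * P l b - q b * P l a = 0 := by
  obtain ⟨i0⟩ := ‹Nonempty ι›
  have : CharZero K := (RingHom.charZero_iff (algebraMap ℂ K).injective).1 inferInstance
  set Δ := (matB (c i0) P).det with hΔ
  -- Singular forms vanish at `q`; by the Cramer rule, evaluation at `q` is a combination, with
  -- coefficients `lam`, of the gradient conditions.
  let lam : ι × σ → K := fun κ => Δ⁻¹ * ∑ κ', aeval q (c i0 κ') * (matB (c i0) P).adjugate κ' κ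
  have hlam : ∀ g : MvPolynomial σ ℂ, g.IsHomogeneous d →
      aeval q g = ∑ κ, lam κ * gradB P g κ := by
    intro g hg
    have h1 := liftB_aeval hd (hc i0) hg (h i0 g hg)
    rw [liftB, ← hΔ, sub_eq_zero] at h1
    rw [← mul_right_inj' (hdet i0), ← hΔ, h1, Finset.mul_sum]
    have : ∀ κ, Δ * (lam κ * gradB P g κ) =
        ∑ κ', aeval q (c i0 κ') * (matB (c i0) P).adjugate κ' κ * gradB P g κ := by
      intro κ
      rw [← mul_assoc, mul_inv_cancel_left₀ (hdet i0), Finset.sum_mul]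
    rw [Finset.sum_congr rfl fun κ _ => this κ, Finset.sum_comm]
    refine Finset.sum_congr rfl fun κ _ => ?_
    rw [corrB, Matrix.mulVec, dotProduct, Finset.sum_mul]
    exact Finset.sum_congr rfl fun _ _ => by ring
  have hs : ∀ i, ∃ s : K, ∀ a, lam (i, a) = s * P i a := fun i =>
    hBJ i (fun b => lam (i, b)) fun f hf a =>
      hessB_kernel (D i) (hD i) (liftB_aeval hd (hc i) hf (h i f hf)) (h i f hf) lam (hlam f hf)
        (fun κ' => hlam _ (hc i κ')) a
  choose s hs using hs
  -- Since the part of `lam` at each point is a multiple of that point, the Euler relation turns the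
  -- gradients into values.
  have hev : ∀ g : MvPolynomial σ ℂ, g.IsHomogeneous d →
      aeval q g = ∑ l, s l * d * aeval (P l) g := by
    intro g hg
    rw [hlam g hg, Fintype.sum_prod_type]
    refine Finset.sum_congr rfl fun l _ => ?_
    rw [mul_assoc, ← euler_aeval hg, Finset.mul_sum]
    refine Finset.sum_congr rfl fun b _ => ?_
    rw [hs, gradB]; ring
  -- Apply this to the product of `X a` with `∂_b c`, for the combination `c` of the forms `c i0`
  -- whose gradients vanish except for `∂_b` at the `i`-th point.
  have hq : ∀ (i : ι) (b : σ), ∃ y : K, ∀ a, q a * y = s i * d * P i a * Δ := by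
    intro i b
    refine ⟨∑ κ', (matB (c i0) P).adjugate κ' (i, b) * aeval q (pderiv b (c i0 κ')), fun a => ?_⟩
    have h1 : ∀ κ', q a * aeval q (pderiv b (c i0 κ')) =
        ∑ l, s l * d * P l a * matB (c i0) P (l, b) κ' := by
      intro κ'
      have := hev (X a * pderiv b (c i0 κ')) (by
        have := (isHomogeneous_X ℂ a).mul ((hc i0 κ').pderiv (i := b))
        rwa [Nat.add_sub_cancel' (Nat.one_le_iff_ne_zero.2 hd)] at this)
      simp only [map_mul, aeval_X] at this
      rw [this]
      exact Finset.sum_congr rfl fun _ _ => by rw [matB, gradB]; ring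
    rw [Finset.mul_sum, Finset.sum_congr rfl fun κ' _ => by
      rw [mul_left_comm, h1 κ', Finset.mul_sum], Finset.sum_comm]
    have h2 : ∀ l, ∑ κ', (matB (c i0) P).adjugate κ' (i, b) * (s l * d * P l a *
        matB (c i0) P (l, b) κ') = if l = i then s i * d * P i a * Δ else 0 := by
      intro l
      have := congrFun (congrFun (Matrix.mul_adjugate (matB (c i0) P)) (l, b)) (i, b)
      rw [Matrix.mul_apply, Matrix.smul_apply, Matrix.one_apply, smul_eq_mul, ← hΔ] at this
      rw [Finset.sum_congr rfl fun κ' _ => (by ring : _ = (s l * d * P l a) *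
        (matB (c i0) P (l, b) κ' * (matB (c i0) P).adjugate κ' (i, b))), ← Finset.mul_sum, this]
      by_cases hl : l = i
      · subst hl; simp
      · simp [hl]
    rw [Finset.sum_congr rfl fun l _ => h2 l]
    simp
  -- If all `s i` vanish, then all forms of degree `d` vanish at `q`, so `q = 0`.
  by_cases hz : ∃ i, s i ≠ 0
  · obtain ⟨i, hi⟩ := hz
    refine ⟨i, fun a b => ?_⟩
    obtain ⟨y, hy⟩ := hq i a
    have hne : s i * d * Δ ≠ 0 := mul_ne_zero (mul_ne_zero hi (Nat.cast_ne_zero.2 hd)) (hdet i0)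
    refine (mul_eq_zero.1 (?_ : s i * d * Δ * _ = 0)).resolve_left hne
    linear_combination q b * hy a - q a * hy b
  · push Not at hz
    have h0 : ∀ a, q a = 0 := by
      intro a
      have := hev (X a ^ d) (by simpa using (isHomogeneous_X ℂ a).pow d)
      simp only [hz, zero_mul, Finset.sum_const_zero, map_pow, aeval_X] at this
      exact pow_eq_zero_iff hd |>.1 this
    exact ⟨i0, fun a b => by simp [h0]⟩

end Core

/-! ### Passage to the generic configuration -/

section Final
variable {σ ι : Type} [Fintype σ] [Fintype ι] [DecidableEq ι] [DecidableEq σ]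

/-- The gradient conditions at some family of points are independent on forms of degree `d`, and
the Hessians at the `i`-th point of the forms singular at all points have no common kernel vector
except the multiples of that point. -/
def BJ (σ : Type) [Fintype σ] (d : ℕ) {ι : Type} (i : ι) : Prop :=
  ∃ p : ι → σ → ℂ, Function.Surjective (gmap d p) ∧ ∀ v : σ → ℂ,
    (∀ f : Sf σ d, gmap d p f = 0 → hess (p i) f.1 *ᵥ v = 0) → ∃ s : ℂ, v = s • p i

lemma surj_of_dot {E : Type} [AddCommGroup E] [Module ℂ E] (Φ : E →ₗ[ℂ] (σ → ℂ))
    (h : ∀ v : σ → ℂ, (∀ e, Φ e ⬝ᵥ v = 0) → v = 0) : Function.Surjective Φ := by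
  by_contra hs
  have hlt : LinearMap.range Φ < ⊤ := lt_top_iff_ne_top.2 fun h => hs (LinearMap.range_eq_top.1 h)
  obtain ⟨g, hg, hker⟩ := Submodule.exists_le_ker_of_lt_top _ hlt
  apply hg
  have hgv : ∀ x, g x = x ⬝ᵥ fun j => g (Pi.single j 1) := by
    intro x
    conv_lhs => rw [LinearMap.pi_apply_eq_sum_univ g x]
    refine Finset.sum_congr rfl fun j _ => ?_
    rw [smul_eq_mul]
    congr 2
    funext k
    simp [Pi.single_apply, eq_comm]
  have h0 := h (fun j => g (Pi.single j 1)) fun e => by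
    rw [← hgv]
    exact hker (LinearMap.mem_range_self Φ e)
  ext j
  simpa using congrFun h0 j

lemma hessB_self {B : Type} [CommRing B] [Algebra ℂ B] {c : ι × σ → MvPolynomial σ ℂ}
    {P : ι → σ → B} {d : ℕ} (hc : ∀ κ, (c κ).IsHomogeneous d) {f : MvPolynomial σ ℂ}
    (hf : f.IsHomogeneous d) (i : ι) (a : σ) : ∑ b, hessB c P i f a b * P i b = 0 := by
  have h1 := liftB_sum c P Finset.univ (P i) (fun b g => aeval (P i) (pderiv a (pderiv b g))) f
  have h2 : ∀ g : MvPolynomial σ ℂ, g.IsHomogeneous d →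
      ∑ b, P i b * aeval (P i) (pderiv a (pderiv b g)) = ((d - 1 : ℕ) : B) * gradB P g (i, a) := by
    intro g hg
    rw [gradB, ← euler_aeval (hg.pderiv (i := a))]
    exact Finset.sum_congr rfl fun b _ => by rw [pderiv_comm]
  have h3 : liftB c P (fun g => ∑ b, P i b * aeval (P i) (pderiv a (pderiv b g))) f =
      ((d - 1 : ℕ) : B) * liftB c P (fun g => gradB P g (i, a)) f := by
    rw [liftB, liftB, h2 f hf, Finset.sum_congr rfl fun κ _ => by rw [h2 _ (hc κ)], mul_sub,
      Finset.mul_sum]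
    congr 1
    · ring
    · exact Finset.sum_congr rfl fun _ _ => by ring
  rw [liftB_grad, mul_zero] at h3
  rw [← h3, h1]
  exact Finset.sum_congr rfl fun _ _ => mul_comm _ _

variable {K : Type} [Field K] [Algebra ℂ K]

/-- Non-degeneracy at one configuration gives non-degeneracy at the generic configuration. -/
lemma bj_generic {d : ℕ} (hd : 2 ≤ d) (φ : MvPolynomial (ι × σ) ℂ →ₐ[ℂ] K)
    (hφ : Function.Injective φ) {p : ι → σ → ℂ} {i : ι} (hs : Function.Surjective (gmap d p))
    (hBJ : ∀ v : σ → ℂ, (∀ f : Sf σ d, gmap d p f = 0 → hess (p i) f.1 *ᵥ v = 0) →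
      ∃ s : ℂ, v = s • p i) :
    ∃ c : ι × σ → MvPolynomial σ ℂ, (∀ κ, (c κ).IsHomogeneous d) ∧
      (matB c fun i j => φ (X (i, j))).det ≠ 0 ∧
      ∀ v : σ → K, (∀ f : MvPolynomial σ ℂ, f.IsHomogeneous d →
        ∀ a, ∑ b, hessB c (fun i j => φ (X (i, j))) i f a b * v b = 0) →
        ∃ s : K, ∀ a, v a = s * φ (X (i, a)) := by
  rcases isEmpty_or_nonempty σ with hσ | hσ
  · refine ⟨0, fun κ => isHomogeneous_zero _ _ _, ?_, fun v _ => ⟨0, fun a => isEmptyElim a⟩⟩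
    rw [Matrix.det_isEmpty]
    exact one_ne_zero
  choose c hc using fun κ : ι × σ => hs (Pi.single κ 1)
  let P0 : ι → σ → MvPolynomial (ι × σ) ℂ := fun i j => X (i, j)
  let ev : MvPolynomial (ι × σ) ℂ →ₐ[ℂ] ℂ := aeval fun x => p x.1 x.2
  have hev : (fun i j => ev (P0 i j)) = p := by
    funext i j; simp [ev, P0]
  have hg : ∀ f : Sf σ d, gradB p f.1 = gmap d p f := by
    intro f; funext κ
    rw [gmap_apply, gradB, aeval_eq_eval]
  have hm : matB (fun κ => (c κ).1) p = 1 := by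
    ext κ κ'
    rw [matB, hg, hc, Matrix.one_apply, Pi.single_apply]
  refine ⟨fun κ => (c κ).1, fun κ => (c κ).2, ?_, ?_⟩
  · have h1 := detB_map (fun κ => (c κ).1) P0 φ
    have h2 := detB_map (fun κ => (c κ).1) P0 ev
    rw [hev, hm, Matrix.det_one] at h2
    have h3 : φ (matB (fun κ => (c κ).1) P0).det ≠ 0 := by
      rw [Ne, map_eq_zero_iff φ hφ]
      intro h0
      rw [h0, map_zero] at h2
      exact zero_ne_one h2
    rwa [h1] at h3
  · have hpi : p i ≠ 0 := by
      intro h0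
      obtain ⟨j⟩ := hσ
      have h1 := congrFun (hc (i, j)) (i, j)
      rw [gmap_apply, h0] at h1
      have h2 := euler ((c (i, j)).2.pderiv (i := j)) (0 : σ → ℂ)
      rw [h1] at h2
      have h3 : ((d - 1 : ℕ) : ℂ) ≠ 0 := Nat.cast_ne_zero.2 (by omega)
      simp at h2
      exact h3 h2.symm
    obtain ⟨j0, hj0⟩ := Function.ne_iff.1 hpi
    rw [Pi.zero_apply] at hj0
    let E := LinearMap.ker (gmap d p)
    let Φ : (ℂ × (σ → E)) →ₗ[ℂ] (σ → ℂ) :=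
      { toFun := fun z b => z.1 * (if b = j0 then 1 else 0) + ∑ a, hess (p i) (z.2 a).1.1 a b
        map_add' := fun z z' => by
          funext b
          have : ∀ a, hess (p i) (z.2 a + z'.2 a).1.1 a b =
              hess (p i) (z.2 a).1.1 a b + hess (p i) (z'.2 a).1.1 a b := fun a => by
            simp [hess_apply]
          simp only [Prod.fst_add, Prod.snd_add, Pi.add_apply, this, Finset.sum_add_distrib]
          ring
        map_smul' := fun t z => by
          funext b
          have : ∀ a, hess (p i) (t • z.2 a).1.1 a b = t * hess (p i) (z.2 a).1.1 a b := fun a => by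
            simp [hess_apply]
          simp only [Prod.smul_fst, Prod.smul_snd, Pi.smul_apply, this, smul_eq_mul,
            RingHom.id_apply, mul_add, Finset.mul_sum, mul_assoc] }
    have hΦ : ∀ z b, Φ z b = z.1 * (if b = j0 then 1 else 0) + ∑ a, hess (p i) (z.2 a).1.1 a b :=
      fun _ _ => rfl
    have hΦs : Function.Surjective Φ := by
      refine surj_of_dot (σ := σ) (E := ℂ × (σ → E)) Φ fun v hv => ?_
      have h1 : v j0 = 0 := by
        have := hv (1, 0)
        simpa [dotProduct, hΦ, hess_apply] using this
      obtain ⟨s, hs⟩ := hBJ v fun f hf => by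
        funext a
        obtain ⟨f', hf'⟩ : ∃ f' : E, f'.1 = f := ⟨⟨f, LinearMap.mem_ker.2 hf⟩, rfl⟩
        have := hv (0, Pi.single a f')
        rw [dotProduct] at this
        rw [Pi.zero_apply, Matrix.mulVec, dotProduct, ← this]
        refine Finset.sum_congr rfl fun b _ => ?_
        rw [hΦ, Finset.sum_eq_single a]
        · simp [hf']
        · intro a' _ ha'
          have h0 : (Pi.single a f' : σ → E) a' = 0 := by simp [ha']
          change hess (p i) ((Pi.single a f' : σ → E) a').1.1 a' b = 0
          rw [h0]
          simp [hess_apply]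
        · simp
      rw [hs, Pi.smul_apply, smul_eq_mul] at h1
      rw [hs, (mul_eq_zero.1 h1).resolve_right hj0, zero_smul]
    choose z hz using fun s : σ => hΦs (Pi.single s 1)
    have hval : ∀ (f : E) a b, hessB (fun κ => (c κ).1) p i f.1.1 a b = hess (p i) f.1.1 a b := by
      intro f a b
      have h1 : corrB (fun κ => (c κ).1) p f.1.1 = 0 := by
        rw [corrB, hg, LinearMap.mem_ker.1 f.2, Matrix.mulVec_zero]
      rw [hessB, liftB, hm, Matrix.det_one, h1, one_mul]
      simp [hess_apply, aeval_eq_eval]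
    have hnat : ∀ {B : Type} [CommRing B] [Algebra ℂ B] (ψ : MvPolynomial (ι × σ) ℂ →ₐ[ℂ] B)
        (f : MvPolynomial σ ℂ) a b, ψ (hessB (fun κ => (c κ).1) P0 i f a b) =
          hessB (fun κ => (c κ).1) (fun i j => ψ (P0 i j)) i f a b := by
      intro B _ _ ψ f a b
      rw [hessB, liftB_map, hessB]
      simp only [← comp_aeval_apply]
    let M : Matrix σ σ (MvPolynomial (ι × σ) ℂ) := fun s b =>
      C (z s).1 * (if b = j0 then 1 else 0) + ∑ a, hessB (fun κ => (c κ).1) P0 i ((z s).2 a).1.1 a b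
    have hM : (ev : MvPolynomial (ι × σ) ℂ →+* ℂ).mapMatrix M = 1 := by
      ext s b
      have h1 : ev (M s b) = Φ (z s) b := by
        simp only [M, map_add, map_mul, map_sum, hnat, hev, hval, hΦ]
        congr 2
        · simp [ev]
        · split_ifs <;> simp
      rw [RingHom.mapMatrix_apply, Matrix.map_apply]
      refine h1.trans ?_
      rw [hz, Matrix.one_apply, Pi.single_apply]
      simp [eq_comm]
    have hMd : M.det ≠ 0 := by
      intro h0
      have := RingHom.map_det (ev : MvPolynomial (ι × σ) ℂ →+* ℂ) M
      rw [hM, h0, map_zero, Matrix.det_one] at this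
      exact zero_ne_one this
    have hPj : φ (X (i, j0)) ≠ 0 := by
      rw [Ne, map_eq_zero_iff φ hφ]
      exact X_ne_zero _
    intro v hv
    refine ⟨v j0 / φ (X (i, j0)), fun b => ?_⟩
    let v' : σ → K := fun b => v b - v j0 / φ (X (i, j0)) * φ (X (i, b))
    have hv' : (φ : MvPolynomial (ι × σ) ℂ →+* K).mapMatrix M *ᵥ v' = 0 := by
      funext s
      have hv0 : v' j0 = 0 := by simp [v', hPj]
      have hker : ∀ a (f : MvPolynomial σ ℂ), f.IsHomogeneous d →
          ∑ b, hessB (fun κ => (c κ).1) (fun i j => φ (P0 i j)) i f a b * v' b = 0 := by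
        intro a f hf
        simp only [v', mul_sub, Finset.sum_sub_distrib]
        rw [hv f hf a, zero_sub, neg_eq_zero]
        rw [Finset.sum_congr rfl fun b _ => mul_left_comm _ _ _, ← Finset.mul_sum]
        rw [hessB_self (fun κ => (c κ).2) hf i a, mul_zero]
      rw [Matrix.mulVec, dotProduct, Pi.zero_apply]
      have : ∀ b, (φ : MvPolynomial (ι × σ) ℂ →+* K).mapMatrix M s b * v' b =
          φ (C (z s).1) * ((if b = j0 then 1 else 0) * v' b) +
          ∑ a, hessB (fun κ => (c κ).1) (fun i j => φ (P0 i j)) i ((z s).2 a).1.1 a b * v' b := by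
        intro b
        have : φ (M s b) = φ (C (z s).1) * (if b = j0 then 1 else 0) +
          ∑ a, hessB (fun κ => (c κ).1) (fun i j => φ (P0 i j)) i ((z s).2 a).1.1 a b := by
          simp only [M, map_add, map_mul, map_sum, hnat]
          congr 2
          split_ifs <;> simp
        rw [RingHom.mapMatrix_apply, Matrix.map_apply]
        refine (congrArg (· * v' b) this).trans ?_
        simp only [add_mul, Finset.sum_mul, mul_assoc]
      rw [Finset.sum_congr rfl fun b _ => this b, Finset.sum_add_distrib, Finset.sum_comm,
        Finset.sum_eq_zero (fun a _ => hker a _ ((z s).2 a).1.2), ← Finset.mul_sum]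
      simp [hv0]
    have hdet : ((φ : MvPolynomial (ι × σ) ℂ →+* K).mapMatrix M).det ≠ 0 := by
      rw [← RingHom.map_det]
      exact (map_ne_zero_iff φ hφ).2 hMd
    have h0 := congrFun (Matrix.eq_zero_of_mulVec_eq_zero hdet hv') b
    exact sub_eq_zero.1 h0

end Final

/-! ### Descent to complex points -/

section Generic
attribute [local instance] MvPolynomial.algebraMvPolynomial
variable {σ ι : Type} [Fintype σ] [Fintype ι] [DecidableEq ι] [DecidableEq σ]

/-- Over the complex numbers, the operator `liftB` evaluates an honest singular form. -/
lemma liftB_special {c : ι × σ → MvPolynomial σ ℂ} {d : ℕ} (hc : ∀ κ, (c κ).IsHomogeneous d)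
    {f : MvPolynomial σ ℂ} (hf : f.IsHomogeneous d) {p : ι → σ → ℂ} {q : σ → ℂ}
    (hq : ∀ f : MvPolynomial σ ℂ, f.IsHomogeneous d → (∀ i, grad (p i) f = 0) → grad q f = 0)
    (b : σ) : liftB c p (fun g => aeval q (pderiv b g)) f = 0 := by
  let G : MvPolynomial σ ℂ := (matB c p).det • f - ∑ κ, corrB c p f κ • c κ
  have hG : G.IsHomogeneous d := (Sf σ d).sub_mem ((Sf σ d).smul_mem _ hf)
    ((Sf σ d).sum_mem fun κ _ => (Sf σ d).smul_mem _ (hc κ))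
  have key : ∀ (x : σ → ℂ) b, eval x (pderiv b G) = liftB c p (fun g => aeval x (pderiv b g)) f := by
    intro x b
    simp [G, liftB, aeval_eq_eval, smul_eval]
  have h0 := hq G hG fun i => by
    funext b
    rw [grad_apply, key]
    exact liftB_grad c p f (i, b)
  have := congrFun h0 b
  rwa [grad_apply, key] at this

/-- If every product over `i` of minors, one for each `i`, vanishes, then all minors vanish for one `i`. -/
lemma exists_index {K : Type} [Field K] {P : ι → σ → K} {q : σ → K}
    (h : ∀ a b : ι → σ, ∏ i, (q (a i) * P i (b i) - q (b i) * P i (a i)) = 0) :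
    ∃ i, ∀ a b, q a * P i b - q b * P i a = 0 := by
  by_contra! hn
  choose a b hab using hn
  exact Finset.prod_ne_zero_iff.2 (fun i _ => hab i) (h a b)

/-- The joint Hessian condition at every point implies that, for generic points, every common singular
point is one of them. -/
theorem generic_of_BJ {d : ℕ} (hd : 2 ≤ d) [Nonempty ι] [Nonempty σ] (hBJ : ∀ i : ι, BJ σ d i) :
    ∃ F : MvPolynomial (ι × σ) ℂ, F ≠ 0 ∧ ∀ t : ι × σ → ℂ, eval t F ≠ 0 → ∀ q : σ → ℂ,
      (∀ f : MvPolynomial σ ℂ, f.IsHomogeneous d → (∀ i, grad (fun j => t (i, j)) f = 0) →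
        grad q f = 0) → ∃ i, ∃ s : ℂ, q = s • fun j => t (i, j) := by
  let R := MvPolynomial (ι × σ) ℂ
  let k := FractionRing R
  let K := AlgebraicClosure k
  let φ : R →ₐ[ℂ] K := IsScalarTower.toAlgHom ℂ R K
  have hφ : Function.Injective φ := by
    change Function.Injective (algebraMap R K)
    rw [IsScalarTower.algebraMap_eq R k K]
    exact (algebraMap k K).injective.comp (IsFractionRing.injective R k)
  have : Algebra.FormallyEtale R k := Algebra.FormallyEtale.of_isLocalization (nonZeroDivisors R)
  have : Algebra.FormallyEtale k K := Algebra.FormallyEtale.of_isSeparable k K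
  have : Algebra.FormallyEtale R K := Algebra.FormallyEtale.comp R k K
  -- The derivation of `K` extending the partial derivative by one coordinate of the points.
  have hD : ∀ (i : ι) (a : σ), ∃ D : Derivation ℂ K K, ∀ l b,
      D (φ (X (l, b))) = if l = i ∧ b = a then 1 else 0 := by
    intro i a
    obtain ⟨D, hD⟩ := exists_derivation (R := R) (K := K) (pderiv (i, a))
    refine ⟨D, fun l b => ?_⟩
    have h1 := hD (X (l, b))
    rw [pderiv_X] at h1
    refine h1.trans ?_
    rw [Pi.single_apply]
    by_cases h : l = i ∧ b = a
    · rw [if_pos h, h.1, h.2]; simp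
    · rw [if_neg h, if_neg (fun h' => h ⟨(Prod.ext_iff.1 h').1, (Prod.ext_iff.1 h').2⟩), map_zero]
  choose D hD using hD
  have hc : ∀ i, ∃ c : ι × σ → MvPolynomial σ ℂ, (∀ κ, (c κ).IsHomogeneous d) ∧
      (matB c fun i j => φ (X (i, j))).det ≠ 0 ∧
      ∀ v : σ → K, (∀ f : MvPolynomial σ ℂ, f.IsHomogeneous d →
        ∀ a, ∑ b, hessB c (fun i j => φ (X (i, j))) i f a b * v b = 0) →
        ∃ s : K, ∀ a, v a = s * φ (X (i, a)) := fun i => by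
    obtain ⟨p, hs, hp⟩ := hBJ i
    exact bj_generic hd φ hφ hs hp
  choose c hch hcd hcB using hc
  let S := MvPolynomial σ R
  let PS : ι → σ → S := fun i j => C (X (i, j))
  -- The gradients at a variable point of forms singular at the generic points.
  let gen : Set S := {g | ∃ i f b, f.IsHomogeneous d ∧
    g = liftB (c i) PS (fun g => aeval X (pderiv b g)) f}
  let I : Ideal S := Ideal.span gen
  have hspec : ∀ {B : Type} [CommRing B] [Algebra ℂ B] (ψ : S →ₐ[ℂ] B) i f b,
      ψ (liftB (c i) PS (fun g => aeval X (pderiv b g)) f) =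
        liftB (c i) (fun i j => ψ (PS i j)) (fun g => aeval (fun j => ψ (X j)) (pderiv b g)) f := by
    intro B _ _ ψ i f b
    rw [liftB_map]
    simp only [← comp_aeval_apply]
  -- For each choice of indices, this product of minors vanishes if the variable point is
  -- proportional to one of the points.
  let h : (ι → σ) → (ι → σ) → S := fun a b =>
    ∏ i, (X (a i) * PS i (b i) - X (b i) * PS i (a i))
  -- Nullstellensatz over the field of fractions, followed by clearing denominators.
  have hmem : ∀ a b, ∃ s : R, s ≠ 0 ∧ ∃ N : ℕ, h a b ^ N * C s ∈ I := by
    intro a b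
    have hrad : algebraMap S (MvPolynomial σ k) (h a b) ∈
        (I.map (algebraMap S (MvPolynomial σ k))).radical := by
      rw [← vanishingIdeal_zeroLocus_eq_radical (K := K), mem_vanishingIdeal_iff]
      intro q hq
      let ψ : S →ₐ[ℂ] K := aevalTower φ q
      have hψ : ∀ g : S, aeval q (algebraMap S (MvPolynomial σ k) g) = ψ g := by
        intro g
        rw [algebraMap_def, aeval_map_algebraMap]
        rfl
      rw [hψ]
      have hψP : (fun i j => ψ (PS i j)) = fun i j => φ (X (i, j)) := by
        funext i j
        exact aevalTower_C φ q _
      have hψX : (fun j => ψ (X j)) = q := by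
        funext j
        exact aevalTower_X φ q j
      obtain ⟨l, hl⟩ := core (σ := σ) (ι := ι) (K := K) (c := c) (P := fun i j => φ (X (i, j)))
        (d := d) (by omega) hch hcd D hD hcB (q := q) (fun i f hf b => by
          have h1 := hspec ψ i f b
          rw [hψP, hψX, ← hψ] at h1
          rw [← h1]
          exact hq _ (Ideal.mem_map_of_mem _ (Ideal.subset_span ⟨i, f, b, hf, rfl⟩)))
      rw [map_prod]
      refine Finset.prod_eq_zero (Finset.mem_univ l) ?_
      have h1 := hl (a l) (b l)
      rw [map_sub, map_mul, map_mul]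
      have h2 : ∀ j, ψ (X j) = q j := fun j => congrFun hψX j
      have h3 : ∀ i j, ψ (PS i j) = φ (X (i, j)) := fun i j => congrFun (congrFun hψP i) j
      rw [h2, h2, h3, h3]
      exact h1
    obtain ⟨N, hN⟩ := hrad
    rw [← map_pow, IsLocalization.mem_map_algebraMap_iff
      ((nonZeroDivisors R).map (C : R →+* S)) (MvPolynomial σ k)] at hN
    obtain ⟨⟨x, ⟨y, s, hs, rfl⟩⟩, hx⟩ := hN
    refine ⟨s, nonZeroDivisors.ne_zero hs, N, ?_⟩
    rw [← map_mul] at hx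
    have hinj : Function.Injective (algebraMap S (MvPolynomial σ k)) := by
      rw [algebraMap_def]
      exact map_injective _ (IsFractionRing.injective R k)
    rw [hinj hx]
    exact x.2
  choose s hs N hN using hmem
  obtain ⟨j0⟩ := ‹Nonempty σ›
  -- The factor `X (i, j0)` keeps the `i`-th point from being zero, so that vanishing minors do mean
  -- that `q` is a multiple of it.
  refine ⟨(∏ a, ∏ b, s a b) * ∏ i, X (i, j0), mul_ne_zero (Finset.prod_ne_zero_iff.2 fun a _ =>
    Finset.prod_ne_zero_iff.2 fun b _ => hs a b) (Finset.prod_ne_zero_iff.2 fun i _ => X_ne_zero _),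
    fun t ht q hq => ?_⟩
  rw [map_mul] at ht
  have ht1 := left_ne_zero_of_mul ht
  have ht2 := right_ne_zero_of_mul ht
  simp only [map_prod] at ht1 ht2
  have ht3 : ∀ a b, eval t (s a b) ≠ 0 := fun a b =>
    Finset.prod_ne_zero_iff.1 (Finset.prod_ne_zero_iff.1 ht1 a (Finset.mem_univ _)) b
      (Finset.mem_univ _)
  have ht4 : ∀ i, t (i, j0) ≠ 0 := fun i => by
    simpa using Finset.prod_ne_zero_iff.1 ht2 i (Finset.mem_univ _)
  let ψ : S →ₐ[ℂ] ℂ := aevalTower (aeval t : R →ₐ[ℂ] ℂ) q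
  have hψC : ∀ x : R, ψ (C x) = eval t x := fun x => by
    rw [aevalTower_C, aeval_eq_eval]
  have hψP : (fun i j => ψ (PS i j)) = fun i j => t (i, j) := by
    funext i j
    refine (hψC _).trans ?_
    simp
  have hψX : (fun j => ψ (X j)) = q := by
    funext j
    exact aevalTower_X _ q j
  have hI : ∀ g ∈ I, ψ g = 0 := by
    intro g hg
    have : I ≤ RingHom.ker ψ := by
      rw [Ideal.span_le]
      rintro g ⟨i, f, b, hf, rfl⟩
      change ψ _ = 0
      rw [hspec, hψP, hψX]
      exact liftB_special (hch i) hf hq b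
    exact this hg
  obtain ⟨i, hi⟩ := exists_index (P := fun i j => t (i, j)) (q := q) fun a b => by
    have h1 := hI _ (hN a b)
    rw [map_mul, hψC, map_pow] at h1
    have h2 := eq_zero_of_pow_eq_zero ((mul_eq_zero.1 h1).resolve_right (ht3 a b))
    rw [map_prod] at h2
    rw [← h2]
    refine Finset.prod_congr rfl fun i _ => ?_
    have h2 : ∀ j, ψ (X j) = q j := fun j => congrFun hψX j
    have h3 : ∀ i j, ψ (PS i j) = t (i, j) := fun i j => congrFun (congrFun hψP i) j
    rw [map_sub, map_mul, map_mul, h2, h2, h3, h3]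
  refine ⟨i, q j0 / t (i, j0), funext fun a => ?_⟩
  have := hi a j0
  simp only [Pi.smul_apply, smul_eq_mul]
  have h4 := ht4 i
  field_simp
  linear_combination this

end Generic

/-! ### Corank one implies the joint Hessian condition -/

section BJBS
variable {σ : Type} [Fintype σ]

lemma eq_smul_of_corank1 {f : MvPolynomial σ ℂ} {p v : σ → ℂ} (h : Corank1 f p)
    (hp : hess p f *ᵥ p = 0) (hp0 : p ≠ 0) (hv : hess p f *ᵥ v = 0) : ∃ s : ℂ, v = s • p := by
  obtain ⟨w, hw⟩ := h
  have hwp : w ⬝ᵥ p ≠ 0 := fun h0 => hp0 (hw p hp h0)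
  refine ⟨(w ⬝ᵥ v) / (w ⬝ᵥ p), ?_⟩
  have := hw (v - ((w ⬝ᵥ v) / (w ⬝ᵥ p)) • p) (by
    rw [Matrix.mulVec_sub, Matrix.mulVec_smul, hv, hp]; simp) (by
    rw [dotProduct_sub, dotProduct_smul, smul_eq_mul]; field_simp; simp)
  exact sub_eq_zero.1 this

/-- A point at which some gradient condition is nontrivial is not the origin. -/
lemma ne_zero_of_surj [Nonempty σ] {ι : Type} {d : ℕ} {p : ι → σ → ℂ}
    (hs : Function.Surjective (gmap (d + 2) p)) (i : ι) : p i ≠ 0 := by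
  classical
  intro h0
  obtain ⟨j⟩ := ‹Nonempty σ›
  obtain ⟨f, hf⟩ := hs fun _ => 1
  have h1 := congrFun hf (i, j)
  rw [gmap_apply, h0] at h1
  have hfh : (pderiv j f.1).IsHomogeneous (d + 1) := by
    simpa using (((mem_homogeneousSubmodule _ _).1 f.2).pderiv (i := j))
  have h2 : eval (0 : σ → ℂ) (pderiv j f.1) = 0 := by
    rw [MvPolynomial.eval_zero, constantCoeff_eq]
    exact hfh.coeff_eq_zero (by simp)
  rw [h2] at h1
  simp at h1

/-- The kernel of a Hessian of corank one is the line of the point itself, by the Euler relation. -/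
lemma BS.bj [Nonempty σ] {ι : Type} {d : ℕ} (h : BS σ (d + 2) ι) (i : ι) : BJ σ (d + 2) i := by
  obtain ⟨p, hp, f, hf, hc⟩ := h.at i
  refine ⟨p, hp, fun v hv => ?_⟩
  refine eq_smul_of_corank1 hc ?_ (ne_zero_of_surj hp i) (hv f hf)
  have h1 := hess_mulVec_self (d := d + 1) ((mem_homogeneousSubmodule _ _).1 f.2) (p i)
  rw [h1, gmap_eq_zero.1 hf i, smul_zero]

/-- Dropping points and renumbering preserves the joint Hessian condition. -/
lemma BJ.of_card {ι κ : Type} [Fintype ι] [Fintype κ] {d : ℕ} {i : ι} (h : BJ σ d i) (k0 : κ)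
    (hc : Fintype.card κ ≤ Fintype.card ι) : BJ σ d k0 := by
  classical
  obtain ⟨p, hp, hv⟩ := h
  obtain ⟨j⟩ := Function.Embedding.nonempty_of_card_le hc
  let j' : κ → ι := Equiv.swap (j k0) i ∘ j
  have hj' : Function.Injective j' := (Equiv.injective _).comp j.2
  have hk : j' k0 = i := by simp [j']
  refine ⟨p ∘ j', fun c => ?_, fun v h => ?_⟩
  · obtain ⟨f, hf⟩ := hp (fun a => Function.extend j' (fun k => c (k, a.2)) 0 a.1)
    refine ⟨f, funext fun a => ?_⟩
    have := congrFun hf (j' a.1, a.2)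
    rw [gmap_apply] at this ⊢
    simpa [hj'.extend_apply] using this
  · simp only [Function.comp_apply, hk] at h ⊢
    refine hv v fun f hf => h f ?_
    rw [gmap_eq_zero] at hf ⊢
    exact fun k => hf _

end BJBS

/-! ### Elimination modulo a prime -/

section Elim

/-- The first row whose leading digit (in base `B`) is nonzero modulo `p`, with the other rows. -/
def findRow (B p : ℕ) : List ℕ → Option (ℕ × List ℕ)
  | [] => none
  | r :: rs => bif Nat.beq ((r % B) % p) 0 then
      (match findRow B p rs with
       | none => none
       | some (q, rest) => some (q, r :: rest))
    else some (r, rs)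

/-- Clear the leading digit of `r` with the pivot row `q`, then drop that digit. -/
def redRow (B p q inv r : ℕ) : ℕ := (r + (p - ((r % B) * inv) % p) * q) / B

/-- Gaussian elimination modulo `p` on rows packed as numbers in base `B`; `c` is the number of
columns and `β` bounds the digits. It succeeds only if the rows are independent modulo `p`. -/
def elim (B p : ℕ) : ℕ → ℕ → List ℕ → Bool
  | _, _, [] => true
  | 0, _, _ :: _ => false
  | c + 1, β, r :: rs => bif Nat.ble (β * (p + 1) + 1) B then
      match findRow B p (r :: rs) with
      | none => elim B p c β ((r :: rs).map (· / B))
      | some (q, rest) =>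
        bif Nat.beq (((q % B) * (((q % B) % p) ^ (p - 2) % p)) % p) 1 then
          elim B p c (β * (p + 1)) (rest.map (redRow B p q (((q % B) % p) ^ (p - 2) % p)))
        else false
    else false

/-- The number with base `B` digits `l`. -/
def pack (B : ℕ) : List ℕ → ℕ
  | [] => 0
  | a :: l => a + B * pack B l

/-- The linear form with coefficients `l`, evaluated modulo `p`. -/
def dotl (p : ℕ) : List ℕ → (ℕ → ZMod p) → ZMod p
  | [], _ => 0
  | a :: l, x => a * x 0 + dotl p l fun i => x (i + 1)

lemma findRow_none {B p : ℕ} : ∀ {rs : List ℕ}, findRow B p rs = none → ∀ r ∈ rs, (r % B) % p = 0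
  | [], _ => by simp
  | r :: rs, h => by
    rw [findRow] at h
    by_cases h0 : (r % B) % p = 0
    · rw [h0] at h
      simp only [Nat.beq_refl, cond_true] at h
      have h1 : findRow B p rs = none := by
        cases hf : findRow B p rs with
        | none => rfl
        | some a => rw [hf] at h; simp at h
      intro s hs
      rcases List.mem_cons.1 hs with rfl | hs
      · exact h0
      · exact findRow_none h1 s hs
    · have : Nat.beq ((r % B) % p) 0 = false := by
        rw [← Bool.not_eq_true]; exact fun hh => h0 (Nat.eq_of_beq_eq_true hh)
      rw [this] at h
      simp at h

lemma findRow_some {B p : ℕ} : ∀ {rs : List ℕ} {q : ℕ} {rest : List ℕ},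
    findRow B p rs = some (q, rest) → ∃ l₁ l₂, rs = l₁ ++ q :: l₂ ∧ rest = l₁ ++ l₂
  | [], _, _, h => by simp [findRow] at h
  | r :: rs, q, rest, h => by
    rw [findRow] at h
    cases hb : Nat.beq ((r % B) % p) 0
    · rw [hb] at h
      simp only [cond_false, Option.some.injEq, Prod.mk.injEq] at h
      exact ⟨[], rs, by simp [h.1], by simp [h.2]⟩
    · rw [hb] at h
      simp only [cond_true] at h
      cases hf : findRow B p rs with
      | none => rw [hf] at h; simp at h
      | some a =>
        obtain ⟨q', rest'⟩ := a
        rw [hf] at h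
        simp only [Option.some.injEq, Prod.mk.injEq] at h
        obtain ⟨rfl, rfl⟩ := h
        obtain ⟨l₁, l₂, h1, h2⟩ := findRow_some hf
        exact ⟨r :: l₁, l₂, by simp [h1], by simp [h2]⟩

lemma pack_add_mul (B m : ℕ) : ∀ l q : List ℕ, l.length = q.length →
    pack B l + m * pack B q = pack B (List.zipWith (fun a b => a + m * b) l q)
  | [], [], _ => by simp [pack]
  | a :: l, b :: q, h => by
    simp only [pack, List.zipWith_cons_cons]
    rw [← pack_add_mul B m l q (by simpa using h)]
    ring
  | [], _ :: _, h => by simp at h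
  | _ :: _, [], h => by simp at h

lemma dotl_add_mul (p m : ℕ) : ∀ (l q : List ℕ) (x : ℕ → ZMod p), l.length = q.length →
    dotl p (List.zipWith (fun a b => a + m * b) l q) x = dotl p l x + m * dotl p q x
  | [], [], _, _ => by simp [dotl]
  | a :: l, b :: q, x, h => by
    simp only [dotl, List.zipWith_cons_cons]
    rw [dotl_add_mul p m l q _ (by simpa using h)]
    push_cast
    ring
  | [], _ :: _, _, h => by simp at h
  | _ :: _, [], _, h => by simp at h

lemma zipWith_le (m β p : ℕ) (hm : m ≤ p) : ∀ l q : List ℕ, (∀ a ∈ l, a ≤ β) → (∀ a ∈ q, a ≤ β) →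
    ∀ a ∈ List.zipWith (fun a b => a + m * b) l q, a ≤ β * (p + 1)
  | [], _, _, _ => by simp
  | _ :: _, [], _, _ => by simp
  | a :: l, b :: q, h1, h2 => by
    intro c hc
    rw [List.zipWith_cons_cons, List.mem_cons] at hc
    rcases hc with rfl | hc
    · have := h1 a (by simp)
      have := h2 b (by simp)
      nlinarith [Nat.mul_le_mul hm this]
    · exact zipWith_le m β p hm l q (fun a ha => h1 a (by simp [ha]))
        (fun a ha => h2 a (by simp [ha])) c hc

/-- Successful elimination: the linear system with these rows is solvable modulo `p` for every
right-hand side. -/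
theorem elim_sound {B p : ℕ} (hp : 0 < p) : ∀ (c β : ℕ) (rs : List ℕ)
    (ls : List (List ℕ × ZMod p)), rs = ls.map (fun a => pack B a.1) →
    (∀ a ∈ ls, a.1.length = c ∧ ∀ d ∈ a.1, d ≤ β) → elim B p c β rs = true →
    ∃ x : ℕ → ZMod p, ∀ a ∈ ls, dotl p a.1 x = a.2
  | _, _, [], ls, hls, _, _ => by
    have : ls = [] := by simpa using hls.symm
    subst this
    exact ⟨0, by simp⟩
  | 0, _, _ :: _, _, _, _, h => by simp [elim] at h
  | c + 1, β, r :: rs, ls, hls, hlen, h => by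
    rw [elim] at h
    cases hb : Nat.ble (β * (p + 1) + 1) B
    · rw [hb] at h; simp at h
    rw [hb, cond_true] at h
    have hB : β * (p + 1) < B := Nat.le_of_ble_eq_true hb
    have hβB : β < B := lt_of_le_of_lt (by nlinarith) hB
    have hB0 : 0 < B := by omega
    -- heads and tails of the rows
    have hsplit : ∀ a ∈ ls, ∃ d l, a.1 = d :: l ∧ l.length = c ∧ d ≤ β ∧ ∀ e ∈ l, e ≤ β := by
      intro a ha
      obtain ⟨h1, h2⟩ := hlen a ha
      cases hl : a.1 with
      | nil => rw [hl] at h1; simp at h1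
      | cons d l =>
        rw [hl] at h1 h2
        exact ⟨d, l, rfl, by simpa using h1, h2 d (by simp), fun e he => h2 e (by simp [he])⟩
    have hmod : ∀ d l, d ≤ β → pack B (d :: l) % B = d := by
      intro d l hd
      rw [pack, Nat.add_mul_mod_self_left, Nat.mod_eq_of_lt (by omega)]
    cases hf : findRow B p (r :: rs) with
    | none =>
      rw [hf] at h
      simp only at h
      have h0 := findRow_none hf
      obtain ⟨x, hx⟩ := elim_sound hp c β ((r :: rs).map (· / B))
        (ls.map fun a => (a.1.tail, a.2)) (by
          rw [hls, List.map_map, List.map_map]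
          refine List.map_congr_left fun a ha => ?_
          obtain ⟨d, l, h1, h2, h3, h4⟩ := hsplit a ha
          simp only [Function.comp_apply, h1, List.tail_cons, pack]
          rw [Nat.add_mul_div_left _ _ hB0, Nat.div_eq_of_lt (by omega), zero_add]) (by
          intro a' ha'
          obtain ⟨a, ha, rfl⟩ := List.mem_map.1 ha'
          obtain ⟨d, l, h1, h2, h3, h4⟩ := hsplit a ha
          simp only [h1, List.tail_cons]
          exact ⟨h2, h4⟩) h
      refine ⟨fun i => Nat.casesOn i 0 x, fun a ha => ?_⟩
      obtain ⟨d, l, h1, h2, h3, h4⟩ := hsplit a ha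
      have := hx _ (List.mem_map.2 ⟨a, ha, rfl⟩)
      simp only [h1, List.tail_cons] at this
      rw [h1, dotl]
      simpa using this
    | some qr =>
      obtain ⟨q, rest⟩ := qr
      rw [hf] at h
      simp only at h
      set inv := ((q % B) % p) ^ (p - 2) % p with hinv
      cases hb2 : Nat.beq (((q % B) * inv) % p) 1
      · rw [hb2] at h; simp at h
      rw [hb2, cond_true] at h
      have hone : ((q % B) * inv) % p = 1 := Nat.eq_of_beq_eq_true hb2
      obtain ⟨l₁, l₂, hrs, hrest⟩ := findRow_some hf
      rw [hls] at hrs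
      obtain ⟨m₁, m', hm, hm1, hm'⟩ := List.map_eq_append_iff.1 hrs
      obtain ⟨aq, m₂, hm2, haq, hm3⟩ := List.map_eq_cons_iff.1 hm'
      have hls2 : ls = m₁ ++ aq :: m₂ := by rw [hm, hm2]
      have hrest2 : rest = (m₁ ++ m₂).map (fun a => pack B a.1) := by
        rw [hrest, List.map_append, hm1, hm3]
      have haq_mem : aq ∈ ls := by rw [hls2]; simp
      obtain ⟨q0, ql, hq1, hq2, hq3, hq4⟩ := hsplit aq haq_mem
      have hqB : q % B = q0 := by rw [← haq, hq1, hmod _ _ hq3]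
      rw [hqB] at hone
      have hone' : ((q0 : ZMod p) * inv) = 1 := by
        have h1 := congrArg (Nat.cast (R := ZMod p)) hone
        rw [ZMod.natCast_mod] at h1
        simpa using h1
      have hmem : ∀ a ∈ m₁ ++ m₂, a ∈ ls := by
        intro a ha
        rw [hls2]
        simp only [List.mem_append, List.mem_cons] at ha ⊢
        tauto
      let mm : List ℕ → ℕ := fun l => p - (l.headD 0 * inv) % p
      obtain ⟨x, hx⟩ := elim_sound hp c (β * (p + 1)) (rest.map (redRow B p q inv))
        ((m₁ ++ m₂).map fun a => (List.zipWith (fun s t => s + mm a.1 * t) a.1.tail ql,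
          a.2 + mm a.1 * aq.2)) (by
          rw [hrest2, List.map_map, List.map_map]
          refine List.map_congr_left fun a ha => ?_
          obtain ⟨d, l, h1, h2, h3, h4⟩ := hsplit a (hmem a ha)
          have hmmle : mm (d :: l) ≤ p := Nat.sub_le _ _
          simp only [Function.comp_apply, h1, List.tail_cons]
          rw [redRow, hmod _ _ h3, ← pack_add_mul _ _ _ _ (by rw [h2, hq2])]
          have hq : q = q0 + B * pack B ql := by rw [← haq, hq1, pack]
          have h5 : pack B (d :: l) + (p - d * inv % p) * q =
              (d + mm (d :: l) * q0) + B * (pack B l + mm (d :: l) * pack B ql) := by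
            rw [hq, pack]
            simp only [mm, List.headD_cons]
            ring
          rw [h5, Nat.add_mul_div_left _ _ hB0, Nat.div_eq_of_lt, zero_add]
          have := Nat.mul_le_mul hmmle hq3
          nlinarith) (by
          intro a' ha'
          obtain ⟨a, ha, rfl⟩ := List.mem_map.1 ha'
          obtain ⟨d, l, h1, h2, h3, h4⟩ := hsplit a (hmem a ha)
          simp only [h1, List.tail_cons]
          refine ⟨by simp [h2, hq2], zipWith_le _ _ _ (Nat.sub_le _ _) _ _ h4 hq4⟩) h
      refine ⟨fun i => Nat.casesOn i (inv * (aq.2 - dotl p ql x)) x, fun a ha => ?_⟩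
      have hq : dotl p (q0 :: ql) (fun i => Nat.casesOn i (inv * (aq.2 - dotl p ql x)) x)
          = aq.2 := by
        rw [dotl]
        change (q0 : ZMod p) * (inv * (aq.2 - dotl p ql x)) + dotl p ql x = aq.2
        linear_combination (aq.2 - dotl p ql x) * hone'
      rw [hls2] at ha
      by_cases haa : a ∈ m₁ ++ m₂
      · obtain ⟨d, l, h1, h2, h3, h4⟩ := hsplit a (hmem a haa)
        have h6 := hx _ (List.mem_map.2 ⟨a, haa, rfl⟩)
        simp only [h1, List.tail_cons] at h6
        rw [dotl_add_mul _ _ _ _ _ (by rw [h2, hq2])] at h6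
        have h7 : ((mm (d :: l) : ℕ) : ZMod p) = - (d * inv) := by
          simp only [mm, List.headD_cons]
          rw [Nat.cast_sub (Nat.mod_lt _ hp).le]
          simp
        rw [h7] at h6
        rw [h1, dotl]
        change (d : ZMod p) * (inv * (aq.2 - dotl p ql x)) + dotl p l x = a.2
        linear_combination h6
      · have : a = aq := by
          simp only [List.mem_append, List.mem_cons] at ha haa
          tauto
        rw [this, hq1, hq]

end Elim

/-! ### Lifting from residues -/

section Lift

/-- The rows `row r`, `r ∈ R`, define a linear system that is solvable modulo `p` for every
right-hand side. -/
def SolvMod {ρ : Type} (p : ℕ) (R : List ρ) (row : ρ → List ℕ) : Prop :=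
  ∀ b : ρ → ZMod p, ∃ x : ℕ → ZMod p, ∀ r ∈ R, dotl p (row r) x = b r

lemma SolvMod.mono {ρ : Type} {p : ℕ} {R R' : List ρ} {row : ρ → List ℕ} (h : SolvMod p R row)
    (hR : ∀ r ∈ R', r ∈ R) : SolvMod p R' row := fun b =>
  let ⟨x, hx⟩ := h b
  ⟨x, fun r hr => hx r (hR r hr)⟩

/-- Pack the residues of a row. -/
def packMod (B p : ℕ) : List ℕ → ℕ
  | [] => 0
  | a :: l => a % p + B * packMod B p l

lemma packMod_eq (B p : ℕ) : ∀ l : List ℕ, packMod B p l = pack B (l.map (· % p))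
  | [] => rfl
  | a :: l => by simp [packMod, pack, packMod_eq B p l]

lemma dotl_mod (p : ℕ) : ∀ (l : List ℕ) (x : ℕ → ZMod p), dotl p (l.map (· % p)) x = dotl p l x
  | [], _ => rfl
  | a :: l, x => by simp [dotl, dotl_mod p l]

lemma solvMod_of_elim {ρ : Type} {p B c : ℕ} (hp : 0 < p) {R : List ρ} {row : ρ → List ℕ}
    (hc : ∀ r ∈ R, (row r).length = c)
    (h : elim B p c p (R.map fun r => packMod B p (row r)) = true) : SolvMod p R row := by
  intro b
  obtain ⟨x, hx⟩ := elim_sound hp c p _ (R.map fun r => ((row r).map (· % p), b r))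
    (by simp [packMod_eq, Function.comp_def]) (by
      intro a ha
      obtain ⟨r, hr, rfl⟩ := List.mem_map.1 ha
      refine ⟨by simp [hc r hr], fun d hd => ?_⟩
      obtain ⟨e, -, rfl⟩ := List.mem_map.1 hd
      exact (Nat.mod_lt _ hp).le) h
  refine ⟨x, fun r hr => ?_⟩
  have := hx _ (List.mem_map.2 ⟨r, hr, rfl⟩)
  simpa [dotl_mod] using this

lemma dotl_map {α : Type} (p : ℕ) (g : α → ℕ) : ∀ (l : List α) (x : ℕ → ZMod p),
    dotl p (l.map g) x = ∑ j : Fin l.length, (g l[j] : ZMod p) * x j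
  | [], _ => by simp [dotl]
  | a :: l, x => by
    rw [List.map_cons, dotl, dotl_map p g l]
    simp only [List.length_cons, Fin.sum_univ_succ]
    simp

/-- An integer matrix that is onto modulo `p` has a right inverse up to an integer factor that is
`1` modulo `p`. -/
lemma exists_rightInv {ρ W : Type} [Fintype ρ] [Fintype W] [DecidableEq ρ]
    {p : ℕ} (A : Matrix ρ W ℤ)
    (h : Function.Surjective (A.map (Int.cast : ℤ → ZMod p)).mulVec) :
    ∃ (C : Matrix W ρ ℤ) (δ : ℤ), (δ : ZMod p) = 1 ∧ A * C = δ • (1 : Matrix ρ ρ ℤ) := by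
  obtain ⟨C₀, hC₀⟩ := Matrix.mulVec_surjective_iff_exists_right_inverse.1 h
  choose c hc using fun (a : W) (b : ρ) => ZMod.intCast_surjective (C₀ a b)
  let C₁ : Matrix W ρ ℤ := Matrix.of c
  have h1 : C₁.map (Int.cast : ℤ → ZMod p) = C₀ := by
    ext a b
    simp [C₁, hc]
  refine ⟨C₁ * (A * C₁).adjugate, (A * C₁).det, ?_, ?_⟩
  · have h2 : ((A * C₁).map (Int.castRingHom (ZMod p))) = 1 := by
      rw [Matrix.map_mul]
      change (A.map (Int.cast : ℤ → ZMod p)) * (C₁.map (Int.cast : ℤ → ZMod p)) = 1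
      rw [h1, hC₀]
    have h3 := (Int.castRingHom (ZMod p)).map_det (A * C₁)
    rw [RingHom.mapMatrix_apply, h2, Matrix.det_one] at h3
    simpa using h3
  · rw [← Matrix.mul_assoc, Matrix.mul_adjugate]

end Lift

section Functionals

/-- The derivative of the monomial `l` (a list of variables) with respect to variable `i`, as a
list of monomials. -/
def dl (i : ℕ) : List ℕ → List (List ℕ)
  | [] => []
  | a :: l => bif Nat.beq a i then l :: (dl i l).map (a :: ·) else (dl i l).map (a :: ·)

/-- The value of the monomial `l` at the point `P`. -/
def mval (P : List ℕ) : List ℕ → ℕ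
  | [] => 1
  | a :: l => P.getD a 0 * mval P l

/-- The value at `P` of the iterated derivative of the monomial `l` along the variables `is`. -/
def dv : List ℕ → List ℕ → List ℕ → ℕ
  | [], P, l => mval P l
  | i :: is, P, l => ((dl i l).map (dv is P)).sum

variable {σ : Type} {q : ℕ} [NeZero q] (code : σ ≃ Fin q)

/-- The variable with a given number. -/
def decv (a : ℕ) : σ := code.symm (Fin.ofNat q a)

lemma decv_code (u : σ) : decv code (code u) = u := by
  simp [decv]

lemma code_decv {a : ℕ} (ha : a < q) : (code (decv code a) : ℕ) = a := by
  simp [decv, Nat.mod_eq_of_lt ha]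

/-- The monomial described by a list of variable numbers. -/
noncomputable def mon (l : List ℕ) : MvPolynomial σ ℂ := (l.map fun a => X (decv code a)).prod

/-- The point described by a list of coordinates. -/
def ptOf (P : List ℕ) : σ → ℂ := fun u => (P.getD (code u) 0 : ℕ)

/-- The iterated derivative along the variables `is`, evaluated at `P`, as a functional. -/
noncomputable def Fnl : List ℕ → List ℕ → MvPolynomial σ ℂ →ₗ[ℂ] ℂ
  | [], P => (aeval (ptOf code P)).toLinearMap
  | i :: is, P => Fnl is P ∘ₗ (pderiv (decv code i)).toLinearMap

lemma mon_homogeneous (l : List ℕ) : (mon code l).IsHomogeneous l.length := by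
  induction l with
  | nil => simpa [mon] using isHomogeneous_one σ ℂ
  | cons a l ih =>
    have h := (isHomogeneous_X ℂ (decv code a)).mul ih
    rw [List.length_cons, add_comm l.length 1]
    simpa [mon] using h

lemma mem_dl_lt {i : ℕ} : ∀ {l : List ℕ}, (∀ a ∈ l, a < q) → ∀ m ∈ dl i l, ∀ a ∈ m, a < q
  | [], _ => by simp [dl]
  | a :: l, h => by
    intro m hm
    have ih := mem_dl_lt (i := i) (l := l) fun b hb => h b (by simp [hb])
    rw [dl] at hm
    have h1 : m = l ∨ m ∈ (dl i l).map (a :: ·) := by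
      cases hb : Nat.beq a i
      · rw [hb, cond_false] at hm
        exact Or.inr hm
      · rw [hb, cond_true] at hm
        exact List.mem_cons.1 hm
    rcases h1 with rfl | h1
    · exact fun b hb => h b (by simp [hb])
    · obtain ⟨m', hm', rfl⟩ := List.mem_map.1 h1
      intro b hb
      rcases List.mem_cons.1 hb with rfl | hb
      · exact h b (by simp)
      · exact ih m' hm' b hb

lemma pderiv_mon (i : ℕ) (hi : i < q) : ∀ (l : List ℕ), (∀ a ∈ l, a < q) →
    pderiv (decv code i) (mon code l) = ((dl i l).map (mon code)).sum
  | [], _ => by simp [mon, dl]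
  | a :: l, h => by
    classical
    have ih := pderiv_mon i hi l fun b hb => h b (by simp [hb])
    have h1 : mon code (a :: l) = X (decv code a) * mon code l := by simp [mon]
    have h3 : ((dl i l).map (mon code ∘ (a :: ·))).sum =
        X (decv code a) * ((dl i l).map (mon code)).sum := by
      rw [← List.sum_map_mul_left]
      simp [mon, Function.comp_def]
    rw [h1, pderiv_mul, ih, dl, pderiv_X]
    cases hb : Nat.beq a i
    · have hai : decv code i ≠ decv code a := by
        intro hh
        have := congrArg (fun u => (code u : ℕ)) hh
        simp only [code_decv code hi, code_decv code (h a (by simp))] at this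
        subst this
        simp at hb
      rw [cond_false, List.map_map, h3, Pi.single_apply, if_neg hai.symm]
      simp
    · have hai : a = i := Nat.eq_of_beq_eq_true hb
      subst hai
      rw [cond_true, List.map_cons, List.map_map, List.sum_cons, h3]
      simp

lemma eval_mon (P : List ℕ) : ∀ (l : List ℕ), (∀ a ∈ l, a < q) →
    aeval (ptOf code P) (mon code l) = (mval P l : ℂ)
  | [], _ => by simp [mon, mval]
  | a :: l, h => by
    have ih := eval_mon P l fun b hb => h b (by simp [hb])
    have h1 : mon code (a :: l) = X (decv code a) * mon code l := by simp [mon]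
    rw [h1, map_mul, ih, aeval_X, mval, ptOf, code_decv code (h a (by simp))]
    push_cast
    ring

lemma Fnl_mon : ∀ (is P l : List ℕ), (∀ i ∈ is, i < q) → (∀ a ∈ l, a < q) →
    Fnl code is P (mon code l) = (dv is P l : ℂ)
  | [], P, l, _, h => by
    rw [Fnl, dv]
    exact eval_mon code P l h
  | i :: is, P, l, hi, h => by
    have h1 : Fnl code (i :: is) P (mon code l) =
      Fnl code is P (pderiv (decv code i) (mon code l)) := rfl
    rw [h1, pderiv_mon code i (hi i (by simp)) l h, map_list_sum, dv, Nat.cast_list_sum,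
      List.map_map, List.map_map]
    congr 1
    refine List.map_congr_left fun m hm => ?_
    exact Fnl_mon is P m (fun j hj => hi j (by simp [hj])) (mem_dl_lt h m hm)

lemma Fnl_grad (P : List ℕ) (f : MvPolynomial σ ℂ) (u : σ) :
    Fnl code [(code u : ℕ)] P f = eval (ptOf code P) (pderiv u f) := by
  simp [Fnl, decv_code, aeval_eq_eval]

lemma Fnl_hess [Fintype σ] (P : List ℕ) (f : MvPolynomial σ ℂ) (u v : σ) :
    Fnl code [(code v : ℕ), (code u : ℕ)] P f = hess (ptOf code P) f u v := by
  rw [hess_apply]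
  simp [Fnl, decv_code, aeval_eq_eval]

end Functionals

section Certificates
variable {σ : Type} {q : ℕ} [NeZero q] (code : σ ≃ Fin q)

/-- `W` is a list of monomials of degree `d` in `q` variables. -/
def goodW (q d : ℕ) (W : List (List ℕ)) : Bool :=
  W.all fun l => Nat.beq l.length d && l.all fun a => Nat.blt a q

lemma goodW_spec {q d : ℕ} {W : List (List ℕ)} (h : goodW q d W = true) :
    ∀ l ∈ W, l.length = d ∧ ∀ a ∈ l, a < q := by
  intro l hl
  have := List.all_eq_true.1 h l hl
  rw [Bool.and_eq_true] at this
  refine ⟨Nat.eq_of_beq_eq_true this.1, fun a ha => ?_⟩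
  have := List.all_eq_true.1 this.2 a ha
  simpa using this

/-- The number of occurrences of `j` in `l`. -/
def cnt (j : ℕ) : List ℕ → ℕ
  | [] => 0
  | a :: l => bif Nat.beq a j then cnt j l + 1 else cnt j l

/-- The `j`-th unit vector in dimension `k`. -/
def eL (k j : ℕ) : List ℕ := (List.range k).map fun i => bif Nat.beq i j then 1 else 0

/-- The gradient functionals at the first `m` unit vectors in dimension `k`. -/
def ezs (k m : ℕ) : List (List ℕ × List ℕ) :=
  (List.range m).flatMap fun j => (List.range k).map fun u => ([u], eL k j)

/-- The monomials of degree `d` in the variables `v, …, k - 1`, in lexicographic order. -/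
def cwr (k : ℕ) : ℕ → ℕ → List (List ℕ)
  | 0, _ => [[]]
  | d + 1, v => (List.range' v (k - v)).flatMap fun a => (cwr k d a).map (a :: ·)

/-- The monomials of degree `d` in `k` variables that are singular at the first `m` unit
vectors. -/
def Wof (k d m : ℕ) : List (List ℕ) :=
  (cwr k d 0).filter fun l => (List.range m).all fun j => Nat.ble (cnt j l + 2) d

lemma dl_cnt {i j : ℕ} : ∀ {l : List ℕ}, ∀ m ∈ dl i l, m.length + 1 = l.length ∧ cnt j m ≤ cnt j l
  | [] => by simp [dl]
  | a :: l => by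
    intro m hm
    have h1 : m = l ∨ m ∈ (dl i l).map (a :: ·) := by
      rw [dl] at hm
      cases hb : Nat.beq a i
      · rw [hb, cond_false] at hm
        exact Or.inr hm
      · rw [hb, cond_true] at hm
        exact List.mem_cons.1 hm
    rcases h1 with rfl | h1
    · refine ⟨by simp, ?_⟩
      rw [cnt]
      cases Nat.beq a j <;> simp
    · obtain ⟨m', hm', rfl⟩ := List.mem_map.1 h1
      obtain ⟨h2, h3⟩ := dl_cnt (j := j) m' hm'
      refine ⟨by simp [h2], ?_⟩
      rw [cnt, cnt]
      cases Nat.beq a j <;> simp [h3]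

lemma eL_getD {k j a : ℕ} (h : a ≠ j) : (eL k j).getD a 0 = 0 := by
  have : Nat.beq a j = false := by
    rw [← Bool.not_eq_true]; exact fun hh => h (Nat.eq_of_beq_eq_true hh)
  by_cases ha : a < k <;> simp [eL, List.getD, ha, this]

lemma eL_getD_self {k j : ℕ} (h : j < k) : (eL k j).getD j 0 = 1 := by
  simp [eL, List.getD, h]

lemma mval_eL {k j : ℕ} : ∀ {l : List ℕ}, cnt j l < l.length → mval (eL k j) l = 0
  | [], h => by simp at h
  | a :: l, h => by
    rw [mval]
    by_cases ha : a = j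
    · subst ha
      rw [cnt] at h
      simp only [Nat.beq_refl, cond_true, List.length_cons, Nat.add_lt_add_iff_right] at h
      rw [mval_eL h, mul_zero]
    · rw [eL_getD ha, zero_mul]

lemma Wof_vanish {k d m : ℕ} (hW : goodW k d (Wof k d m) = true) :
    ∀ z ∈ ezs k m, ∀ l ∈ Wof k d m, dv z.1 z.2 l = 0 := by
  intro z hz l hl
  have hlen := (goodW_spec hW l hl).1
  simp only [ezs, List.mem_flatMap, List.mem_map, List.mem_range] at hz
  obtain ⟨j, hj, u, hu, rfl⟩ := hz
  have h1 := List.all_eq_true.1 (List.mem_filter.1 hl).2 j (List.mem_range.2 hj)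
  have h2 : cnt j l + 2 ≤ d := Nat.le_of_ble_eq_true h1
  simp only [dv]
  refine List.sum_eq_zero fun n hn => ?_
  obtain ⟨m', hm', rfl⟩ := List.mem_map.1 hn
  obtain ⟨h3, h4⟩ := dl_cnt (j := j) m' hm'
  exact mval_eL (by omega)

lemma ezs_lt {k m : ℕ} : ∀ z ∈ ezs k m, ∀ i ∈ z.1, i < k := by
  intro z hz i hi
  simp only [ezs, List.mem_flatMap, List.mem_map, List.mem_range] at hz
  obtain ⟨j, hj, u, hu, rfl⟩ := hz
  simp only [List.mem_singleton] at hi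
  omega

lemma mem_ezs {k m j u : ℕ} (hj : j < m) (hu : u < k) : ([u], eL k j) ∈ ezs k m := by
  simp only [ezs, List.mem_flatMap, List.mem_map, List.mem_range]
  exact ⟨j, hj, u, hu, rfl⟩

/-- The row of values of a functional on the monomials `W`. -/
def rowW (W : List (List ℕ)) (z : List ℕ × List ℕ) : List ℕ := W.map (dv z.1 z.2)

/-- The dot product of two lists. -/
def dotN : List ℕ → List ℕ → ℕ
  | a :: l, b :: m => a * b + dotN l m
  | _, _ => 0

lemma dotN_map {α : Type} (g : α → ℕ) : ∀ (l : List α) (e : List ℕ),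
    dotN (l.map g) e = ∑ j : Fin l.length, g l[j] * e.getD j 0
  | [], _ => by simp [dotN]
  | a :: l, [] => by simp [dotN]
  | a :: l, b :: e => by
    rw [List.map_cons, dotN, dotN_map g l]
    simp only [List.length_cons, Fin.sum_univ_succ]
    simp

/-- The form with coefficients `x` on the monomials `W`. -/
noncomputable def formW (W : List (List ℕ)) (x : Fin W.length → ℂ) : MvPolynomial σ ℂ :=
  ∑ j, x j • mon code W[j]

lemma formW_mem {d : ℕ} {W : List (List ℕ)} (hW : goodW q d W = true) (x : Fin W.length → ℂ) :
    formW code W x ∈ Sf σ d := by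
  refine Submodule.sum_mem _ fun j _ => Submodule.smul_mem _ _ ?_
  have h := mon_homogeneous code W[j]
  rwa [(goodW_spec hW W[j] (List.getElem_mem j.2)).1] at h

lemma Fnl_formW {d : ℕ} {W : List (List ℕ)} (hW : goodW q d W = true) (x : Fin W.length → ℂ)
    (z : List ℕ × List ℕ) (hz : ∀ i ∈ z.1, i < q) :
    Fnl code z.1 z.2 (formW code W x) = ∑ j, x j * (dv z.1 z.2 W[j] : ℂ) := by
  rw [formW, map_sum]
  refine Finset.sum_congr rfl fun j _ => ?_
  rw [map_smul, Fnl_mon code _ _ W[j] hz (goodW_spec hW W[j] (List.getElem_mem j.2)).2, smul_eq_mul]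

variable {ρ : Type} [DecidableEq ρ] {p d : ℕ} {R : List ρ} {W : List (List ℕ)} {fn : ρ → List ℕ × List ℕ}

lemma cert_aux (hS : SolvMod p R fun r => rowW W (fn r)) :
    ∃ (C : Matrix (Fin W.length) {r // r ∈ R} ℤ) (δ : ℤ), (δ : ZMod p) = 1 ∧
      ∀ (x : {r // r ∈ R} → ℂ) (r : {r // r ∈ R}),
        ∑ j, (∑ s, (C j s : ℂ) * x s) * (dv (fn r.1).1 (fn r.1).2 W[j] : ℂ) = δ * x r := by
  classical
  let A : Matrix {r // r ∈ R} (Fin W.length) ℤ :=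
    Matrix.of fun r j => (dv (fn r.1).1 (fn r.1).2 W[j] : ℤ)
  obtain ⟨C, δ, hδ, hC⟩ := exists_rightInv (p := p) A (fun b => by
    obtain ⟨x, hx⟩ := hS fun r => if h : r ∈ R then b ⟨r, h⟩ else 0
    refine ⟨fun j => x j, funext fun r => ?_⟩
    have := hx r.1 r.2
    simp only [rowW] at this
    rw [dotl_map, dif_pos r.2] at this
    rw [← this]
    simp [Matrix.mulVec, dotProduct, A])
  refine ⟨C, δ, hδ, fun x r => ?_⟩
  have h1 : ∀ s, ∑ j, (dv (fn r.1).1 (fn r.1).2 W[j] : ℂ) * (C j s : ℂ) =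
      if r = s then (δ : ℂ) else 0 := by
    intro s
    have := congrArg (Int.cast (R := ℂ)) (congrFun (congrFun hC r) s)
    rw [Matrix.mul_apply] at this
    simpa [A, Matrix.one_apply] using this
  calc _ = ∑ j, ∑ s, (dv (fn r.1).1 (fn r.1).2 W[j] : ℂ) * (C j s : ℂ) * x s := by
        refine Finset.sum_congr rfl fun j _ => ?_
        rw [Finset.sum_mul]
        exact Finset.sum_congr rfl fun s _ => by ring
    _ = _ := by
        rw [Finset.sum_comm]
        simp_rw [← Finset.sum_mul, h1]
        simp

/-- Functionals whose values on the monomials `W` are independent modulo `p` take arbitrary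
values on forms. -/
theorem cert_surj [Fact p.Prime] (hS : SolvMod p R fun r => rowW W (fn r))
    (hW : goodW q d W = true) (hR : ∀ r ∈ R, ∀ i ∈ (fn r).1, i < q)
    {Z : List (List ℕ × List ℕ)} (hZ : ∀ z ∈ Z, ∀ l ∈ W, dv z.1 z.2 l = 0) (hZq : ∀ z ∈ Z, ∀ i ∈ z.1, i < q)
    (b : ρ → ℂ) :
    ∃ f ∈ Sf σ d, (∀ r ∈ R, Fnl code (fn r).1 (fn r).2 f = b r) ∧
      ∀ z ∈ Z, Fnl code z.1 z.2 f = 0 := by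
  classical
  obtain ⟨C, δ, hδ, hC⟩ := cert_aux hS
  have hδ0 : (δ : ℂ) ≠ 0 := by
    intro h
    have : δ = 0 := by exact_mod_cast h
    rw [this] at hδ
    simp at hδ
  refine ⟨formW code W fun j => ∑ s, (C j s : ℂ) * ((δ : ℂ)⁻¹ * b s.1), formW_mem code hW _,
    fun r hr => ?_, fun z hz => ?_⟩
  · rw [Fnl_formW code hW _ _ (hR r hr), hC _ ⟨r, hr⟩, mul_inv_cancel_left₀ hδ0]
  · rw [Fnl_formW code hW _ _ (hZq z hz)]
    refine Finset.sum_eq_zero fun j _ => ?_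
    rw [hZ z hz W[j] (List.getElem_mem j.2)]
    simp

/-- The `m × m` matrix over `ℕ` of values of functionals on the coefficient vector `e`, shifted
by constants, as a list of rows. -/
def rowH (W : List (List ℕ)) (e : List ℕ) (m : ℕ) (h : ℕ → ℕ → List ℕ × List ℕ) (K : ℕ → ℕ → ℕ)
    (a : ℕ) : List ℕ := (List.range m).map fun b => dotN (rowW W (h a b)) e + K a b

/-- A vector `e` in the kernel modulo `p` lifts to a form in the kernel, and a matrix of values
that is invertible modulo `p` stays invertible. -/
theorem cert_ker [Fact p.Prime] (hS : SolvMod p R fun r => rowW W (fn r))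
    (hW : goodW q d W = true) (hR : ∀ r ∈ R, ∀ i ∈ (fn r).1, i < q)
    {Z : List (List ℕ × List ℕ)} (hZ : ∀ z ∈ Z, ∀ l ∈ W, dv z.1 z.2 l = 0) (hZq : ∀ z ∈ Z, ∀ i ∈ z.1, i < q)
    (e : List ℕ) (he : ∀ r ∈ R, dotN (rowW W (fn r)) e % p = 0)
    {m : ℕ} (h : ℕ → ℕ → List ℕ × List ℕ) (K : ℕ → ℕ → ℕ) (hh : ∀ a < m, ∀ b < m, ∀ i ∈ (h a b).1, i < q)
    (hH : SolvMod p (List.range m) (rowH W e m h K)) :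
    ∃ f ∈ Sf σ d, (∀ r ∈ R, Fnl code (fn r).1 (fn r).2 f = 0) ∧
      (∀ z ∈ Z, Fnl code z.1 z.2 f = 0) ∧
      (Matrix.of fun a b : Fin m => Fnl code (h a b).1 (h a b).2 f + (K a b : ℂ)).det ≠ 0 := by
  classical
  obtain ⟨C, δ, hδ, hC⟩ := cert_aux hS
  -- the lift of `e`: an integer vector in the kernel, congruent to `e`
  let Ae : {r // r ∈ R} → ℤ := fun r => dotN (rowW W (fn r.1)) e
  let x : Fin W.length → ℤ := fun j => δ * e.getD j 0 - ∑ s, C j s * Ae s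
  have hxp : ∀ j : Fin W.length, (x j : ZMod p) = e.getD j 0 := by
    intro j
    have h0 : ∀ s, (Ae s : ZMod p) = 0 := fun s => by
      have := congrArg (Nat.cast (R := ZMod p)) (he s.1 s.2)
      rw [ZMod.natCast_mod] at this
      simpa [Ae] using this
    simp [x, hδ, h0]
  have hval : ∀ z : List ℕ × List ℕ, (∀ i ∈ z.1, i < q) →
      Fnl code z.1 z.2 (formW code W fun j => (x j : ℂ)) =
        ((∑ j, x j * (dv z.1 z.2 W[j] : ℤ) : ℤ) : ℂ) := fun z hz => by
    rw [Fnl_formW code hW _ _ hz]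
    push_cast
    rfl
  refine ⟨formW code W fun j => (x j : ℂ), formW_mem code hW _, fun r hr => ?_, fun z hz => ?_, ?_⟩
  · rw [Fnl_formW code hW _ _ (hR r hr)]
    have h1 := hC (fun s => (Ae s : ℂ)) ⟨r, hr⟩
    have h2 : (Ae ⟨r, hr⟩ : ℂ) =
        ∑ j : Fin W.length, (dv (fn r).1 (fn r).2 W[j] : ℂ) * (e.getD j 0 : ℂ) := by
      simp only [Ae, rowW, dotN_map]
      push_cast
      rfl
    calc _ = δ * (∑ j : Fin W.length, (dv (fn r).1 (fn r).2 W[j] : ℂ) * (e.getD j 0 : ℂ)) -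
          ∑ j, (∑ s, (C j s : ℂ) * (Ae s : ℂ)) * (dv (fn r).1 (fn r).2 W[j] : ℂ) := by
          rw [Finset.mul_sum, ← Finset.sum_sub_distrib]
          refine Finset.sum_congr rfl fun j _ => ?_
          simp only [x]
          push_cast
          ring
      _ = 0 := by rw [h1, h2, sub_self]
  · rw [Fnl_formW code hW _ _ (hZq z hz)]
    refine Finset.sum_eq_zero fun j _ => ?_
    rw [hZ z hz W[j] (List.getElem_mem j.2)]
    simp
  · let H : Matrix (Fin m) (Fin m) ℤ := Matrix.of fun a b =>
      ∑ j, x j * (dv (h a b).1 (h a b).2 W[j] : ℤ) + (K a b : ℤ)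
    have hHC : (Matrix.of fun a b : Fin m => Fnl code (h a b).1 (h a b).2
        (formW code W fun j => (x j : ℂ)) + (K a b : ℂ)) = H.map (Int.castRingHom ℂ) := by
      ext a b
      rw [Matrix.of_apply, hval _ (hh a a.2 b b.2)]
      simp [H]
    rw [hHC, ← RingHom.mapMatrix_apply, ← RingHom.map_det]
    have hsurj : Function.Surjective (H.map (Int.cast : ℤ → ZMod p)).mulVec := fun b => by
      obtain ⟨y, hy⟩ := hH fun a => if ha : a < m then b ⟨a, ha⟩ else 0
      refine ⟨fun j => y j, funext fun a => ?_⟩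
      have h3 := hy a (List.mem_range.2 a.2)
      rw [dif_pos a.2, rowH, dotl_map] at h3
      rw [← h3]
      have hl : (List.range m).length = m := List.length_range
      refine (Equiv.sum_comp (finCongr hl)
        fun c : Fin m => (H.map (Int.cast : ℤ → ZMod p)) a c * y c).symm.trans ?_
      refine Finset.sum_congr rfl fun c _ => ?_
      simp [H, rowW, dotN_map, hxp, mul_comm]
    have hdet : (H.map (Int.cast : ℤ → ZMod p)).det ≠ 0 := by
      obtain ⟨D, hD⟩ := Matrix.mulVec_surjective_iff_exists_right_inverse.1 hsurj
      intro h0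
      have := congrArg Matrix.det hD
      rw [Matrix.det_mul, h0, zero_mul, Matrix.det_one] at this
      exact zero_ne_one this
    intro h0
    apply hdet
    have h0' : H.det = 0 := by simpa using h0
    have := (Int.castRingHom (ZMod p)).map_det H
    rw [h0', map_zero] at this
    exact this.symm

end Certificates

/-! ### Certificates for configurations containing the unit vectors -/

section UnitPoints
variable {σ : Type} [Fintype σ] [DecidableEq σ]

/-- Forms of degree at least three take arbitrary gradients at distinct unit vectors. -/
lemma gmap_single_surj {ι : Type} [Fintype ι] [DecidableEq ι] {d : ℕ} (hd : 3 ≤ d) (j : ι → σ)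
    (hj : Function.Injective j) :
    Function.Surjective (gmap d fun a => (Pi.single (j a) 1 : σ → ℂ)) := by
  intro c
  have hd0 : (d : ℂ) ≠ 0 := by
    have : d ≠ 0 := by omega
    exact_mod_cast this
  -- the summand with gradient `c (a, ·)` at the unit vector of `j a`, and `0` at the others
  let g : ι → σ → MvPolynomial σ ℂ := fun a i =>
    (if i = j a then (d : ℂ)⁻¹ * c (a, i) else c (a, i)) • (X (j a) ^ (d - 1) * X i)
  have hg : ∀ a i, g a i ∈ Sf σ d := fun a i => by
    refine Submodule.smul_mem _ _ ?_
    have := ((isHomogeneous_X ℂ (j a)).pow (d - 1)).mul (isHomogeneous_X ℂ i)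
    rw [one_mul, Nat.sub_add_cancel (by omega)] at this
    exact this
  refine ⟨⟨∑ a, ∑ i, g a i, Submodule.sum_mem _ fun a _ => Submodule.sum_mem _ fun i _ => hg a i⟩,
    funext fun ⟨b, u⟩ => ?_⟩
  rw [gmap_apply]
  have hval : ∀ a i, eval (Pi.single (j b) 1 : σ → ℂ) (pderiv u (g a i)) =
      if a = b then (if i = u then c (a, i) else 0) else 0 := by
    intro a i
    obtain ⟨e, rfl⟩ : ∃ e, d = e + 3 := ⟨d - 3, by omega⟩
    have hm : eval (Pi.single (j b) 1 : σ → ℂ) (pderiv u (X (j a) ^ (e + 2) * X i)) =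
        if a = b then (if u = j a ∧ i = j a then (e + 2 : ℂ) else 0) + (if i = u then 1 else 0)
        else 0 := by
      rw [pderiv_mul, pderiv_pow, pderiv_X, pderiv_X]
      by_cases hab : a = b
      · subst hab
        by_cases h1 : u = j a
        · by_cases h2 : i = j a
          · simp [h1, h2]
          · have h2' := Ne.symm h2
            simp [h1, h2]
        · by_cases h2 : i = u
          · have : i ≠ j a := h2 ▸ h1
            simp [h1, h2, Ne.symm h1]
          · simp [h1, h2, Ne.symm h1]
      · have : j a ≠ j b := fun h => hab (hj h)
        by_cases h1 : j a = u <;> by_cases h2 : i = u <;> simp [hab, this, h1, h2] <;>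
          simp [← h1, this]
    simp only [g]
    rw [show e + 3 - 1 = e + 2 from rfl, Derivation.map_smul, smul_eval, hm]
    by_cases hab : a = b
    · subst hab
      by_cases h2 : i = u
      · subst h2
        by_cases h1 : i = j a
        · subst h1
          push_cast at hd0 ⊢
          simp only [if_true, and_self]
          field_simp
          ring
        · simp [h1]
      · have : ¬ (u = j a ∧ i = j a) := fun h => h2 (h.2.trans h.1.symm)
        simp [h2, this]
    · simp [hab]
  simp only [map_sum, hval]
  simp

/-- Conditions at unit vectors are independent of conditions that are already independent on forms
singular at those unit vectors. -/
lemma gmap_sum_single_surj {ι κ : Type} [Fintype ι] [DecidableEq ι] {d : ℕ} (hd : 3 ≤ d)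
    (j : ι → σ) (hj : Function.Injective j) {τ : Type} (p : κ → σ → ℂ)
    (φ : τ → MvPolynomial σ ℂ →ₗ[ℂ] ℂ)
    (h : ∀ (b : κ × σ → ℂ) (b' : τ → ℂ), ∃ f ∈ Sf σ d, (∀ a, grad (Pi.single (j a) 1) f = 0) ∧
      (∀ a u, eval (p a) (pderiv u f) = b (a, u)) ∧ ∀ t, φ t f = b' t)
    (b : (ι ⊕ κ) × σ → ℂ) (b' : τ → ℂ) :
    ∃ f : Sf σ d, gmap d (Sum.elim (fun a => Pi.single (j a) 1) p) f = b ∧ ∀ t, φ t f.1 = b' t := by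
  obtain ⟨f₁, hf₁⟩ := gmap_single_surj hd j hj fun a => b (Sum.inl a.1, a.2)
  obtain ⟨f₂, hf₂, h1, h2, h3⟩ := h (fun a => b (Sum.inr a.1, a.2) - eval (p a.1) (pderiv a.2 f₁.1))
    (fun t => b' t - φ t f₁.1)
  refine ⟨f₁ + ⟨f₂, hf₂⟩, funext fun ⟨a, u⟩ => ?_, fun t => ?_⟩
  · rw [gmap_apply]
    cases a with
    | inl a =>
      have e1 := congrFun hf₁ (a, u)
      have e2 := congrFun (h1 a) u
      rw [gmap_apply] at e1
      rw [grad_apply] at e2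
      simp only [Sum.elim_inl, Submodule.coe_add, map_add]
      simp only at e1
      rw [e1, e2]
      simp
    | inr a =>
      have e2 := h2 a u
      simp only [Sum.elim_inr, Submodule.coe_add, map_add, e2]
      ring
  · rw [Submodule.coe_add, map_add, h3]
    ring

end UnitPoints

section SmallCertificates

/-- The gradient conditions at the points `P`. -/
def ptRows (k s : ℕ) : List (ℕ × ℕ) := List.product (List.range s) (List.range k)

/-- The functional with a given index: a partial derivative at one of the points. -/
def ptFn (P : List (List ℕ)) (r : ℕ × ℕ) : List ℕ × List ℕ := ([r.2], P.getD r.1 [])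

/-- The numerical check of independence of the gradient conditions at the unit vectors and the
points `P`, for forms of degree `d` in `k` variables. -/
def chkAH (k d p b : ℕ) (P : List (List ℕ)) : Bool :=
  goodW k d (Wof k d k) && elim (2 ^ b) p (Wof k d k).length p
    ((ptRows k P.length).map fun r => packMod (2 ^ b) p (rowW (Wof k d k) (ptFn P r)))

/-- The numerical check that `e` is a form singular at the points `P`, with Hessian of corank one
at the first unit vector. -/
def chkBS (k d p b : ℕ) (P : List (List ℕ)) (e : List ℕ) : Bool :=
  ((ptRows k P.length).all fun r => Nat.beq (dotN (rowW (Wof k d k) (ptFn P r)) e % p) 0) &&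
    elim (2 ^ b) p k p ((List.range k).map fun a => packMod (2 ^ b) p (rowH (Wof k d k) e k
      (fun a b => ([b, a], eL k 0)) (fun a b => bif Nat.beq a 0 && Nat.beq b 0 then 1 else 0) a))

variable {k d p b : ℕ} {P : List (List ℕ)}

lemma ptOf_eL {σ : Type} [DecidableEq σ] (code : σ ≃ Fin k) (u : σ) :
    ptOf code (eL k (code u)) = Pi.single u 1 := by
  ext v
  rw [ptOf, Pi.single_apply]
  by_cases h : v = u
  · subst h
    rw [eL_getD_self (code v).2, if_pos rfl, Nat.cast_one]
  · rw [if_neg h, eL_getD, Nat.cast_zero]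
    exact fun hh => h (code.injective (Fin.ext hh))

lemma solv_of_chkAH (hp : 0 < p) (h : chkAH k d p b P = true) :
    SolvMod p (ptRows k P.length) fun r => rowW (Wof k d k) (ptFn P r) := by
  rw [chkAH, Bool.and_eq_true] at h
  exact solvMod_of_elim hp (fun r _ => by simp [rowW]) h.2

lemma ptRows_lt {s : ℕ} : ∀ r ∈ ptRows k s, ∀ i ∈ (ptFn P r).1, i < k := by
  rintro ⟨a, u⟩ hr i hi
  have := List.pair_mem_product.1 hr
  simp only [ptFn, List.mem_singleton] at hi
  rw [hi]
  exact List.mem_range.1 this.2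

/-- The points tested by the checks: the unit vectors and the points `P`. -/
noncomputable def ptsOf (k : ℕ) [NeZero k] (P : List (List ℕ)) :
    Fin k ⊕ Fin P.length → Fin k → ℂ :=
  Sum.elim (fun a => Pi.single (id a) 1) fun a => ptOf (Equiv.refl (Fin k)) (P.getD a [])

lemma surj_of_chkAH [NeZero k] [Fact p.Prime] (hd : 3 ≤ d) (h : chkAH k d p b P = true) :
    Function.Surjective (gmap d (ptsOf k P)) := by
  intro c
  have hS := solv_of_chkAH (Fact.out : p.Prime).pos h
  have hW : goodW k d (Wof k d k) = true := by
    rw [chkAH, Bool.and_eq_true] at h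
    exact h.1
  obtain ⟨f, hf, -⟩ := gmap_sum_single_surj hd (id : Fin k → Fin k) Function.injective_id
    (τ := Empty) (fun a : Fin P.length => ptOf (Equiv.refl (Fin k)) (P.getD a []))
    (fun t => t.elim) (fun b' _ => by
      obtain ⟨f, hf, h1, h2⟩ := cert_surj (Equiv.refl (Fin k)) hS hW ptRows_lt (Wof_vanish hW)
        ezs_lt fun r => if hr : r.1 < P.length ∧ r.2 < k then b' (⟨r.1, hr.1⟩, ⟨r.2, hr.2⟩) else 0
      refine ⟨f, hf, fun a => funext fun u => ?_, fun a u => ?_, fun t => t.elim⟩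
      · have := h2 _ (mem_ezs a.2 u.2)
        have h3 := Fnl_grad (Equiv.refl (Fin k)) (eL k a) f u
        rw [Equiv.refl_apply] at h3
        rw [h3] at this
        rw [grad_apply, Pi.zero_apply, ← this]
        exact congrArg (fun q => eval q (pderiv u f)) (ptOf_eL (Equiv.refl (Fin k)) a).symm
      · have := h1 (a, u) (List.pair_mem_product.2 ⟨List.mem_range.2 a.2, List.mem_range.2 u.2⟩)
        have h3 := Fnl_grad (Equiv.refl (Fin k)) (P.getD a []) f u
        rw [Equiv.refl_apply] at h3
        simp only [ptFn] at this
        rw [h3, dif_pos ⟨a.2, u.2⟩] at this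
        exact this) c Empty.elim
  exact ⟨f, hf⟩

theorem AH.of_chk [NeZero k] [Fact p.Prime] (hd : 3 ≤ d) (h : chkAH k d p b P = true) {r : ℕ}
    (hr : r ≤ k + P.length) : AH (Fin k) d (Fin r) :=
  AH.of_card ⟨_, surj_of_chkAH hd h⟩ (by simpa using hr)

/-- An invertible rank-one modification of the Hessian, in some numbering of the variables. -/
lemma corank1_of_det {σ : Type} [Fintype σ] [DecidableEq σ] (code : σ ≃ Fin k)
    {f : MvPolynomial σ ℂ} {x : σ → ℂ} (w : Fin k → ℂ)
    (h : (Matrix.of fun a b : Fin k => hess x f (code.symm a) (code.symm b) + w a * w b).det ≠ 0) :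
    Corank1 f x := by
  rw [corank1_iff]
  refine ⟨1, w ∘ code, w ∘ code, ?_⟩
  rw [Matrix.one_mul, ← Matrix.det_submatrix_equiv_self code.symm]
  convert h using 2
  ext a b
  simp [Matrix.vecMulVec_apply]

theorem BS.of_chk [NeZero k] [Fact p.Prime] (hd : 3 ≤ d) (h : chkAH k d p b P = true)
    {e : List ℕ} (h' : chkBS k d p b P e = true) {r : ℕ} (hr0 : 0 < r)
    (hr : r ≤ k + P.length) : BS (Fin k) d (Fin r) := by
  have : Nonempty (Fin r) := ⟨⟨0, hr0⟩⟩
  have hp := (Fact.out : p.Prime).pos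
  refine BS.of_card (ι := Fin k ⊕ Fin P.length) ?_ (by simpa using hr)
  have hS := solv_of_chkAH hp h
  have hW : goodW k d (Wof k d k) = true := by
    rw [chkAH, Bool.and_eq_true] at h
    exact h.1
  rw [chkBS, Bool.and_eq_true] at h'
  have hk : 0 < k := Nat.pos_of_ne_zero (NeZero.ne k)
  obtain ⟨f, hf, h1, h2, h3⟩ := cert_ker (Equiv.refl (Fin k)) hS hW ptRows_lt (Wof_vanish hW)
    ezs_lt e (fun r hr => Nat.eq_of_beq_eq_true (List.all_eq_true.1 h'.1 r hr))
    (fun a b => ([b, a], eL k 0)) (fun a b => bif Nat.beq a 0 && Nat.beq b 0 then 1 else 0)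
    (fun a ha b hb i hi => by
      simp only [List.mem_cons, List.not_mem_nil, or_false] at hi
      rcases hi with rfl | rfl <;> assumption)
    (solvMod_of_elim hp (fun r _ => by simp [rowH]) h'.2)
  refine ⟨ptsOf k P, surj_of_chkAH hd h, Sum.inl ⟨0, hk⟩, ⟨f, hf⟩, ?_, ?_⟩
  · rw [gmap_eq_zero]
    rintro (a | a)
    · ext u
      have := h2 _ (mem_ezs a.2 u.2)
      have h3 := Fnl_grad (Equiv.refl (Fin k)) (eL k a) f u
      rw [Equiv.refl_apply] at h3
      rw [h3] at this
      rw [grad_apply, Pi.zero_apply, ← this]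
      simp only [ptsOf, Sum.elim_inl, id]
      rw [← ptOf_eL (Equiv.refl (Fin k)) a]
      rfl
    · ext u
      have := h1 (a, u) (List.pair_mem_product.2 ⟨List.mem_range.2 a.2, List.mem_range.2 u.2⟩)
      have h3 := Fnl_grad (Equiv.refl (Fin k)) (P.getD a []) f u
      rw [Equiv.refl_apply] at h3
      simp only [ptFn] at this
      rw [h3] at this
      rw [grad_apply, Pi.zero_apply, ← this]
      rfl
  · refine corank1_of_det (Equiv.refl (Fin k)) (fun a => if a.val = 0 then 1 else 0) ?_
    have hx : ptsOf k P (Sum.inl ⟨0, hk⟩) = ptOf (Equiv.refl (Fin k)) (eL k 0) :=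
      (ptOf_eL (Equiv.refl (Fin k)) ⟨0, hk⟩).symm
    rw [hx]
    refine fun h0 => h3 (Eq.trans (congrArg Matrix.det ?_) h0)
    ext a b
    have h4 := Fnl_hess (Equiv.refl (Fin k)) (eL k 0) f a b
    simp only [Equiv.refl_apply] at h4
    simp only [Matrix.of_apply, Equiv.refl_symm, Equiv.refl_apply, h4]
    have hbeq : ∀ n, Nat.beq n 0 = decide (n = 0) := fun n => by cases n <;> rfl
    by_cases ha : a.val = 0 <;> by_cases hb : b.val = 0 <;> simp [ha, hb, hbeq]

end SmallCertificates

/-! ### Cubics in few variables and quartics in six variables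

In each certificate `P` lists the points other than the unit vectors, rows of residues
modulo `p` are packed into natural numbers in base `2 ^ b`, and `e` lists the coefficients modulo `p`
of a form singular at all the points, on the monomials that are singular at the unit vectors.
-/

section SmallCubics

instance fact_prime_101 : Fact (Nat.Prime 101) := ⟨by norm_num⟩

set_option maxRecDepth 100000 in
lemma AH.k6d3 : AH (Fin 6) 3 (Fin 9) :=
  AH.of_chk (p := 101) (b := 134) (P := [[1, 1, 1, 1, 1, 1], [3, 2, 2, 3, 0, 1], [3, 2, 0, 2, 2,
      0]])
    (by norm_num) (by decide +kernel) (by norm_num)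

set_option maxRecDepth 100000 in
lemma AH.k6d4 : AH (Fin 6) 4 (Fin 21) :=
  AH.of_chk (p := 101) (b := 616) (P := [[1, 1, 1, 1, 1, 1], [3, 0, 0, 3, 0, 1], [1, 1, 1, 0, 0,
      2], [1, 0, 2, 3, 0, 0], [0, 0, 1, 1, 0, 3], [2, 2, 1, 0, 0, 0], [2, 3, 0, 1, 2, 3], [2, 3,
      3, 0, 0, 1], [1, 2, 0, 0, 3, 3], [0, 1, 0, 3, 1, 1], [2, 1, 2, 1, 2, 1], [0, 1, 1, 0, 1, 1],
      [0, 3, 1, 2, 0, 0], [3, 1, 2, 0, 2, 0], [0, 1, 1, 1, 2, 1]])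
    (by norm_num) (by decide +kernel) (by norm_num)

set_option maxRecDepth 100000 in
lemma BS.k3d3 : BS (Fin 3) 3 (Fin 3) :=
  BS.of_chk (p := 101) (b := 33) (P := [])
    (e := [1])
    (by norm_num) (by decide +kernel) (by decide +kernel) (by norm_num) (by norm_num)

set_option maxRecDepth 100000 in
lemma BS.k4d3 : BS (Fin 4) 3 (Fin 4) :=
  BS.of_chk (p := 101) (b := 40) (P := [])
    (e := [2, 2, 2, 2])
    (by norm_num) (by decide +kernel) (by decide +kernel) (by norm_num) (by norm_num)

set_option maxRecDepth 100000 in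
lemma BS.k5d3 : BS (Fin 5) 3 (Fin 6) :=
  BS.of_chk (p := 101) (b := 46) (P := [[1, 1, 1, 1, 1]])
    (e := [2, 5, 96, 98, 1, 0, 97, 2, 0, 2])
    (by norm_num) (by decide +kernel) (by decide +kernel) (by norm_num) (by norm_num)

set_option maxRecDepth 100000 in
lemma BS.k6d3 : BS (Fin 6) 3 (Fin 8) :=
  BS.of_chk (p := 101) (b := 93) (P := [[1, 1, 1, 1, 1, 1], [1, 2, 0, 3, 1, 1]])
    (e := [20, 87, 9, 91, 0, 2, 99, 95, 1, 0, 0, 76, 5, 14, 0, 1, 0, 0, 0, 5])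
    (by norm_num) (by decide +kernel) (by decide +kernel) (by norm_num) (by norm_num)

set_option maxRecDepth 100000 in
lemma BS.k7d3 : BS (Fin 7) 3 (Fin 11) :=
  BS.of_chk (p := 101) (b := 201) (P := [[1, 1, 1, 1, 1, 1, 1], [0, 1, 3, 0, 1, 3, 0], [2, 0, 1,
      1, 2, 0, 1], [0, 3, 0, 1, 1, 0, 1]])
    (e := [25, 0, 20, 5, 46, 11, 34, 60, 22, 92, 91, 8, 86, 5, 0, 88, 0, 0, 94, 0, 24, 0, 0, 0, 1,
      40, 10, 19, 0, 1, 0, 20, 0, 1, 5])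
    (by norm_num) (by decide +kernel) (by decide +kernel) (by norm_num) (by norm_num)

set_option maxRecDepth 100000 in
lemma BS.k8d3 : BS (Fin 8) 3 (Fin 14) :=
  BS.of_chk (p := 101) (b := 335) (P := [[1, 1, 1, 1, 1, 1, 1, 1], [1, 2, 3, 0, 1, 1, 2, 1], [2,
      1, 2, 0, 1, 0, 3, 1], [1, 3, 0, 1, 2, 3, 3, 3], [1, 0, 1, 3, 2, 0, 0, 2], [1, 1, 1, 3, 0, 1,
      0, 1]])
    (e := [47, 24, 18, 17, 95, 35, 97, 18, 49, 13, 15, 18, 62, 5, 39, 41, 31, 2, 90, 80, 12, 48,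
      56, 6, 47, 100, 100, 57, 79, 4, 2, 56, 2, 17, 2, 97, 79, 9, 10, 59, 30, 8, 32, 27, 53, 5,
      51, 0, 55, 5, 5, 2, 1, 1, 5, 1])
    (by norm_num) (by decide +kernel) (by decide +kernel) (by norm_num) (by norm_num)

end SmallCubics

/-! ### Tensors of cubic forms -/

section CubicTensors
variable {σ τ : Type} [Fintype σ] [DecidableEq σ] [Fintype τ] [DecidableEq τ]

/-- The third derivatives of a cubic form, as a function of three variables: a cubic form is the
same thing as a symmetric tensor. -/
noncomputable def ten (f : MvPolynomial σ ℂ) (u v w : σ) : ℂ := hess (Pi.single w 1) f u v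

lemma eval_const_of_hom {g : MvPolynomial σ ℂ} (hg : g.IsHomogeneous 0) (p q : σ → ℂ) :
    eval p g = eval q g := by
  rw [totalDegree_eq_zero_iff_eq_C.1 ((totalDegree_zero_iff_isHomogeneous _).2 hg)]
  simp

lemma hess_hom {f : MvPolynomial σ ℂ} (hf : f ∈ Sf σ 3) (u v : σ) :
    (pderiv u (pderiv v f)).IsHomogeneous 1 := by
  simpa using ((((mem_homogeneousSubmodule _ _).1 hf).pderiv (i := v)).pderiv (i := u))

lemma ten_eq {f : MvPolynomial σ ℂ} (hf : f ∈ Sf σ 3) (p : σ → ℂ) (u v w : σ) :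
    ten f u v w = eval p (pderiv w (pderiv u (pderiv v f))) := by
  have h1 := euler (hess_hom hf u v) (Pi.single w 1)
  simp only [Pi.single_apply, ite_mul, one_mul, zero_mul, Finset.sum_ite_eq', Finset.mem_univ,
    if_true, Nat.cast_one] at h1
  rw [ten, hess_apply, ← h1]
  exact eval_const_of_hom (by simpa using (hess_hom hf u v).pderiv (i := w)) _ _

lemma hess_eq_ten {f : MvPolynomial σ ℂ} (hf : f ∈ Sf σ 3) (p : σ → ℂ) (u v : σ) :
    hess p f u v = ∑ w, p w * ten f u v w := by
  have h1 := euler (hess_hom hf u v) p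
  rw [hess_apply, ← one_mul (eval p _), ← Nat.cast_one, ← h1]
  exact Finset.sum_congr rfl fun w _ => by rw [ten_eq hf p]

lemma grad_eq_ten {f : MvPolynomial σ ℂ} (hf : f ∈ Sf σ 3) (p : σ → ℂ) (u : σ) :
    2 * grad p f u = ∑ v, p v * ∑ w, p w * ten f v u w := by
  have h1 := euler (((mem_homogeneousSubmodule _ _).1 hf).pderiv (i := u)) p
  rw [grad_apply]
  have h2 : ((3 - 1 : ℕ) : ℂ) = 2 := by norm_num
  rw [h2] at h1
  rw [← h1]
  exact Finset.sum_congr rfl fun v _ => by rw [← hess_eq_ten hf]; rfl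

lemma ten_comm12 (f : MvPolynomial σ ℂ) (u v w : σ) : ten f u v w = ten f v u w :=
  hess_symm _ _ _ _

lemma ten_comm23 {f : MvPolynomial σ ℂ} (hf : f ∈ Sf σ 3) (u v w : σ) :
    ten f u v w = ten f u w v := by
  rw [ten_eq hf 0, ten_eq hf 0, pderiv_comm w, pderiv_comm w, pderiv_comm u, pderiv_comm v,
    pderiv_comm u]

/-- Every symmetric tensor is the tensor of a cubic form. -/
lemma exists_of_ten (T : σ → σ → σ → ℂ) (h12 : ∀ u v w, T u v w = T v u w)
    (h23 : ∀ u v w, T u v w = T u w v) : ∃ f : Sf σ 3, ∀ u v w, ten f.1 u v w = T u v w := by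
  refine ⟨⟨(6 : ℂ)⁻¹ • ∑ a, ∑ b, ∑ c, T a b c • (X a * X b * X c), Submodule.smul_mem _ _ <|
    Submodule.sum_mem _ fun a _ => Submodule.sum_mem _ fun b _ => Submodule.sum_mem _ fun c _ =>
    Submodule.smul_mem _ _ <| ((isHomogeneous_X ℂ a).mul (isHomogeneous_X ℂ b)).mul
      (isHomogeneous_X ℂ c)⟩, fun u v w => ?_⟩
  have hX : ∀ a b : σ, pderiv b (X a : MvPolynomial σ ℂ) = C (if a = b then 1 else 0) := by
    intro a b
    rw [pderiv_X, Pi.single_apply]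
    simp [apply_ite (C : ℂ → MvPolynomial σ ℂ)]
  have h0 : ∀ D : σ → σ → ℂ, (∀ a b : σ, pderiv b (X a : MvPolynomial σ ℂ) = C (D a b)) →
      (∀ a, (Pi.single w 1 : σ → ℂ) a = D a w) → ∀ a b c, ten (X a * X b * X c) u v w =
      D a w * D b u * D c v + D a w * D b v * D c u + D a u * D b w * D c v +
      D a v * D b w * D c u + D a u * D b v * D c w + D a v * D b u * D c w := by
    intro D hD hw a b c
    simp only [ten, hess_apply, pderiv_mul, hD, map_add, map_mul, eval_X, eval_C, hw, pderiv_C,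
      map_zero]
    ring
  have h1 := h0 (fun a b => if a = b then 1 else 0) hX fun a => by rw [Pi.single_apply]
  have h2 : ∀ a b c : σ, ten (T a b c • (X a * X b * X c)) u v w =
      T a b c * ten (X a * X b * X c) u v w := by
    intro a b c
    rw [ten, map_smul]; rfl
  have h3 : ten ((6 : ℂ)⁻¹ • ∑ a, ∑ b, ∑ c, T a b c • (X a * X b * X c)) u v w =
      (6 : ℂ)⁻¹ * ∑ a, ∑ b, ∑ c, ten (T a b c • (X a * X b * X c)) u v w := by
    simp only [ten, map_smul, map_sum, Matrix.smul_apply, Matrix.sum_apply, smul_eq_mul]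
  rw [h3]
  simp only [h2, h1, mul_add, Finset.sum_add_distrib, mul_ite, mul_one, mul_zero,
    Finset.sum_ite_eq', Finset.mem_univ, if_true]
  have e1 : T w u v = T u v w := by rw [h12, h23]
  have e2 : T w v u = T u v w := by rw [h23, e1]
  have e3 : T u w v = T u v w := by rw [h23]
  have e4 : T v w u = T u v w := by rw [h23, h12]
  have e5 : T v u w = T u v w := h12 _ _ _
  rw [e1, e2, e3, e4, e5]
  ring

/-- Substituting variables in the tensor of a cubic form. -/
lemma exists_pull (ε : τ → σ) (f : Sf σ 3) :
    ∃ g : Sf τ 3, ∀ u v w, ten g.1 u v w = ten f.1 (ε u) (ε v) (ε w) :=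
  exists_of_ten _ (fun _ _ _ => ten_comm12 _ _ _ _) (fun _ _ _ => ten_comm23 f.2 _ _ _)

lemma hess_pull {ε : τ → σ} (hε : Function.Injective ε) {f : Sf σ 3} {g : Sf τ 3}
    (hg : ∀ u v w, ten g.1 u v w = ten f.1 (ε u) (ε v) (ε w)) {p : σ → ℂ} {q : τ → ℂ}
    (h1 : ∀ a, q a = p (ε a)) (h2 : ∀ a, a ∉ Set.range ε → p a = 0) (u v : τ) :
    hess q g.1 u v = hess p f.1 (ε u) (ε v) := by
  rw [hess_eq_ten g.2, hess_eq_ten f.2]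
  exact Fintype.sum_of_injective ε hε _ _ (fun a ha => by rw [h2 a ha, zero_mul])
    fun a => by rw [hg, h1]

lemma grad_pull {ε : τ → σ} (hε : Function.Injective ε) {f : Sf σ 3} {g : Sf τ 3}
    (hg : ∀ u v w, ten g.1 u v w = ten f.1 (ε u) (ε v) (ε w)) {p : σ → ℂ} {q : τ → ℂ}
    (h1 : ∀ a, q a = p (ε a)) (h2 : ∀ a, a ∉ Set.range ε → p a = 0) (h0 : grad p f.1 = 0) :
    grad q g.1 = 0 := by
  ext u
  have h3 : 2 * grad q g.1 u = 2 * grad p f.1 (ε u) := by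
    rw [grad_eq_ten g.2, grad_eq_ten f.2]
    refine Fintype.sum_of_injective ε hε _ _ (fun a ha => by rw [h2 a ha, zero_mul]) fun v => ?_
    rw [← hess_eq_ten f.2, ← hess_eq_ten g.2, h1, hess_pull hε hg h1 h2]
  rw [h0] at h3
  simpa using h3

lemma eq_zero_of_ten {f : Sf σ 3} (h : ∀ u v w, ten f.1 u v w = 0) : f = 0 := by
  ext1
  refine MvPolynomial.funext fun p => ?_
  refine (eval_eq_zero_of_grad f.2 (by norm_num) (funext fun u => ?_)).trans (map_zero _).symm
  have := grad_eq_ten f.2 p u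
  simpa [h] using this

end CubicTensors

/-! ### Families of points in blocks of variables -/

/-- Numerical data for families of points on which cubic forms in three-dimensional blocks of
variables, together with `c` further variables, are studied. -/
structure BlockData where
  /-- number of variables outside the blocks -/
  c : ℕ
  /-- number of normalising coefficients for each block -/
  nb : ℕ
  /-- number of normalising coefficients outside the blocks -/
  nz : ℕ
  /-- number of points for each block -/
  nd : ℕ
  /-- number of points outside the blocks -/
  nv : ℕ
  /-- the normalising coefficients of a block -/
  bp : Fin nb → (Fin 3 ⊕ Fin c) × (Fin 3 ⊕ Fin c) × (Fin 3 ⊕ Fin c)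
  /-- the normalising coefficients outside the blocks -/
  vp : Fin nz → Fin c × Fin c × Fin c
  /-- the points of a block -/
  δ : Fin nd → Fin 3 ⊕ Fin c → ℕ
  /-- the points outside the blocks -/
  ν : Fin nv → Fin c → ℕ
  /-- the components of the pair points outside the blocks -/
  ω : Fin 3 → Fin c → ℕ

namespace BlockData

section Defs
variable (D : BlockData) (J : Type) [Fintype J] [LinearOrder J]

/-- The variables: three for each block in `J`, and `c` further ones. -/
abbrev V : Type := (J × Fin 3) ⊕ Fin D.c

/-- The points: unit vectors of the block variables, three points for each pair of blocks, points
for each block, and points outside the blocks. -/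
abbrev Idx : Type :=
  (J × Fin 3) ⊕ ({jk : J × J // jk.1 < jk.2} × Fin 3) ⊕ (J × Fin D.nd) ⊕ Fin D.nv

/-- The normalising coefficients. -/
abbrev Par : Type := (J × Fin D.nb) ⊕ Fin D.nz

/-- The components of the pair points: `α j k i` is the component in block `j` of the `i`-th point
for the pair `j, k`. -/
abbrev Alpha (J : Type) : Type := J → J → Fin 3 → Fin 3 → ℂ

variable {J}

/-- The inclusion of the variables of one block and of the variables outside the blocks. -/
def blk (j : J) : Fin 3 ⊕ Fin D.c → D.V J := Sum.map (Prod.mk j) id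

/-- The map on variables induced by a map on blocks. -/
def vmap {J' : Type} (φ : J' → J) : D.V J' → D.V J := Sum.map (Prod.map φ id) id

/-- The points for pairs of blocks. -/
def pairPt (α : Alpha J) (j k : J) (i : Fin 3) : D.V J → ℂ
  | Sum.inl (l, x) => if l = j then α j k i x else if l = k then α k j i x else 0
  | Sum.inr t => D.ω i t

/-- The points for single blocks. -/
def blkPt (j : J) (t : Fin D.nd) : D.V J → ℂ
  | Sum.inl (l, x) => if l = j then (D.δ t (Sum.inl x) : ℂ) else 0
  | Sum.inr s => D.δ t (Sum.inr s)

/-- The points outside the blocks. -/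
def outPt (t : Fin D.nv) : D.V J → ℂ
  | Sum.inl _ => 0
  | Sum.inr s => D.ν t s

/-- The family of all points. -/
def pt (α : Alpha J) : D.Idx J → D.V J → ℂ
  | Sum.inl a => Pi.single (Sum.inl a) 1
  | Sum.inr (Sum.inl (jk, i)) => D.pairPt α jk.1.1 jk.1.2 i
  | Sum.inr (Sum.inr (Sum.inl (j, t))) => D.blkPt j t
  | Sum.inr (Sum.inr (Sum.inr t)) => D.outPt t

/-- The index triples of the normalising coefficients. -/
def parV : D.Par J → D.V J × D.V J × D.V J
  | Sum.inl (j, b) => (D.blk j (D.bp b).1, D.blk j (D.bp b).2.1, D.blk j (D.bp b).2.2)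
  | Sum.inr z => (Sum.inr (D.vp z).1, Sum.inr (D.vp z).2.1, Sum.inr (D.vp z).2.2)

/-- The gradients of a cubic form at all the points, and its normalising coefficients. -/
noncomputable def full (α : Alpha J) : Sf (D.V J) 3 →ₗ[ℂ] ((D.Idx J × D.V J) ⊕ D.Par J → ℂ) :=
  LinearMap.pi fun
    | Sum.inl a => LinearMap.proj a ∘ₗ gmap 3 (D.pt α)
    | Sum.inr q => LinearMap.proj (D.parV q).2.1 ∘ₗ LinearMap.proj (D.parV q).1 ∘ₗ
        hess (Pi.single (D.parV q).2.2 1) ∘ₗ (Sf (D.V J) 3).subtype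

lemma full_inl (α : Alpha J) (f : Sf (D.V J) 3) (a : D.Idx J × D.V J) :
    D.full α f (Sum.inl a) = gmap 3 (D.pt α) f a := rfl

lemma full_inr (α : Alpha J) (f : Sf (D.V J) 3) (q : D.Par J) :
    D.full α f (Sum.inr q) = ten f.1 (D.parV q).1 (D.parV q).2.1 (D.parV q).2.2 := rfl

variable (J)

/-- There are as many conditions as cubic forms. -/
def Square : Prop :=
  (Fintype.card (D.V J)).multichoose 3 = Fintype.card ((D.Idx J × D.V J) ⊕ D.Par J)

variable {J} {D}

lemma Square.iff (h : D.Square J) (α : Alpha J) :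
    Function.Injective (D.full α) ↔ Function.Surjective (D.full α) := by
  refine LinearMap.injective_iff_surjective_of_finrank_eq_finrank ?_
  rw [finrank_Sf, Module.finrank_fintype_fun_eq_card]
  exact h

variable (D)

/-- The local genericity conditions, for three blocks. -/
structure Good (α : Alpha (Fin 3)) : Prop where
  /-- all conditions are independent -/
  surj : Function.Surjective (D.full α)
  /-- some cubic singular at all the points, whose normalising coefficients vanish except possibly
  those of the third block, has an invertible matrix of coefficients of `x₀ y z`, with `x₀` the first
  variable of the first block and `y`, `z` in the second and the third block -/
  two : ∃ f : Sf (D.V (Fin 3)) 3, (∀ a, (∀ b, a ≠ Sum.inr (Sum.inl (2, b))) → D.full α f a = 0) ∧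
    (Matrix.of fun a b => ten f.1 (Sum.inl (1, a)) (Sum.inl (2, b)) (Sum.inl (0, 0))).det ≠ 0
  /-- some cubic singular at all the points has a Hessian of corank one at the first unit vector -/
  sing : ∃ f : Sf (D.V (Fin 3)) 3, gmap 3 (D.pt α) f = 0 ∧
    Corank1 f.1 (Pi.single (Sum.inl (0, 0)) 1)

lemma pt_polyLine (i : D.Idx J) (v : D.V J) : PolyLine fun α : Alpha J => D.pt α i v := by
  have hα : ∀ j k i x, PolyLine fun α : Alpha J => α j k i x := fun j k i x =>
    PolyLine.linear ((LinearMap.proj x : (Fin 3 → ℂ) →ₗ[ℂ] ℂ) ∘ₗ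
      (LinearMap.proj i : (Fin 3 → Fin 3 → ℂ) →ₗ[ℂ] (Fin 3 → ℂ)) ∘ₗ
      (LinearMap.proj k : (J → Fin 3 → Fin 3 → ℂ) →ₗ[ℂ] (Fin 3 → Fin 3 → ℂ)) ∘ₗ
      (LinearMap.proj j : Alpha J →ₗ[ℂ] (J → Fin 3 → Fin 3 → ℂ)))
  rcases i with a | ⟨⟨⟨j, k⟩, hjk⟩, i⟩ | a | a
  · exact PolyLine.const _
  · rcases v with ⟨l, x⟩ | t
    · simp only [pt, pairPt]
      split_ifs
      · exact hα _ _ _ _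
      · exact hα _ _ _ _
      · exact PolyLine.const _
    · exact PolyLine.const _
  · exact PolyLine.const _
  · exact PolyLine.const _

lemma full_polyLine (f : Sf (D.V J) 3) (a : (D.Idx J × D.V J) ⊕ D.Par J) :
    PolyLine fun α : Alpha J => D.full α f a := by
  rcases a with a | q
  · exact gmap_polyLine D.pt_polyLine f a
  · exact PolyLine.const _

lemma hess_lin_polyLine {X σ κ : Type} [AddCommGroup X] [Module ℂ X] [Fintype σ] [Fintype κ]
    {d : ℕ} (p : σ → ℂ) (e0 : Sf σ d) (f : κ → Sf σ d) {c : X → ℂ} {a : κ → X → ℂ}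
    (hc : PolyLine c) (ha : ∀ k, PolyLine (a k)) (i j : σ) :
    PolyLine fun x => hess p (c x • e0 + ∑ k, a k x • f k : Sf σ d).1 i j := by
  have h : ∀ x, hess p (c x • e0 + ∑ k, a k x • f k : Sf σ d).1 i j =
      c x * hess p e0.1 i j + ∑ k, a k x * hess p (f k).1 i j := by
    intro x
    simp [Matrix.sum_apply]
  simp only [h]
  exact (hc.mul (PolyLine.const _)).add (PolyLine.sum _ fun k => (ha k).mul (PolyLine.const _))

/-- Existence of a form in the kernel of a family of maps with a nonvanishing determinant of entries
of its Hessian is a generic condition. -/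
lemma gen_det {X σ κ μ : Type} [AddCommGroup X] [Module ℂ X] [Fintype σ] [Fintype κ]
    [DecidableEq κ] [Fintype μ] [DecidableEq μ] {d : ℕ} {T : X → Sf σ d →ₗ[ℂ] (κ → ℂ)}
    (hT : ∀ e k, PolyLine fun x => T x e k) (q : σ → ℂ) (r s : μ → σ) (L M : Matrix μ μ ℂ) {x0 : X}
    (hs : Function.Surjective (T x0)) {f : Sf σ d} (hf : T x0 f = 0)
    (hd : (L * (hess q f.1).submatrix r s + M).det ≠ 0) :
    Gen fun x => ∃ f : Sf σ d, T x f = 0 ∧ (L * (hess q f.1).submatrix r s + M).det ≠ 0 :=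
  (Gen.surj_ker hT (Ψ := fun _ f => (L * (hess q f.1).submatrix r s + M).det)
    (fun e0 f c a hc ha => PolyLine.det fun i j => by
      simp only [Matrix.add_apply, Matrix.mul_apply, Matrix.submatrix_apply]
      exact (PolyLine.sum _ fun k => (PolyLine.const _).mul
        (hess_lin_polyLine _ e0 f hc ha _ _)).add (PolyLine.const _)) hs hf hd).mono
    fun _ h => h.2

lemma Good.gen {α₀ : Alpha (Fin 3)} (h : D.Good α₀) : Gen fun α => D.Good α := by
  have g1 : Gen fun α : Alpha (Fin 3) => Function.Surjective (D.full α) :=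
    Gen.surj D.full_polyLine h.surj
  obtain ⟨f, hf, hdet⟩ := h.two
  let S := {a : (D.Idx (Fin 3) × D.V (Fin 3)) ⊕ D.Par (Fin 3) //
    ∀ b, a ≠ Sum.inr (Sum.inl (2, b))}
  classical
  have : Fintype S := Fintype.ofFinite S
  have g2 := gen_det (κ := S)
    (T := fun α : Alpha (Fin 3) => LinearMap.funLeft ℂ ℂ (Subtype.val : S → _) ∘ₗ D.full α)
    (fun e k => D.full_polyLine e k.1) (Pi.single (Sum.inl (0, 0)) 1)
    (fun a : Fin 3 => (Sum.inl (1, a) : D.V (Fin 3))) (fun a => Sum.inl (2, a)) 1 0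
    (x0 := α₀) ((LinearMap.funLeft_surjective_of_injective ℂ ℂ _ Subtype.val_injective).comp h.surj)
    (f := f) (funext fun a => hf a.1 a.2) (by rw [Matrix.one_mul, add_zero]; exact hdet)
  obtain ⟨f, hf, hc⟩ := h.sing
  obtain ⟨L, u, w, hc⟩ := corank1_iff.1 hc
  have hs3 : Function.Surjective (gmap 3 (D.pt α₀)) := fun b => by
    obtain ⟨f, hf⟩ := h.surj (Sum.elim b 0)
    refine ⟨f, funext fun a => ?_⟩
    rw [← full_inl, hf, Sum.elim_inl]
  have g3 := gen_det (X := Alpha (Fin 3)) (σ := D.V (Fin 3)) (κ := D.Idx (Fin 3) × D.V (Fin 3))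
    (μ := D.V (Fin 3)) (d := 3) (T := fun α => gmap 3 (D.pt α))
    (fun e k => gmap_polyLine D.pt_polyLine e k) (Pi.single (Sum.inl (0, 0)) 1) id id L
    (Matrix.vecMulVec u w) (x0 := α₀) hs3 (f := f) hf hc
  refine ((g1.and g2).and g3).mono fun α h => ⟨h.1.1, ?_, ?_⟩
  · obtain ⟨f, hf, hd⟩ := h.1.2
    rw [Matrix.one_mul, add_zero] at hd
    exact ⟨f, fun a ha => congrFun hf ⟨a, ha⟩, hd⟩
  · obtain ⟨f, hf, hd⟩ := h.2
    rw [Matrix.submatrix_id_id] at hd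
    exact ⟨f, hf, corank1_iff.2 ⟨L, u, w, hd⟩⟩

end Defs

end BlockData

/-! ### Gluing three blocks -/

namespace BlockData
section Glue
variable {D : BlockData} {J : Type} [Fintype J] [LinearOrder J]

lemma vmap_injective {φ : Fin 3 → J} (hφ : Function.Injective φ) :
    Function.Injective (D.vmap φ) :=
  Function.Injective.sumMap (hφ.prodMap Function.injective_id) Function.injective_id

lemma pairPt_symm {α : Alpha J} {j k : J} (_h : j ≠ k) (i : Fin 3) :
    D.pairPt α j k i = D.pairPt α k j i := by
  ext v
  rcases v with ⟨l, x⟩ | t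
  · simp only [pairPt]
    split_ifs with h1 h2 <;> simp_all
  · rfl

/-- Restricting pair-point components to three blocks. -/
def res (α : Alpha J) (φ : Fin 3 → J) : Alpha (Fin 3) := fun j k => α (φ j) (φ k)

lemma pairPt_vmap {φ : Fin 3 → J} (hφ : Function.Injective φ) (α : Alpha J) (j k : Fin 3)
    (i : Fin 3) :
    (∀ a, D.pairPt (res α φ) j k i a = D.pairPt α (φ j) (φ k) i (D.vmap φ a)) ∧
      ∀ a, a ∉ Set.range (D.vmap φ) → D.pairPt α (φ j) (φ k) i a = 0 := by
  constructor
  · rintro (⟨l, x⟩ | t)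
    · simp [vmap, pairPt, res, hφ.eq_iff]
    · rfl
  · rintro (⟨l, x⟩ | t) h
    · have h1 : ∀ m, l ≠ φ m := fun m hm => h ⟨Sum.inl (m, x), by simp [vmap, hm]⟩
      simp [pairPt, h1]
    · exact absurd ⟨Sum.inr t, rfl⟩ h

lemma exists_idx {φ : Fin 3 → J} (hφ : Function.Injective φ) (α : Alpha J) (a : D.Idx (Fin 3)) :
    ∃ b : D.Idx J, (∀ v, D.pt (res α φ) a v = D.pt α b (D.vmap φ v)) ∧
      ∀ v, v ∉ Set.range (D.vmap φ) → D.pt α b v = 0 := by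
  rcases a with ⟨l, x⟩ | ⟨⟨⟨j, k⟩, hjk⟩, i⟩ | ⟨j, t⟩ | t
  · refine ⟨Sum.inl (φ l, x), ?_, ?_⟩
    · intro v
      have h1 : (Sum.inl (φ l, x) : D.V J) = D.vmap φ (Sum.inl (l, x)) := rfl
      simp only [pt, h1, Pi.single_apply, (vmap_injective hφ).eq_iff]
    · intro v hv
      have h1 : v ≠ Sum.inl (φ l, x) := fun h => hv ⟨Sum.inl (l, x), h.symm⟩
      simp only [pt, Pi.single_apply, if_neg h1]
  · have hne : φ j ≠ φ k := fun h => (ne_of_lt hjk) (hφ h)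
    have h1 := pairPt_vmap (D := D) hφ α j k i
    rcases lt_or_gt_of_ne hne with h | h
    · exact ⟨Sum.inr (Sum.inl (⟨(φ j, φ k), h⟩, i)), h1⟩
    · refine ⟨Sum.inr (Sum.inl (⟨(φ k, φ j), h⟩, i)), ?_⟩
      simp only [pt]
      rw [pairPt_symm hne.symm]
      exact h1
  · refine ⟨Sum.inr (Sum.inr (Sum.inl (φ j, t))), ?_, ?_⟩
    · rintro (⟨l, x⟩ | s)
      · simp [pt, blkPt, vmap, hφ.eq_iff]
      · rfl
    · rintro (⟨l, x⟩ | s) h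
      · have h1 : l ≠ φ j := fun hm => h ⟨Sum.inl (j, x), by simp [vmap, hm]⟩
        simp [pt, blkPt, h1]
      · exact absurd ⟨Sum.inr s, rfl⟩ h
  · refine ⟨Sum.inr (Sum.inr (Sum.inr t)), ?_, ?_⟩
    · rintro (⟨l, x⟩ | s) <;> rfl
    · rintro (⟨l, x⟩ | s) h
      · rfl
      · exact absurd ⟨Sum.inr s, rfl⟩ h

/-- The conditions satisfied by the restriction of a cubic form to three blocks. -/
lemma full_pull {φ : Fin 3 → J} (hφ : Function.Injective φ) {α : Alpha J} {f : Sf (D.V J) 3}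
    {g : Sf (D.V (Fin 3)) 3}
    (hg : ∀ u v w, ten g.1 u v w = ten f.1 (D.vmap φ u) (D.vmap φ v) (D.vmap φ w))
    (hf : ∀ a, D.full α f (Sum.inl a) = 0) :
    (∀ a, D.full (res α φ) g (Sum.inl a) = 0) ∧
    (∀ i b, D.full (res α φ) g (Sum.inr (Sum.inl (i, b))) =
      D.full α f (Sum.inr (Sum.inl (φ i, b)))) ∧
    ∀ z, D.full (res α φ) g (Sum.inr (Sum.inr z)) = D.full α f (Sum.inr (Sum.inr z)) := by
  have h0 : gmap 3 (D.pt α) f = 0 := funext hf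
  refine ⟨fun a => ?_, fun i b => ?_, fun z => ?_⟩
  · rw [full_inl]
    revert a
    refine fun a => congrFun (gmap_eq_zero.2 fun i => ?_) a
    obtain ⟨b, h1, h2⟩ := exists_idx (D := D) hφ α i
    exact grad_pull (vmap_injective hφ) hg h1 h2 (gmap_eq_zero.1 h0 b)
  · have hb : ∀ s, D.vmap φ (D.blk i s) = D.blk (φ i) s := by
      rintro (s | s) <;> rfl
    rw [full_inr, full_inr, hg]
    simp only [parV, hb]
  · rw [full_inr, full_inr, hg]
    rfl

/-- Three elements of a set with at least three elements lie in the image of an injection. -/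
lemma exists_emb {S : Finset J} (hS : 3 ≤ S.card) {a b c : J} (ha : a ∈ S) (hb : b ∈ S)
    (hc : c ∈ S) : ∃ φ : Fin 3 → J, Function.Injective φ ∧ (∀ i, φ i ∈ S) ∧
      a ∈ Set.range φ ∧ b ∈ Set.range φ ∧ c ∈ Set.range φ := by
  have h1 : ({a, b, c} : Finset J) ⊆ S := by
    intro x hx
    simp only [Finset.mem_insert, Finset.mem_singleton] at hx
    rcases hx with rfl | rfl | rfl <;> assumption
  obtain ⟨T, hT1, hT2, hT3⟩ := Finset.exists_subsuperset_card_eq h1 Finset.card_le_three hS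
  let e := T.orderIsoOfFin hT3
  have hr : ∀ x ∈ T, x ∈ Set.range fun i => (e i : J) := fun x hx => ⟨e.symm ⟨x, hx⟩, by simp⟩
  exact ⟨fun i => e i, Subtype.val_injective.comp e.injective, fun i => hT2 (e i).2,
    hr _ (hT1 (by simp)), hr _ (hT1 (by simp)), hr _ (hT1 (by simp))⟩

/-- The block of a variable, if any. -/
def inB (S : Set J) : D.V J → Prop
  | Sum.inl (l, _) => l ∈ S
  | Sum.inr _ => True

lemma inB.mem_range {φ : Fin 3 → J} {v : D.V J} (h : inB (Set.range φ) v) :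
    v ∈ Set.range (D.vmap φ) := by
  rcases v with ⟨l, x⟩ | t
  · obtain ⟨i, rfl⟩ := h
    exact ⟨Sum.inl (i, x), rfl⟩
  · exact ⟨Sum.inr t, rfl⟩

lemma exists_blocks {S : Finset J} (hS : 3 ≤ S.card) {u v w : D.V J} (hu : inB (S : Set J) u)
    (hv : inB (S : Set J) v) (hw : inB (S : Set J) w) :
    ∃ φ : Fin 3 → J, Function.Injective φ ∧ (∀ i, φ i ∈ S) ∧
      u ∈ Set.range (D.vmap φ) ∧ v ∈ Set.range (D.vmap φ) ∧ w ∈ Set.range (D.vmap φ) := by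
  obtain ⟨j0, hj0⟩ : S.Nonempty := Finset.card_pos.1 (by omega)
  have key : ∀ u : D.V J, inB (S : Set J) u →
      ∃ j ∈ S, ∀ φ : Fin 3 → J, j ∈ Set.range φ → inB (Set.range φ) u := by
    rintro (⟨l, x⟩ | t) h
    · exact ⟨l, h, fun φ h => h⟩
    · exact ⟨j0, hj0, fun φ h => trivial⟩
  obtain ⟨a, ha, ha'⟩ := key u hu
  obtain ⟨b, hb, hb'⟩ := key v hv
  obtain ⟨c, hc, hc'⟩ := key w hw
  obtain ⟨φ, h1, h2, h3, h4, h5⟩ := exists_emb hS ha hb hc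
  exact ⟨φ, h1, h2, (ha' φ h3).mem_range, (hb' φ h4).mem_range, (hc' φ h5).mem_range⟩

variable {α : Alpha J}

/-- A cubic form whose conditions and normalising coefficients vanish on a set of at least three
blocks has vanishing coefficients there. -/
lemma ten_eq_zero (hI : ∀ φ : Fin 3 → J, Function.Injective φ →
      Function.Injective (D.full (res α φ))) {f : Sf (D.V J) 3}
    (hf : ∀ a, D.full α f (Sum.inl a) = 0) {S : Finset J} (hS : 3 ≤ S.card)
    (hp : ∀ j ∈ S, ∀ b, D.full α f (Sum.inr (Sum.inl (j, b))) = 0)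
    (hz : ∀ z, D.full α f (Sum.inr (Sum.inr z)) = 0) {u v w : D.V J} (hu : inB (S : Set J) u)
    (hv : inB (S : Set J) v) (hw : inB (S : Set J) w) : ten f.1 u v w = 0 := by
  obtain ⟨φ, h1, h2, ⟨u, rfl⟩, ⟨v, rfl⟩, ⟨w, rfl⟩⟩ := exists_blocks hS hu hv hw
  obtain ⟨g, hg⟩ := exists_pull (D.vmap φ) f
  obtain ⟨k1, k2, k3⟩ := full_pull h1 hg hf
  have h0 : g = 0 := hI φ h1 <| by
    rw [map_zero]
    ext a
    rcases a with a | ⟨i, b⟩ | z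
    · exact k1 a
    · exact (k2 i b).trans (hp _ (h2 i) b)
    · exact (k3 z).trans (hz z)
  rw [← hg, h0, Submodule.coe_zero, ten, map_zero]
  rfl

/-- Any three variables lie in three blocks, so a cubic form is determined by its restrictions to
triples of blocks. -/
lemma full_injective (hJ : 3 ≤ Fintype.card J) (hI : ∀ φ : Fin 3 → J, Function.Injective φ →
      Function.Injective (D.full (res α φ))) : Function.Injective (D.full α) := by
  rw [injective_iff_map_eq_zero]
  intro f hf
  have hb : ∀ u : D.V J, inB ((Finset.univ : Finset J) : Set J) u := by
    rintro (⟨l, x⟩ | t) <;> simp [inB]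
  exact eq_zero_of_ten fun u v w => ten_eq_zero hI (fun a => by rw [hf]; rfl)
    (S := Finset.univ) (by rwa [Finset.card_univ]) (fun j _ b => by rw [hf]; rfl)
    (fun z => by rw [hf]; rfl) (hb u) (hb v) (hb w)

/-- The form with prescribed normalising coefficients and all points singular agrees, on three
blocks, with the local form with the same coefficients. -/
lemma exists_glue (hs : Function.Surjective (D.full α)) {φ : Fin 3 → J}
    (hφ : Function.Injective φ) (hI : Function.Injective (D.full (res α φ)))
    (g : Sf (D.V (Fin 3)) 3) (hg : ∀ a, D.full (res α φ) g (Sum.inl a) = 0) :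
    ∃ f : Sf (D.V J) 3, (∀ a, D.full α f (Sum.inl a) = 0) ∧
      (∀ j, j ∉ Set.range φ → ∀ b, D.full α f (Sum.inr (Sum.inl (j, b))) = 0) ∧
      (∀ i b, D.full α f (Sum.inr (Sum.inl (φ i, b))) =
        D.full (res α φ) g (Sum.inr (Sum.inl (i, b)))) ∧
      (∀ z, D.full α f (Sum.inr (Sum.inr z)) = D.full (res α φ) g (Sum.inr (Sum.inr z))) ∧
      ∀ u v w, ten g.1 u v w = ten f.1 (D.vmap φ u) (D.vmap φ v) (D.vmap φ w) := by
  classical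
  obtain ⟨f, hf⟩ := hs (Sum.elim 0 (Sum.elim
    (fun jb => Function.extend φ (fun i => D.full (res α φ) g (Sum.inr (Sum.inl (i, jb.2)))) 0 jb.1)
    fun z => D.full (res α φ) g (Sum.inr (Sum.inr z))))
  have h1 : ∀ a, D.full α f (Sum.inl a) = 0 := fun a => by rw [hf]; rfl
  have h2 : ∀ i b, D.full α f (Sum.inr (Sum.inl (φ i, b))) =
      D.full (res α φ) g (Sum.inr (Sum.inl (i, b))) := fun i b => by
    rw [hf, Sum.elim_inr, Sum.elim_inl, hφ.extend_apply]
  have h3 : ∀ z, D.full α f (Sum.inr (Sum.inr z)) = D.full (res α φ) g (Sum.inr (Sum.inr z)) :=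
    fun z => by rw [hf]; rfl
  refine ⟨f, h1, fun j hj b => ?_, h2, h3, ?_⟩
  · rw [hf, Sum.elim_inr, Sum.elim_inl, Function.extend_apply' _ _ _ hj]
    rfl
  · obtain ⟨g', hg'⟩ := exists_pull (D.vmap φ) f
    obtain ⟨k1, k2, k3⟩ := full_pull hφ hg' h1
    have : g' = g := hI <| by
      ext a
      rcases a with a | ⟨i, b⟩ | z
      · rw [k1, hg]
      · rw [k2, h2]
      · rw [k3, h3]
    rwa [this] at hg'

/-- With at least four blocks, the Hessians at the first unit vector of the cubic forms singular
at all the points have no common kernel besides that unit vector. -/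
theorem bj_of_good {α₀ : Alpha (Fin 3)} (hG : D.Good α₀) (h3 : D.Square (Fin 3))
    (hsq : D.Square J) (hJ : 4 ≤ Fintype.card J) (j0 : J) :
    BJ (D.V J) 3 (Sum.inl (j0, 0) : D.Idx J) := by
  classical
  obtain ⟨α, hα⟩ : ∃ α : Alpha J, ∀ φ : Fin 3 ↪ J, D.Good (res α φ) := by
    refine (Gen.all fun φ : Fin 3 ↪ J => ?_).exists_
    let l : Alpha J →ₗ[ℂ] Alpha (Fin 3) := LinearMap.pi fun i => LinearMap.pi fun j =>
      LinearMap.proj (φ j) ∘ₗ LinearMap.proj (φ i)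
    refine Gen.compL (Good.gen D hG) l fun β => ?_
    refine ⟨fun j k => Function.extend φ (fun i => Function.extend φ (fun i' => β i i') 0 k) 0 j, ?_⟩
    funext i i'
    simp only [l, LinearMap.pi_apply, LinearMap.comp_apply, LinearMap.proj_apply]
    rw [φ.injective.extend_apply, φ.injective.extend_apply]
  have hI : ∀ φ : Fin 3 → J, Function.Injective φ → Function.Injective (D.full (res α φ)) :=
    fun φ hφ => (h3.iff _).2 (hα ⟨φ, hφ⟩).surj
  have hs : Function.Surjective (D.full α) := (hsq.iff α).1 (full_injective (by omega) hI)
  refine ⟨D.pt α, fun b => ?_, fun v hv => ?_⟩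
  · obtain ⟨f, hf⟩ := hs (Sum.elim b 0)
    exact ⟨f, funext fun a => by rw [← full_inl, hf, Sum.elim_inl]⟩
  change ∀ f : Sf (D.V J) 3, gmap 3 (D.pt α) f = 0 →
    hess (Pi.single (Sum.inl (j0, 0)) 1) f.1 *ᵥ v = 0 at hv
  -- the components of `v` in the other blocks vanish
  have hk : ∀ k, k ≠ j0 → ∀ x, v (Sum.inl (k, x)) = 0 := by
    intro k hk
    obtain ⟨j, hj⟩ : ∃ j, j ∉ ({j0, k} : Finset J) := by
      by_contra! h
      have h1 := Finset.card_le_card (fun j _ => h j : (Finset.univ : Finset J) ⊆ {j0, k})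
      have h2 := Finset.card_le_two (a := j0) (b := k)
      rw [Finset.card_univ] at h1
      omega
    simp only [Finset.mem_insert, Finset.mem_singleton, not_or] at hj
    have hφ : Function.Injective ![j0, j, k] := by
      intro a b hab
      fin_cases a <;> fin_cases b <;> simp_all
    obtain ⟨g, hg1, hg2⟩ := (hα ⟨_, hφ⟩).two
    change (∀ a, (∀ b, a ≠ _) → D.full (res α ![j0, j, k]) g a = 0) at hg1
    obtain ⟨f, f1, f2, f3, f4, f5⟩ := exists_glue hs hφ (hI _ hφ) g fun a => hg1 _ (by simp)
    have hS : ∀ l ∈ Finset.univ.erase k, ∀ b, D.full α f (Sum.inr (Sum.inl (l, b))) = 0 := by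
      intro l hl b
      have hlk := Finset.ne_of_mem_erase hl
      by_cases hr : l ∈ Set.range ![j0, j, k]
      · obtain ⟨i, rfl⟩ := hr
        rw [f3]
        refine hg1 _ fun b' h => hlk ?_
        simp only [Sum.inr.injEq, Sum.inl.injEq, Prod.mk.injEq] at h
        rw [h.1]
        rfl
      · exact f2 l hr b
    have hT : ∀ a w, (∀ x, w ≠ Sum.inl (k, x)) →
        ten f.1 (Sum.inl (j, a)) w (Sum.inl (j0, 0)) = 0 := by
      intro a w hw
      refine ten_eq_zero hI f1 (S := Finset.univ.erase k) ?_ hS (fun z => ?_) ?_ ?_ ?_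
      · rw [Finset.card_erase_of_mem (Finset.mem_univ k), Finset.card_univ]
        omega
      · rw [f4]
        exact hg1 _ (by simp)
      · simp [inB, hj.2]
      · rcases w with ⟨l, x⟩ | t
        · have : l ≠ k := fun h => hw x (by rw [h])
          simp [inB, this]
        · trivial
      · simp [inB, hk.symm]
    have h0 := Matrix.eq_zero_of_mulVec_eq_zero hg2 (v := fun x => v (Sum.inl (k, x))) <| by
      ext a
      have h1 := congrFun (hv f (funext f1)) (Sum.inl (j, a))
      rw [Pi.zero_apply] at h1 ⊢
      rw [← h1]
      change ∑ b, ten g.1 (Sum.inl (1, a)) (Sum.inl (2, b)) (Sum.inl (0, 0)) * v (Sum.inl (k, b)) =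
        ∑ w, ten f.1 (Sum.inl (j, a)) w (Sum.inl (j0, 0)) * v w
      refine Fintype.sum_of_injective (fun b => (Sum.inl (k, b) : D.V J))
        (fun b b' h => by simpa using h) _ _ (fun w hw => ?_) fun b => ?_
      · rw [hT a w fun x h => hw ⟨x, h.symm⟩, zero_mul]
      · rw [f5]
        rfl
    exact fun x => congrFun h0 x
  -- so that `v` is detected by a form on three blocks
  obtain ⟨φ, hφ, -, ⟨i0, hi0⟩, -⟩ := exists_emb (S := Finset.univ) (by rw [Finset.card_univ]; omega)
    (Finset.mem_univ j0) (Finset.mem_univ j0) (Finset.mem_univ j0)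
  obtain ⟨φ, hφ, h00⟩ : ∃ φ : Fin 3 → J, Function.Injective φ ∧ φ 0 = j0 :=
    ⟨φ ∘ Equiv.swap 0 i0, hφ.comp (Equiv.injective _), by simp [hi0]⟩
  obtain ⟨g, hg1, hg2⟩ := (hα ⟨φ, hφ⟩).sing
  change gmap 3 (D.pt (res α φ)) g = 0 at hg1
  obtain ⟨f, f1, -, -, -, f5⟩ := exists_glue hs hφ (hI _ hφ) g fun a => by rw [full_inl, hg1]; rfl
  have hq : ∀ a, (Pi.single (Sum.inl (0, 0)) 1 : D.V (Fin 3) → ℂ) a =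
      (Pi.single (Sum.inl (j0, 0)) 1 : D.V J → ℂ) (D.vmap φ a) := by
    intro a
    have h1 : (Sum.inl (j0, 0) : D.V J) = D.vmap φ (Sum.inl (0, 0)) := by rw [← h00]; rfl
    rw [h1, Pi.single_apply, Pi.single_apply]
    simp only [(vmap_injective hφ).eq_iff]
  have hq' : ∀ a, a ∉ Set.range (D.vmap φ) → (Pi.single (Sum.inl (j0, 0)) 1 : D.V J → ℂ) a = 0 := by
    intro a ha
    rw [Pi.single_apply, if_neg]
    rintro rfl
    exact ha ⟨Sum.inl (0, 0), by rw [← h00]; rfl⟩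
  have hv0 : ∀ a, a ∉ Set.range (D.vmap φ) → v a = 0 := by
    rintro (⟨l, x⟩ | t) ha
    · refine hk l (fun h => ha ⟨Sum.inl (0, x), ?_⟩) x
      rw [h, ← h00]
      rfl
    · exact absurd ⟨Sum.inr t, rfl⟩ ha
  have h1 : hess (Pi.single (Sum.inl (0, 0)) 1) g.1 *ᵥ (v ∘ D.vmap φ) = 0 := by
    ext a
    have h2 := congrFun (hv f (funext f1)) (D.vmap φ a)
    rw [Pi.zero_apply] at h2 ⊢
    rw [← h2]
    change ∑ b, hess (Pi.single (Sum.inl (0, 0)) 1) g.1 a b * v (D.vmap φ b) =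
      ∑ w, hess (Pi.single (Sum.inl (j0, 0)) 1) f.1 (D.vmap φ a) w * v w
    refine Fintype.sum_of_injective (D.vmap φ) (vmap_injective hφ) _ _ (fun w hw => ?_) fun w => ?_
    · rw [hv0 w hw, mul_zero]
    · rw [hess_pull (vmap_injective hφ) f5 hq hq']
  have hgr : grad (Pi.single (Sum.inl (0, 0)) 1 : D.V (Fin 3) → ℂ) g.1 = 0 :=
    gmap_eq_zero.1 hg1 (Sum.inl (0, 0))
  obtain ⟨s, hs'⟩ := eq_smul_of_corank1 hg2 (by
      rw [hess_mulVec_self (d := 2) g.2, hgr, smul_zero])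
    (fun h => by simpa using congrFun h (Sum.inl (0, 0))) h1
  refine ⟨s, funext fun a => ?_⟩
  change v a = s * (Pi.single (Sum.inl (j0, 0)) 1 : D.V J → ℂ) a
  by_cases ha : a ∈ Set.range (D.vmap φ)
  · obtain ⟨b, rfl⟩ := ha
    rw [← hq]
    exact congrFun hs' b
  · rw [hv0 a ha, hq' a ha, mul_zero]

theorem bs_of_good {α₀ : Alpha (Fin 3)} (hG : D.Good α₀) : BS (D.V (Fin 3)) 3 (D.Idx (Fin 3)) := by
  refine ⟨D.pt α₀, fun b => ?_, Sum.inl (0, 0), hG.sing⟩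
  obtain ⟨f, hf⟩ := hG.surj (Sum.elim b 0)
  exact ⟨f, funext fun a => by rw [← full_inl, hf, Sum.elim_inl]⟩

end Glue
end BlockData

/-! ### The numerical checks for three blocks -/

namespace BlockData
section Check
variable (D : BlockData)

/-- The points other than the unit vectors, for three blocks. -/
abbrev Idx' : Type :=
  ({jk : Fin 3 × Fin 3 // jk.1 < jk.2} × Fin 3) ⊕ (Fin 3 × Fin D.nd) ⊕ Fin D.nv

/-- The numbering of the variables, for three blocks. -/
def code : D.V (Fin 3) ≃ Fin (9 + D.c) :=
  (Equiv.sumCongr (finProdFinEquiv (m := 3) (n := 3)) (Equiv.refl _)).trans finSumFinEquiv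

lemma code_inl (j x : Fin 3) : (D.code (Sum.inl (j, x)) : ℕ) = (x : ℕ) + 3 * j := by
  simp only [code, Equiv.trans_apply, Equiv.sumCongr_apply, Sum.map_inl, finSumFinEquiv_apply_left,
    Fin.val_castAdd]
  rfl

lemma code_lt (a : Fin 3 × Fin 3) : (D.code (Sum.inl a) : ℕ) < 9 := by
  simp [code]

/-- The numbers of the variables. -/
def codeN : D.V (Fin 3) → ℕ
  | Sum.inl (j, x) => x + 3 * j
  | Sum.inr t => 9 + t

lemma codeN_eq : ∀ v, D.codeN v = D.code v
  | Sum.inl (j, x) => (D.code_inl j x).symm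
  | Sum.inr _ => rfl

/-- The numbering of the points. -/
def encP : D.Idx' → ℕ
  | Sum.inl (jk, i) => 3 * ((jk.1.1 : ℕ) + jk.1.2 - 1) + i
  | Sum.inr (Sum.inl (j, t)) => 9 + D.nd * j + t
  | Sum.inr (Sum.inr t) => 9 + D.nd * 3 + t

/-- The numbering of the normalising coefficients. -/
def encG : D.Par (Fin 3) → ℕ
  | Sum.inr z => z
  | Sum.inl (j, b) => D.nz + D.nb * j + b

/-- The block components of the pair points, read off from the list of points. -/
def alphaN (P : List (List ℕ)) (j k i x : Fin 3) : ℕ :=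
  (P.getD (3 * ((j : ℕ) + k - 1) + i) []).getD ((x : ℕ) + 3 * j) 0

/-- The coordinates of the points, as natural numbers. -/
def ptN (P : List (List ℕ)) : D.Idx' → D.V (Fin 3) → ℕ
  | Sum.inl (jk, i), Sum.inl (l, x) =>
    if l = jk.1.1 then alphaN P jk.1.1 jk.1.2 i x
    else if l = jk.1.2 then alphaN P jk.1.2 jk.1.1 i x else 0
  | Sum.inl (_, i), Sum.inr t => D.ω i t
  | Sum.inr (Sum.inl (j, t)), Sum.inl (l, x) => if l = j then D.δ t (Sum.inl x) else 0
  | Sum.inr (Sum.inl (_, t)), Sum.inr s => D.δ t (Sum.inr s)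
  | Sum.inr (Sum.inr _), Sum.inl _ => 0
  | Sum.inr (Sum.inr t), Sum.inr s => D.ν t s

lemma pt_eq (P : List (List ℕ)) (a : D.Idx') (v : D.V (Fin 3)) :
    D.pt (fun j k i x => (alphaN P j k i x : ℂ)) (Sum.inr a) v = D.ptN P a v := by
  rcases a with ⟨⟨⟨j, k⟩, h⟩, i⟩ | ⟨j, t⟩ | t <;> rcases v with ⟨l, x⟩ | s
  · simp only [pt, pairPt, ptN]
    split_ifs <;> simp
  · rfl
  · simp only [pt, blkPt, ptN]
    split_ifs <;> simp
  · rfl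
  · simp [pt, outPt, ptN]
  · rfl

/-- The numbers of the gradient conditions at `s` points and of `g` further conditions. -/
def rowsOf (q s g : ℕ) : List (ℕ × ℕ) :=
  List.product (List.range s) (List.range q) ++ (List.range g).map fun t => (s + t, 0)

/-- The functional with a given number. -/
def rowFn (q : ℕ) (P : List (List ℕ)) (G : List (ℕ × ℕ × ℕ)) (r : ℕ × ℕ) : List ℕ × List ℕ :=
  bif Nat.blt r.1 P.length then ([r.2], P.getD r.1 []) else
    ([(G.getD (r.1 - P.length) (0, 0, 0)).2.1, (G.getD (r.1 - P.length) (0, 0, 0)).1],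
      eL q (G.getD (r.1 - P.length) (0, 0, 0)).2.2)

/-- The numerical check of independence of all the conditions. -/
def chkFull (q p b : ℕ) (P : List (List ℕ)) (G : List (ℕ × ℕ × ℕ)) : Bool :=
  elim (2 ^ b) p (Wof q 3 9).length p
    ((rowsOf q P.length G.length).map fun r => packMod (2 ^ b) p (rowW (Wof q 3 9) (rowFn q P G r)))

/-- The numerical check that the conditions vanish at the form `e`. -/
def chkKer (q p : ℕ) (P : List (List ℕ)) (G : List (ℕ × ℕ × ℕ)) (g : ℕ) (e : List ℕ) : Bool :=
  (rowsOf q P.length g).all fun r =>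
    Nat.beq (dotN (rowW (Wof q 3 9) (rowFn q P G r)) e % p) 0

/-- The second derivatives of the form `e` entering the condition on two blocks. -/
def chkTwo (q p b : ℕ) (e : List ℕ) : Bool :=
  elim (2 ^ b) p 3 p ((List.range 3).map fun a => packMod (2 ^ b) p (rowH (Wof q 3 9) e 3
      (fun a b => ([6 + b, 3 + a], eL q 0)) (fun _ _ => 0) a))

/-- The numerical check that the Hessian of the form `e` has corank one. -/
def chkSing (q p b : ℕ) (e : List ℕ) : Bool :=
  elim (2 ^ b) p q p ((List.range q).map fun a => packMod (2 ^ b) p (rowH (Wof q 3 9) e q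
      (fun a b => ([b, a], eL q 0)) (fun a b => bif Nat.beq a 0 && Nat.beq b 0 then 1 else 0) a))

/-- All the numerical checks. -/
def chkAll (q p b nz nb : ℕ) (P : List (List ℕ)) (G : List (ℕ × ℕ × ℕ)) (e₁ e₂ : List ℕ) : Bool :=
  goodW q 3 (Wof q 3 9) && (chkFull q p b P G && (chkKer q p P G (nz + nb * 2) e₁ &&
    (chkTwo q p b e₁ && (chkKer q p P G 0 e₂ && chkSing q p b e₂))))

lemma mem_rowsOf {q s g : ℕ} {r : ℕ × ℕ} :
    r ∈ rowsOf q s g ↔ (r.1 < s ∧ r.2 < q) ∨ ∃ t < g, (s + t, 0) = r := by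
  obtain ⟨a, u⟩ := r
  rw [rowsOf, List.mem_append, List.mem_map, List.pair_mem_product]
  simp

lemma mul_add_inj {m : ℕ} {j j' : Fin 3} {t t' : Fin m}
    (h : m * (j : ℕ) + t = m * j' + t') : j = j' ∧ t = t' := by
  have h1 := t.2
  have h2 := t'.2
  have hj : (j : ℕ) = j' := by
    obtain ⟨j, hj⟩ := j
    obtain ⟨j', hj'⟩ := j'
    simp only at h ⊢
    interval_cases j <;> interval_cases j' <;> omega
  rw [hj] at h
  exact ⟨Fin.ext hj, Fin.ext (by omega)⟩

lemma encP_inj : ∀ a a' : D.Idx', D.encP a = D.encP a' → a = a' := by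
  have hlt : ∀ (j : Fin 3) (t : Fin D.nd), D.nd * (j : ℕ) + t < D.nd * 3 := fun j t => by
    have := t.2
    obtain ⟨j, hj⟩ := j
    simp only
    interval_cases j <;> omega
  rintro (⟨⟨⟨j, k⟩, h⟩, i⟩ | ⟨j, t⟩ | t) (⟨⟨⟨j', k'⟩, h'⟩, i'⟩ | ⟨j', t'⟩ | t') he <;>
    simp only [encP] at he
  · have : j = j' ∧ k = k' ∧ i = i' := by
      simp only [Fin.lt_def] at h h'
      omega
    obtain ⟨rfl, rfl, rfl⟩ := this
    rfl
  · simp only [Fin.lt_def] at h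
    omega
  · simp only [Fin.lt_def] at h
    omega
  · simp only [Fin.lt_def] at h'
    omega
  · obtain ⟨rfl, rfl⟩ := mul_add_inj (m := D.nd) (j := j) (j' := j') (t := t) (t' := t') (by omega)
    rfl
  · have := hlt j t
    omega
  · simp only [Fin.lt_def] at h'
    omega
  · have := hlt j' t'
    omega
  · have : t = t' := by omega
    rw [this]

lemma encG_inj : ∀ a a' : D.Par (Fin 3), D.encG a = D.encG a' → a = a' := by
  rintro (⟨j, t⟩ | t) (⟨j', t'⟩ | t') he <;> simp only [encG] at he
  · obtain ⟨rfl, rfl⟩ := mul_add_inj (m := D.nb) (j := j) (j' := j') (t := t) (t' := t') (by omega)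
    rfl
  · omega
  · omega
  · rw [Fin.ext he]
lemma good_of_chk {P : List (List ℕ)} {G : List (ℕ × ℕ × ℕ)} {p b : ℕ} {e₁ e₂ : List ℕ}
    [Fact p.Prime]
    (hP : ∀ a, D.encP a < P.length ∧ ∀ v, (P.getD (D.encP a) []).getD (D.codeN v) 0 = D.ptN P a v)
    (hG : ∀ t, D.encG t < G.length ∧ G.getD (D.encG t) (0, 0, 0) =
      (D.codeN (D.parV t).1, D.codeN (D.parV t).2.1, D.codeN (D.parV t).2.2))
    (hGq : ∀ g ∈ G, g.1 < 9 + D.c ∧ g.2.1 < 9 + D.c)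
    (hall : chkAll (9 + D.c) p b D.nz D.nb P G e₁ e₂ = true) :
    ∃ α, D.Good α := by
  have : NeZero (9 + D.c) := ⟨by omega⟩
  have hp := (Fact.out : p.Prime).pos
  set q := 9 + D.c with hq
  simp only [codeN_eq] at hP hG
  simp only [chkAll, Bool.and_eq_true] at hall
  obtain ⟨hW, h, h1, h2, h3, h4⟩ := hall
  -- the rows of the table and the functionals they stand for
  obtain ⟨α, hα⟩ : ∃ α : Alpha (Fin 3), α = fun j k i x => (alphaN P j k i x : ℂ) := ⟨_, rfl⟩
  have hpt : ∀ a, ptOf D.code (P.getD (D.encP a) []) =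
      D.pt α (Sum.inr a) := fun a => by
    ext v
    rw [hα, pt_eq, ← (hP a).2 v]
    rfl
  have hfp : ∀ a v, rowFn q P G (D.encP a, (D.code v : ℕ)) =
      ([(D.code v : ℕ)], P.getD (D.encP a) []) := fun a v => by
    have : Nat.blt (D.encP a) P.length = true := by
      rw [Nat.blt_eq]
      exact (hP a).1
    simp [rowFn, this]
  have hfg : ∀ t, rowFn q P G (P.length + D.encG t, 0) =
      ([(D.code (D.parV t).2.1 : ℕ), (D.code (D.parV t).1 : ℕ)],
        eL q (D.code (D.parV t).2.2)) := fun t => by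
    have : Nat.blt (P.length + D.encG t) P.length = false := by
      rw [Bool.eq_false_iff]
      intro h
      rw [Nat.blt_eq] at h
      omega
    simp only [rowFn, this, cond_false, Nat.add_sub_cancel_left, (hG t).2]
  have hlt : ∀ g, g ≤ G.length → ∀ r ∈ rowsOf q P.length g, ∀ i ∈ (rowFn q P G r).1, i < q := by
    intro g hg r hr i hi
    rcases mem_rowsOf.1 hr with ⟨ha, hb⟩ | ⟨t, ht, rfl⟩
    · have : Nat.blt r.1 P.length = true := by
        rw [Nat.blt_eq]
        exact ha
      simp only [rowFn, this, cond_true, List.mem_singleton] at hi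
      rw [hi]
      exact hb
    · have hb : Nat.blt (P.length + t) P.length = false := by
        rw [Bool.eq_false_iff]
        intro h
        rw [Nat.blt_eq] at h
        omega
      have := hGq _ (List.getElem_mem (ht.trans_le hg))
      rw [← List.getD_eq_getElem G (0, 0, 0)] at this
      simp only [rowFn, hb, cond_false, Nat.add_sub_cancel_left, List.mem_cons, List.not_mem_nil,
        or_false] at hi
      rcases hi with rfl | rfl
      · exact this.2
      · exact this.1
  have hgz : ∀ f : MvPolynomial (D.V (Fin 3)) ℂ, (∀ z ∈ ezs q 9, Fnl D.code z.1 z.2 f = 0) →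
      ∀ a, grad (Pi.single (Sum.inl a) 1 : D.V (Fin 3) → ℂ) f = 0 := by
    intro f hf a
    ext u
    have := hf _ (mem_ezs (D.code_lt a) (D.code u).2)
    rw [Fnl_grad, ptOf_eL] at this
    exact this
  have hR : ∀ a v g, (D.encP a, (D.code v : ℕ)) ∈ rowsOf q P.length g := fun a v g =>
    mem_rowsOf.2 (Or.inl ⟨(hP a).1, (D.code v).2⟩)
  have hS : SolvMod p (rowsOf q P.length G.length) fun r => rowW (Wof q 3 9) (rowFn q P G r) :=
    solvMod_of_elim hp (fun r _ => by simp [rowW]) h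
  have hSg : ∀ g ≤ G.length, SolvMod p (rowsOf q P.length g) fun r =>
      rowW (Wof q 3 9) (rowFn q P G r) := fun g hg => hS.mono fun r hr => by
    rcases mem_rowsOf.1 hr with h | ⟨t, ht, h⟩
    · exact mem_rowsOf.2 (Or.inl h)
    · exact mem_rowsOf.2 (Or.inr ⟨t, by omega, h⟩)
  have hgr : ∀ f : MvPolynomial (D.V (Fin 3)) ℂ, ∀ a v,
      Fnl D.code (rowFn q P G (D.encP a, (D.code v : ℕ))).1
        (rowFn q P G (D.encP a, (D.code v : ℕ))).2 f =
      eval (D.pt α (Sum.inr a)) (pderiv v f) := by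
    intro f a v
    rw [hfp, Fnl_grad, hpt]
  have hte : ∀ f : MvPolynomial (D.V (Fin 3)) ℂ, ∀ t,
      Fnl D.code (rowFn q P G (P.length + D.encG t, 0)).1
        (rowFn q P G (P.length + D.encG t, 0)).2 f =
      ten f (D.parV t).1 (D.parV t).2.1 (D.parV t).2.2 := by
    intro f t
    rw [hfg, Fnl_hess, ptOf_eL]
    rfl
  have hsum : D.pt α =
      Sum.elim (fun a => Pi.single (Sum.inl a) 1)
        fun a => D.pt α (Sum.inr a) := by
    funext a
    rcases a with a | a <;> rfl
  have hker : ∀ f : Sf (D.V (Fin 3)) 3, (∀ a, grad (Pi.single (Sum.inl a) 1) f.1 = 0) →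
      (∀ a v, eval (D.pt α (Sum.inr a)) (pderiv v f.1) = 0) →
      gmap 3 (D.pt α) f = 0 := by
    intro f hf1 hf2
    rw [gmap_eq_zero]
    rintro (a | a)
    · exact hf1 a
    · ext v
      rw [grad_apply, hf2]
      rfl
  classical
  refine ⟨α, ?_, ?_, ?_⟩
  · intro c
    obtain ⟨f, hf1, hf2⟩ := gmap_sum_single_surj (d := 3) le_rfl
      (Sum.inl : Fin 3 × Fin 3 → D.V (Fin 3)) Sum.inl_injective
      (fun a => D.pt α (Sum.inr a))
      (fun t : D.Par (Fin 3) => LinearMap.proj (D.parV t).2.1 ∘ₗ LinearMap.proj (D.parV t).1 ∘ₗ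
        hess (Pi.single (D.parV t).2.2 1)) (fun b b' => by
        obtain ⟨f, hf, h1, h2⟩ := cert_surj (W := Wof q 3 9) (fn := rowFn q P G)
          (R := rowsOf q P.length G.length) D.code hS hW (hlt G.length le_rfl) (Wof_vanish hW) ezs_lt
          fun r => if h : ∃ a v, (D.encP a, (D.code v : ℕ)) = r then
              b (h.choose, h.choose_spec.choose)
            else if h : ∃ t, P.length + D.encG t = r.1 then b' h.choose else 0
        refine ⟨f, hf, hgz f h2, fun a v => ?_, fun t => ?_⟩
        · have h3 := h1 _ (hR a v _)
          have hex : ∃ a' v', (D.encP a', (D.code v' : ℕ)) = (D.encP a, (D.code v : ℕ)) :=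
            ⟨a, v, rfl⟩
          rw [hgr, dif_pos hex] at h3
          rw [h3]
          have h5 := Prod.ext_iff.1 hex.choose_spec.choose_spec
          exact congrArg b (Prod.ext (D.encP_inj _ _ h5.1) (D.code.injective (Fin.ext h5.2)))
        · have h3 := h1 _ (mem_rowsOf.2 (Or.inr ⟨_, (hG t).1, rfl⟩))
          have hne : ¬ ∃ a' v', (D.encP a', (D.code v' : ℕ)) = (P.length + D.encG t, 0) := by
            rintro ⟨a', v', h5⟩
            have := (hP a').1
            have := (Prod.ext_iff.1 h5).1
            simp only at this
            omega
          have hex : ∃ t', P.length + D.encG t' = P.length + D.encG t := ⟨t, rfl⟩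
          rw [hte, dif_neg hne, dif_pos hex] at h3
          have h5 := D.encG_inj _ _ (Nat.add_left_cancel hex.choose_spec)
          rw [h5] at h3
          exact h3) (fun a => c (Sum.inl a)) fun t => c (Sum.inr t)
    refine ⟨f, funext fun a => ?_⟩
    rcases a with a | t
    · rw [full_inl, hsum, hf1]
    · rw [full_inr]
      exact hf2 t
  · have hg : D.nz + D.nb * 2 ≤ G.length := by
      by_contra hh
      obtain ⟨t, ht⟩ : ∃ t, G.length ≤ D.encG t := by
        by_cases h0 : D.nz = 0
        · exact ⟨Sum.inl (1, ⟨D.nb - 1, by omega⟩), by simp [encG]; omega⟩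
        · by_cases hb : D.nb = 0
          · exact ⟨Sum.inr ⟨D.nz - 1, by omega⟩, by simp [encG]; omega⟩
          · exact ⟨Sum.inl (1, ⟨D.nb - 1, by omega⟩), by simp [encG]; omega⟩
      exact absurd (hG t).1 (not_lt.2 ht)
    obtain ⟨f, hf, h5, h6, h7⟩ := cert_ker (W := Wof q 3 9) (fn := rowFn q P G)
      (R := rowsOf q P.length (D.nz + D.nb * 2)) D.code (hSg _ hg) hW (hlt _ hg) (Wof_vanish hW) ezs_lt e₁
      (fun r hr => Nat.eq_of_beq_eq_true (List.all_eq_true.1 h1 r hr))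
      (fun a b => ([6 + b, 3 + a], eL q 0)) (fun _ _ => 0)
      (fun a ha b hb i hi => by
        simp only [List.mem_cons, List.not_mem_nil, or_false] at hi
        omega)
      (solvMod_of_elim hp (fun r _ => by simp [rowH]) h2)
    have hk := hker ⟨f, hf⟩ (hgz f h6) fun a v => by rw [← hgr]; exact h5 _ (hR a v _)
    refine ⟨⟨f, hf⟩, ?_, ?_⟩
    · rintro (a | t) ha
      · rw [full_inl, hk]
        rfl
      · rw [full_inr, ← hte]
        refine h5 _ (mem_rowsOf.2 (Or.inr ⟨_, ?_, rfl⟩))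
        rcases t with ⟨j, b⟩ | z
        · have hj : j ≠ 2 := fun hj => ha b (by rw [hj])
          have hj' : (j : ℕ) ≤ 1 := by
            have := j.2
            have : (j : ℕ) ≠ 2 := fun h => hj (Fin.ext h)
            omega
          have := Nat.mul_le_mul_left D.nb hj'
          have := b.2
          change D.nz + D.nb * j + b < _
          omega
        · have := z.2
          change (z : ℕ) < _
          omega
    · refine fun h0 => h7 (Eq.trans (congrArg Matrix.det ?_) h0)
      ext a b
      have h8 := Fnl_hess D.code (eL q (D.code (Sum.inl (0, 0)))) f (Sum.inl (1, a)) (Sum.inl (2, b))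
      rw [ptOf_eL] at h8
      have ha : (D.code (Sum.inl (1, a)) : ℕ) = 3 + a := by rw [code_inl, add_comm]; rfl
      have hb : (D.code (Sum.inl (2, b)) : ℕ) = 6 + b := by rw [code_inl, add_comm]; rfl
      have h0 : (D.code (Sum.inl (0, 0)) : ℕ) = 0 := D.code_inl 0 0
      rw [ha, hb, h0] at h8
      change Fnl D.code [6 + b.val, 3 + a.val] (eL q 0) f + ((0 : ℕ) : ℂ) =
        ten f (Sum.inl (1, a)) (Sum.inl (2, b)) (Sum.inl (0, 0))
      rw [h8, Nat.cast_zero, add_zero, ten]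
  · obtain ⟨f, hf, h5, h6, h7⟩ := cert_ker (W := Wof q 3 9) (fn := rowFn q P G)
      (R := rowsOf q P.length 0) D.code (hSg 0 (Nat.zero_le _)) hW (hlt _ (Nat.zero_le _))
      (Wof_vanish hW) ezs_lt e₂
      (fun r hr => Nat.eq_of_beq_eq_true (List.all_eq_true.1 h3 r hr))
      (fun a b => ([b, a], eL q 0)) (fun a b => bif Nat.beq a 0 && Nat.beq b 0 then 1 else 0)
      (fun a ha b hb i hi => by
        simp only [List.mem_cons, List.not_mem_nil, or_false] at hi
        rcases hi with rfl | rfl <;> assumption)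
      (solvMod_of_elim hp (fun r _ => by simp [rowH]) h4)
    refine ⟨⟨f, hf⟩, hker ⟨f, hf⟩ (hgz f h6) fun a v => by rw [← hgr]; exact h5 _ (hR a v _), ?_⟩
    refine corank1_of_det D.code (fun a => if a.val = 0 then 1 else 0) ?_
    refine fun h0 => h7 (Eq.trans (congrArg Matrix.det ?_) h0)
    ext a b
    have h8 := Fnl_hess D.code (eL q (D.code (Sum.inl (0, 0)))) f (D.code.symm a) (D.code.symm b)
    have h0 : (D.code (Sum.inl (0, 0)) : ℕ) = 0 := D.code_inl 0 0
    rw [ptOf_eL, h0, Equiv.apply_symm_apply, Equiv.apply_symm_apply] at h8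
    rw [Matrix.of_apply, Matrix.of_apply]
    rw [h8]
    have hbeq : ∀ n, Nat.beq n 0 = decide (n = 0) := fun n => by cases n <;> rfl
    by_cases ha : a.val = 0 <;> by_cases hb : b.val = 0 <;> simp [ha, hb, hbeq]

end Check
end BlockData

/-! ### The three families of points

The list `P` contains the points other than the unit vectors, `G` the index triples of the
normalising coefficients, and `e₁`, `e₂` the residues modulo `101` of the coefficients of the forms
(on the monomials that are singular at the unit vectors) required by `Good.two` and `Good.sing`.
-/

namespace BlockData

/-- The family of points without variables outside the blocks. -/
def data0 : BlockData where
  c := 0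
  nb := 1
  nz := 0
  nd := 0
  nv := 0
  bp := fun _ => (Sum.inl 0, Sum.inl 1, Sum.inl 2)
  vp := fun z => z.elim0
  δ := fun t => t.elim0
  ν := fun t => t.elim0
  ω := fun _ t => t.elim0

/-- The family of points with one variable outside the blocks. -/
def data1 : BlockData where
  c := 1
  nb := 3
  nz := 1
  nd := 1
  nv := 0
  bp := ![(Sum.inl 0, Sum.inl 1, Sum.inl 2), (Sum.inl 0, Sum.inl 1, Sum.inr 0),
    (Sum.inl 0, Sum.inl 2, Sum.inr 0)]
  vp := fun _ => (0, 0, 0)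
  δ := fun _ _ => 1
  ν := fun t => t.elim0
  ω := fun _ _ => 1

/-- The family of points with two variables outside the blocks. -/
def data2 : BlockData where
  c := 2
  nb := 3
  nz := 2
  nd := 2
  nv := 1
  bp := ![(Sum.inl 0, Sum.inl 1, Sum.inl 2), (Sum.inl 0, Sum.inl 1, Sum.inr 0),
    (Sum.inl 0, Sum.inl 1, Sum.inr 1)]
  vp := ![(0, 0, 0), (0, 0, 1)]
  δ := fun t => Sum.elim (if t = 0 then 1 else fun x => x + 1) (Pi.single t 1)
  ν := fun _ _ => 1
  ω := fun i => ![1, i + 2]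


set_option maxRecDepth 100000 in
lemma good0 : ∃ α, data0.Good α :=
  good_of_chk data0 (p := 101) (b := 578)
    (P := [[3, 4, 4, 9, 7, 8, 0, 0, 0], [6, 9, 0, 7, 3, 6, 0, 0, 0], [6, 2, 5, 8, 5, 1, 0, 0,
      0], [7, 8, 1, 0, 0, 0, 2, 8, 6], [5, 7, 0, 0, 0, 0, 7, 0, 4], [9, 9, 9, 0, 0, 0, 6, 2, 2],
      [0, 0, 0, 8, 3, 0, 3, 8, 8], [0, 0, 0, 3, 6, 8, 5, 9, 5], [0, 0, 0, 7, 4, 8, 9, 0, 6]])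
    (G := [(0, 1, 2), (3, 4, 5), (6, 7, 8)])
    (e₁ := [0, 0, 0, 0, 0, 88, 0, 0, 0, 0, 98, 33, 32, 0, 0, 71, 17, 84, 0, 37, 45, 23, 80, 15,
      97, 87, 0, 0, 0, 0, 0, 51, 91, 35, 0, 0, 61, 46, 47, 0, 3, 2, 1, 36, 54, 43, 27, 0, 35, 0,
      0, 17, 3, 86, 0, 29, 70, 18, 1, 19, 100, 59, 37, 73, 0, 62, 1, 3, 87, 34, 4, 83, 51, 50,
      46, 6, 3, 17, 97, 31, 81, 71, 74, 2])
    (e₂ := [80, 2, 35, 62, 0, 35, 0, 11, 26, 88, 52, 94, 38, 34, 99, 56, 95, 66, 73, 49, 84, 84,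
      18, 33, 84, 62, 0, 23, 93, 46, 12, 26, 18, 51, 78, 52, 41, 81, 95, 28, 47, 7, 29, 47, 60,
      83, 89, 0, 21, 100, 2, 0, 78, 94, 41, 67, 0, 13, 56, 79, 2, 0, 36, 1, 95, 14, 86, 38, 60,
      22, 34, 78, 13, 91, 81, 76, 91, 20, 52, 71, 86, 3, 1, 3])
    (by simp only [Idx', V, Sum.forall, Prod.forall, Subtype.forall]; decide +kernel)
    (by decide +kernel) (by decide +kernel) (by decide +kernel)

set_option maxRecDepth 100000 in
lemma good1 : ∃ α, data1.Good α :=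
  good_of_chk data1 (p := 101) (b := 886)
    (P := [[9, 3, 9, 7, 2, 9, 0, 0, 0, 1], [8, 0, 6, 3, 5, 1, 0, 0, 0, 1], [3, 9, 6, 9, 3, 7, 0,
      0, 0, 1], [1, 6, 4, 0, 0, 0, 8, 7, 0, 1], [5, 9, 6, 0, 0, 0, 4, 0, 2, 1], [3, 5, 9, 0, 0,
      0, 2, 5, 6, 1], [0, 0, 0, 3, 4, 1, 6, 8, 5, 1], [0, 0, 0, 8, 7, 8, 3, 1, 0, 1], [0, 0, 0,
      1, 2, 2, 2, 8, 3, 1], [1, 1, 1, 0, 0, 0, 0, 0, 0, 1], [0, 0, 0, 1, 1, 1, 0, 0, 0, 1], [0,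
      0, 0, 0, 0, 0, 1, 1, 1, 1]])
    (G := [(9, 9, 9), (0, 1, 2), (0, 1, 9), (0, 2, 9), (3, 4, 5), (3, 4, 9), (3, 5, 9), (6, 7,
      8), (6, 7, 9), (6, 8, 9)])
    (e₁ := [0, 0, 0, 0, 22, 91, 76, 0, 0, 0, 0, 2, 0, 26, 0, 0, 0, 81, 33, 56, 0, 0, 18, 62, 7,
      0, 42, 7, 3, 0, 71, 12, 97, 52, 58, 13, 0, 0, 0, 0, 86, 13, 89, 0, 0, 0, 1, 49, 14, 0, 0,
      66, 8, 14, 0, 57, 72, 100, 0, 0, 33, 73, 97, 19, 81, 0, 0, 0, 14, 8, 80, 0, 0, 77, 88, 3,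
      0, 66, 2, 34, 0, 8, 42, 22, 94, 20, 16, 0, 0, 53, 75, 0, 0, 65, 69, 10, 0, 87, 37, 89, 11,
      65, 14, 0, 33, 47, 78, 0, 7, 5, 85, 22, 17, 66, 0, 46, 48, 78, 70, 29, 32, 0, 4, 99, 98,
      1, 98, 1, 2, 0])
    (e₂ := [99, 90, 66, 48, 27, 9, 49, 4, 8, 52, 32, 15, 0, 94, 21, 87, 59, 75, 18, 57, 50, 13,
      31, 73, 86, 82, 80, 29, 17, 35, 80, 3, 30, 37, 66, 9, 78, 3, 55, 44, 76, 59, 84, 80, 72,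
      73, 8, 84, 33, 26, 61, 86, 16, 59, 18, 54, 99, 57, 34, 93, 59, 7, 99, 63, 64, 19, 64, 35,
      62, 53, 76, 100, 54, 58, 13, 66, 41, 94, 17, 86, 7, 37, 19, 46, 94, 2, 2, 2, 17, 7, 16,
      54, 86, 2, 8, 59, 73, 65, 9, 60, 81, 19, 43, 26, 66, 74, 30, 9, 86, 55, 67, 11, 80, 15,
      90, 74, 75, 100, 50, 2, 0, 2, 5, 97, 99, 1, 97, 3, 1, 0])
    (by simp only [Idx', V, Sum.forall, Prod.forall, Subtype.forall]; decide +kernel)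
    (by decide +kernel) (by decide +kernel) (by decide +kernel)

set_option maxRecDepth 100000 in
set_option maxHeartbeats 4000000 in
lemma good2 : ∃ α, data2.Good α :=
  good_of_chk data2 (p := 101) (b := 1268)
    (P := [[7, 6, 8, 4, 8, 7, 0, 0, 0, 1, 2], [8, 7, 0, 6, 5, 2, 0, 0, 0, 1, 3], [4, 7, 0, 6, 9,
      0, 0, 0, 0, 1, 4], [0, 5, 9, 0, 0, 0, 2, 9, 2, 1, 2], [2, 4, 4, 0, 0, 0, 6, 9, 6, 1, 3],
      [2, 9, 1, 0, 0, 0, 3, 7, 0, 1, 4], [0, 0, 0, 2, 8, 5, 8, 7, 3, 1, 2], [0, 0, 0, 3, 5, 7,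
      7, 3, 6, 1, 3], [0, 0, 0, 5, 8, 9, 4, 3, 0, 1, 4], [1, 1, 1, 0, 0, 0, 0, 0, 0, 1, 0], [1,
      2, 3, 0, 0, 0, 0, 0, 0, 0, 1], [0, 0, 0, 1, 1, 1, 0, 0, 0, 1, 0], [0, 0, 0, 1, 2, 3, 0, 0,
      0, 0, 1], [0, 0, 0, 0, 0, 0, 1, 1, 1, 1, 0], [0, 0, 0, 0, 0, 0, 1, 2, 3, 0, 1], [0, 0, 0,
      0, 0, 0, 0, 0, 0, 1, 1]])
    (G := [(9, 9, 9), (9, 9, 10), (0, 1, 2), (0, 1, 9), (0, 1, 10), (3, 4, 5), (3, 4, 9), (3, 4,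
      10), (6, 7, 8), (6, 7, 9), (6, 7, 10)])
    (e₁ := [0, 0, 0, 0, 90, 30, 87, 0, 0, 0, 0, 0, 89, 22, 53, 0, 0, 0, 0, 28, 14, 89, 0, 0, 0,
      56, 95, 6, 0, 0, 28, 58, 92, 0, 0, 26, 84, 90, 2, 71, 69, 72, 64, 11, 0, 0, 0, 0, 0, 0,
      34, 31, 36, 0, 0, 0, 0, 8, 72, 69, 0, 0, 0, 76, 20, 58, 0, 0, 22, 43, 9, 0, 0, 24, 6, 99,
      3, 34, 48, 100, 92, 78, 0, 0, 0, 0, 0, 74, 41, 30, 0, 0, 0, 40, 47, 84, 0, 0, 27, 14, 81,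
      0, 0, 84, 2, 2, 17, 91, 48, 41, 76, 30, 0, 0, 0, 0, 26, 59, 7, 0, 0, 41, 41, 98, 0, 0, 31,
      70, 5, 49, 96, 92, 74, 9, 22, 0, 0, 0, 98, 9, 12, 0, 0, 78, 69, 90, 27, 71, 92, 75, 4, 82,
      0, 0, 0, 76, 1, 43, 49, 51, 56, 29, 76, 80, 0, 0, 0, 51, 46, 52, 4, 100, 0, 3, 98, 50,
      100, 55, 46, 0, 97, 2, 2, 0, 0, 0, 0])
    (e₂ := [69, 9, 14, 44, 59, 66, 28, 30, 47, 7, 14, 47, 7, 81, 59, 30, 22, 84, 76, 80, 13, 66,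
      52, 88, 86, 44, 34, 80, 78, 11, 95, 43, 81, 56, 19, 40, 22, 84, 17, 73, 70, 80, 42, 5, 73,
      97, 32, 31, 48, 60, 100, 30, 17, 4, 71, 75, 54, 3, 62, 75, 82, 17, 3, 51, 49, 82, 73, 93,
      0, 8, 59, 18, 79, 70, 92, 40, 13, 64, 62, 13, 78, 78, 99, 65, 38, 83, 77, 55, 95, 42, 33,
      8, 18, 84, 14, 24, 12, 26, 58, 52, 59, 82, 47, 47, 19, 56, 84, 67, 33, 82, 83, 2, 99, 1,
      1, 48, 65, 78, 69, 49, 61, 63, 81, 8, 16, 88, 98, 29, 68, 29, 50, 7, 60, 63, 48, 89, 80,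
      33, 61, 58, 91, 41, 8, 21, 26, 42, 100, 72, 100, 34, 79, 72, 64, 64, 74, 17, 64, 47, 40,
      63, 18, 78, 98, 2, 97, 2, 2, 15, 82, 10, 47, 5, 58, 67, 77, 43, 82, 62, 37, 2, 97, 1, 3,
      0, 0, 0, 0])
    (by simp only [Idx', V, Sum.forall, Prod.forall, Subtype.forall]; decide +kernel)
    (by decide +kernel) (by decide +kernel) (by decide +kernel)

end BlockData

/-! ### Cubics in nine or more variables -/

section Transport
variable {σ τ : Type} [Fintype σ] [Fintype τ]

lemma eval_pderiv_rename (e : σ ≃ τ) (p : σ → ℂ) (f : MvPolynomial σ ℂ) (j : σ) :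
    eval (p ∘ e.symm) (pderiv (e j) (rename e f)) = eval p (pderiv j f) := by
  rw [pderiv_rename e.injective, eval_rename]
  congr 2
  ext; simp

/-- The joint Hessian condition does not depend on the names of the variables. -/
lemma BJ.equiv {ι : Type} {d : ℕ} {i : ι} (e : σ ≃ τ) (h : BJ σ d i) : BJ τ d i := by
  obtain ⟨p, hp, hv⟩ := h
  have hmem : ∀ f : Sf σ d, rename e f.1 ∈ Sf τ d := fun f =>
    (mem_homogeneousSubmodule _ _).2 (((mem_homogeneousSubmodule _ _).1 f.2).rename_isHomogeneous)
  have hg : ∀ (f : Sf σ d) i j, gmap d (fun i => p i ∘ e.symm) ⟨_, hmem f⟩ (i, e j) =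
      gmap d p f (i, j) := fun f i j => by
    rw [gmap_apply, gmap_apply]
    exact eval_pderiv_rename e (p i) f.1 j
  refine ⟨fun i => p i ∘ e.symm, fun c => ?_, fun v h => ?_⟩
  · obtain ⟨f, hf⟩ := hp fun a => c (a.1, e a.2)
    refine ⟨⟨_, hmem f⟩, funext fun a => ?_⟩
    obtain ⟨a, j⟩ := a
    obtain ⟨j, rfl⟩ := e.surjective j
    rw [hg, hf]
  · obtain ⟨s, hs⟩ := hv (v ∘ e) fun f hf => by
      have h1 := h ⟨_, hmem f⟩ (funext fun a => by
        obtain ⟨a, j⟩ := a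
        obtain ⟨j, rfl⟩ := e.surjective j
        rw [hg, hf]
        rfl)
      funext j
      have h2 := congrFun h1 (e j)
      simp only [Matrix.mulVec, dotProduct, Pi.zero_apply, hess_apply] at h2 ⊢
      rw [← e.sum_comp] at h2
      rw [← h2]
      refine Finset.sum_congr rfl fun k _ => ?_
      rw [pderiv_rename e.injective, eval_pderiv_rename]
      rfl
    refine ⟨s, funext fun j => ?_⟩
    have := congrFun hs (e.symm j)
    simpa using this

lemma BJ.ah {ι : Type} {d : ℕ} {i : ι} (h : BJ σ d i) : AH σ d ι := ⟨h.choose, h.choose_spec.1⟩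

end Transport

section Cubics

lemma card_pairs (M : ℕ) :
    2 * Fintype.card {jk : Fin M × Fin M // jk.1 < jk.2} + M = M * M := by
  classical
  have h1 : Fintype.card {jk : Fin M × Fin M // jk.1 < jk.2} =
      Fintype.card {jk : Fin M × Fin M // jk.2 < jk.1} :=
    Fintype.card_congr ((Equiv.prodComm _ _).subtypeEquiv fun _ => Iff.rfl)
  have h2 : Fintype.card {jk : Fin M × Fin M // jk.1 = jk.2} = M := by
    refine (Fintype.card_congr (β := Fin M) ⟨fun a => a.1.1, fun a => ⟨(a, a), rfl⟩, fun a => ?_,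
      fun _ => rfl⟩).trans (Fintype.card_fin M)
    obtain ⟨⟨a, b⟩, h⟩ := a
    simp only at h
    subst h
    rfl
  have h3 := Finset.card_filter_add_card_filter_not (s := (Finset.univ : Finset (Fin M × Fin M)))
    (fun jk => jk.1 < jk.2)
  have h4 := Finset.card_filter_add_card_filter_not
    (s := (Finset.univ : Finset (Fin M × Fin M)).filter fun jk => ¬ jk.1 < jk.2)
    (fun jk => jk.1 = jk.2)
  rw [Finset.filter_filter, Finset.filter_filter] at h4
  rw [Fintype.card_subtype] at h1 h2
  rw [Fintype.card_subtype] at h1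
  rw [Fintype.card_subtype]
  have h5 : (Finset.univ.filter fun jk : Fin M × Fin M => ¬ jk.1 < jk.2 ∧ jk.1 = jk.2) =
      Finset.univ.filter fun jk => jk.1 = jk.2 := by
    ext jk; simp only [Finset.mem_filter, Finset.mem_univ, true_and]; grind
  have h6 : (Finset.univ.filter fun jk : Fin M × Fin M => ¬ jk.1 < jk.2 ∧ ¬ jk.1 = jk.2) =
      Finset.univ.filter fun jk => jk.2 < jk.1 := by
    ext jk; simp only [Finset.mem_filter, Finset.mem_univ, true_and]; grind
  rw [h5, h6] at h4
  simp only [Finset.card_univ, Fintype.card_prod, Fintype.card_fin] at h3 h2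
  omega

lemma two_mul_multichoose (n : ℕ) : 2 * n.multichoose 2 = n * (n + 1) := by
  induction n with
  | zero => simp
  | succ n ih =>
    rw [Nat.multichoose_succ_succ, Nat.multichoose_one_right]
    nlinarith

lemma six_mul_multichoose (n : ℕ) : 6 * n.multichoose 3 = n * (n + 1) * (n + 2) := by
  induction n with
  | zero => simp
  | succ n ih =>
    have h2 := two_mul_multichoose (n + 1)
    rw [Nat.multichoose_succ_succ]
    nlinarith

namespace BlockData

lemma card_idx (D : BlockData) (M : ℕ) : 2 * Fintype.card (D.Idx (Fin M)) =
    3 * M * (M + 1) + 2 * (M * D.nd + D.nv) := by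
  have h := card_pairs M
  simp only [Idx, Fintype.card_sum, Fintype.card_prod, Fintype.card_fin]
  linarith

lemma square_iff (D : BlockData) (M : ℕ) : D.Square (Fin M) ↔
    (3 * M + D.c) * (3 * M + D.c + 1) * (3 * M + D.c + 2) =
    3 * (3 * M + D.c) * (3 * M * (M + 1) + 2 * (M * D.nd + D.nv)) + 6 * (M * D.nb + D.nz) := by
  have h := D.card_idx M
  have hV : Fintype.card (D.V (Fin M)) = 3 * M + D.c := by simp [V, mul_comm]
  have hP : Fintype.card (D.Par (Fin M)) = M * D.nb + D.nz := by simp [Par]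
  rw [Square, hV, Fintype.card_sum, Fintype.card_prod, hP, hV, ← six_mul_multichoose, ← h]
  constructor
  · intro h1
    rw [h1]
    ring
  · intro h1
    refine Nat.eq_of_mul_eq_mul_left (by norm_num : 0 < 6) (h1.trans ?_)
    ring

lemma square0 (M : ℕ) : data0.Square (Fin M) := by
  rw [square_iff]
  simp only [data0]
  ring

lemma square1 (M : ℕ) : data1.Square (Fin M) := by
  rw [square_iff]
  simp only [data1]
  ring

lemma square2 (M : ℕ) : data2.Square (Fin M) := by
  rw [square_iff]
  simp only [data2]
  ring

/-- The joint Hessian condition for cubics in `3 M + c` variables, for at most as many points as the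
family contains. -/
lemma bj (D : BlockData) (hG : ∃ α, D.Good α) (hS : ∀ M, D.Square (Fin M)) {M k r : ℕ}
    (hM : 3 ≤ M) (hk : k = 3 * M + D.c)
    (hr : 2 * r ≤ 3 * M * (M + 1) + 2 * (M * D.nd + D.nv)) (i : Fin r) : BJ (Fin k) 3 i := by
  obtain ⟨α, hG⟩ := hG
  have h0 : BJ (D.V (Fin M)) 3 (Sum.inl (⟨0, by omega⟩, 0) : D.Idx (Fin M)) := by
    obtain rfl | hM := hM.eq_or_lt
    · have : Nonempty (D.V (Fin 3)) := ⟨Sum.inl (0, 0)⟩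
      exact (D.bs_of_good hG).bj (d := 1) _
    · exact D.bj_of_good hG (hS 3) (hS M) (hM.trans_eq (Fintype.card_fin M).symm) _
  have hV : Fintype.card (D.V (Fin M)) = Fintype.card (Fin k) := by simp [V, mul_comm, hk]
  refine (h0.equiv (Fintype.equivOfCardEq hV)).of_card i ?_
  rw [Fintype.card_fin]
  refine Nat.le_of_mul_le_mul_left (c := 2) ?_ two_pos
  rw [D.card_idx M]
  exact hr

end BlockData

/-- Cubics in at least nine variables. -/
lemma BJ.cubic_large {k r : ℕ} (hk : 9 ≤ k) (hr : r * k < k.multichoose 3) (i : Fin r) :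
    BJ (Fin k) 3 i := by
  have h6 := six_mul_multichoose k
  obtain ⟨M, hM⟩ : ∃ M, M = k / 3 := ⟨_, rfl⟩
  have hk0 : 0 < k := by omega
  have hlt : 6 * r < (k + 1) * (k + 2) := by
    refine Nat.lt_of_mul_lt_mul_left (a := k) ?_
    nlinarith
  obtain ⟨E, hE⟩ := Nat.even_mul_succ_self M
  rw [show M * Nat.succ M = M * M + M by rw [Nat.succ_eq_add_one]; ring] at hE
  have hM3 : 3 * M * (M + 1) = 3 * (M * M) + 3 * M := by ring
  have hcase : k = 3 * M ∨ k = 3 * M + 1 ∨ k = 3 * M + 2 := by omega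
  rcases hcase with rfl | rfl | rfl
  · refine BlockData.data0.bj BlockData.good0 BlockData.square0 (by omega) rfl ?_ i
    simp only [BlockData.data0]
    nlinarith
  · refine BlockData.data1.bj BlockData.good1 BlockData.square1 (by omega) rfl ?_ i
    have h1 : (3 * M + 1 + 1) * (3 * M + 1 + 2) = 9 * (M * M) + 15 * M + 6 := by ring
    simp only [BlockData.data1]
    omega
  · refine BlockData.data2.bj BlockData.good2 BlockData.square2 (by omega) rfl ?_ i
    have h1 : (3 * M + 2 + 1) * (3 * M + 2 + 2) = 9 * (M * M) + 21 * M + 12 := by ring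
    simp only [BlockData.data2]
    omega

end Cubics

/-! ### Set-up of the induction -/

section Induction

/-- In `k` variables and degree `d`, fewer double points than the dimension allows impose
independent conditions. -/
def PA (k d : ℕ) : Prop := ∀ r, r * k < k.multichoose d → AH (Fin k) d (Fin r)

/-- In `k` variables and degree `d`, forms singular at fewer points than the dimension allows have
an isolated singularity at some point, unless this is one of two exceptional cases. -/
def PB (k d : ℕ) : Prop := ∀ r, 0 < r → r * k < k.multichoose d → (k, d, r) ≠ (3, 6, 9) →
  (k, d, r) ≠ (4, 4, 8) → BS (Fin k) d (Fin r)

lemma PA.of_AH {k d R : ℕ} (h : AH (Fin k) d (Fin R)) (hR : k.multichoose d ≤ (R + 1) * k) :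
    PA k d := fun _ hr => h.le (Nat.lt_succ_iff.1 (Nat.lt_of_mul_lt_mul_right (hr.trans_le hR)))

lemma PB.of_BS {k d R : ℕ} (h : BS (Fin k) d (Fin R)) (hR : k.multichoose d ≤ (R + 1) * k) :
    PB k d := fun _ h0 hr _ _ =>
  h.le h0 (Nat.lt_succ_iff.1 (Nat.lt_of_mul_lt_mul_right (hr.trans_le hR)))

lemma BS.both {k d R : ℕ} (h : BS (Fin k) d (Fin R)) (hR : k.multichoose d ≤ (R + 1) * k) :
    PA k d ∧ PB k d := ⟨.of_AH h.ah hR, .of_BS h hR⟩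

lemma PA.get {k d : ℕ} (h : PA k d) (r : ℕ) (hr : r * k < (k + d - 1).choose d) :
    AH (Fin k) d (Fin r) := h r (by rwa [Nat.multichoose_eq])

lemma AH.get {k d R : ℕ} (h : AH (Fin k) d (Fin R)) (hR : (k + d - 1).choose d ≤ (R + 1) * k) :
    PA k d := .of_AH h (by rwa [Nat.multichoose_eq])

lemma BS.get {k d R : ℕ} (h : BS (Fin k) d (Fin R)) (hR : (k + d - 1).choose d ≤ (R + 1) * k) :
    PA k d ∧ PB k d := h.both (by rwa [Nat.multichoose_eq])

lemma binary_ah (d : ℕ) : PA 2 d := fun r hr =>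
  AH.binary d r (by rw [Nat.multichoose_two] at hr; omega)

lemma binary_bs (d : ℕ) : PB 2 d := fun r h0 hr _ _ =>
  BS.binary h0 (by rw [Nat.multichoose_two] at hr; omega)

/-- The induction step for given numbers: `u` points on the hyperplane, `e` on lines through the
base point, and `ρ + m` elsewhere. -/
lemma num_step {k d u e ρ m r : ℕ} (hA : AH (Fin k) (d + 3) (Fin u)) (hB : PB (k + 1) (d + 2))
    (hK : PA (k + 1) (d + 1))
    (h1 : ρ * (k + 1) < (k + 1 + (d + 1) - 1).choose (d + 1) ∧
      (e + (ρ + m)) * (k + 1) < (k + 1 + (d + 2) - 1).choose (d + 2) ∧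
      (k + 1, d + 2, e + (ρ + m)) ≠ (3, 6, 9) ∧ (k + 1, d + 2, e + (ρ + m)) ≠ (4, 4, 8) ∧
      0 < ρ + m ∧ e ≤ k ∧ u * k + e ≤ (k + (d + 3) - 1).choose (d + 3) ∧
      u + ((k + 1 + (d + 1) - 1).choose (d + 1) - ρ * (k + 1) - 2 * m) + e * k +
        (ρ + m) * (k + 1) < (k + 1 + (d + 2) - 1).choose (d + 2) ∧
      0 < r ∧ r ≤ u + e + (ρ + m)) :
    BS (Fin (k + 1)) (d + 3) (Fin r) := by
  simp only [← Nat.multichoose_eq] at h1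
  obtain ⟨h1, h2, h3, h4, hs, he, hc1, hc2, h0, hr⟩ := h1
  have hK' : KK (k + 1) (d + 1) ρ ((k + 1).multichoose (d + 1) - ρ * (k + 1)) :=
    .of_AH (hK ρ h1) (by omega)
  exact stepB hA (hB _ (by omega) h2 h3 h4) (hK'.add m) hs he hc1 hc2 h0 hr

/-- The induction step for quartics and given numbers. -/
lemma num_step_quartic {k u e s r : ℕ} (hA : AH (Fin k) 4 (Fin u))
    (hB : BS (Fin (k + 1)) 3 (Fin (e + s)))
    (h1 : k + 1 ≤ s ∧ e ≤ k ∧ u * k + e ≤ (k + 4 - 1).choose 4 ∧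
      u + 0 + e * k + s * (k + 1) < (k + 1 + 3 - 1).choose 3 ∧ 0 < r ∧ r ≤ u + e + s) :
    BS (Fin (k + 1)) 4 (Fin r) := by
  simp only [← Nat.multichoose_eq] at h1
  obtain ⟨hs, he, hc1, hc2, h0, hr⟩ := h1
  exact stepB hA hB (.quadric hs) (by omega) he hc1 hc2 h0 hr

/-- The induction step for quartics and independence only. -/
lemma num_step_quartic_ah {k u s : ℕ} (hA : AH (Fin k) 4 (Fin u))
    (hB : AH (Fin (k + 1)) 3 (Fin s))
    (h1 : k + 1 ≤ s ∧ u * k ≤ (k + 4 - 1).choose 4 ∧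
      u + s * (k + 1) ≤ (k + 1 + 3 - 1).choose 3) :
    AH (Fin (k + 1)) 4 (Fin (u + s)) := by
  simp only [← Nat.multichoose_eq] at h1
  obtain ⟨hs, hc1, hc2⟩ := h1
  refine stepA (e := 0) hA (by rwa [zero_add]) (.quadric hs) (Nat.zero_le _) (by omega) ?_ (by omega)
  simpa using hc2

/-! ### Cubics -/

lemma cubic_bj {k r : ℕ} (hk : 3 ≤ k) (hr : r * k < k.multichoose 3) (h6 : ¬ (k = 6 ∧ r = 9))
    (i : Fin r) : BJ (Fin k) 3 i := by
  have hi : 0 < r := i.pos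
  obtain hk9 | hk9 := le_or_gt 9 k
  · exact .cubic_large hk9 hr i
  rw [Nat.multichoose_eq] at hr
  have key : ∀ {R : ℕ}, BS (Fin k) 3 (Fin R) → r ≤ R → BJ (Fin k) 3 i := fun h hR => by
    have : Nonempty (Fin k) := ⟨⟨0, by omega⟩⟩
    exact (h.le hi hR).bj (d := 1) i
  interval_cases k <;> simp [Nat.choose] at hr h6
  · exact key BS.k3d3 (by omega)
  · exact key BS.k4d3 (by omega)
  · exact key BS.k5d3 (by omega)
  · exact key BS.k6d3 (by omega)
  · exact key BS.k7d3 (by omega)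
  · exact key BS.k8d3 (by omega)

lemma cubic_ah {k : ℕ} (hk : 2 ≤ k) : PA k 3 := by
  obtain rfl | hk := hk.eq_or_lt
  · exact binary_ah 3
  intro r hr
  obtain rfl | h0 := Nat.eq_zero_or_pos r
  · exact AH.zero _ _
  by_cases h6 : k = 6 ∧ r = 9
  · obtain ⟨rfl, rfl⟩ := h6
    exact AH.k6d3
  · exact (cubic_bj hk hr h6 ⟨0, h0⟩).ah

/-- Cubics with somewhat fewer points than the dimension allows: the points but one are put on a
hyperplane, and the residual quadrics are singular at a single point. -/
lemma cubic_bs {k : ℕ} (r : ℕ) (hk : 2 ≤ k) (hr : r * k < k.multichoose 3) :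
    BS (Fin (k + 1)) 3 (Fin (r + 1)) := by
  refine stepB (u := r) (e := 0) (s := 1) (κ := 0) (cubic_ah hk r hr)
    ((BS.quadric k).of_card (by simp)) .linear one_pos (Nat.zero_le _) (by simpa using hr.le) ?_
    (Nat.succ_pos _) le_rfl
  have h6 := six_mul_multichoose k
  have h2 := two_mul_multichoose (k + 1)
  have : 6 * r < (k + 1) * (k + 2) := by
    refine Nat.lt_of_mul_lt_mul_left (a := k) ?_
    nlinarith
  change _ < (k + 1).multichoose 2
  nlinarith

end Induction

section Induction2

/-! ### Quartics -/

lemma quartic_3 : PA 3 4 ∧ PB 3 4 := by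
  have hK : KK 3 2 (1 + 1) (3 - 2 * 1) := KK.add
    (.of_AH (((BS.quadric 2).ah).of_card (by simp)) (by simp [Nat.multichoose_eq, Nat.choose])) 1
  exact (stepB (u := 2) (e := 0) (AH.binary 4 2 (by norm_num)) (BS.k3d3.le two_pos (by norm_num)) hK
    two_pos (Nat.zero_le _) (by simp [Nat.multichoose_eq, Nat.choose])
    (by simp [Nat.multichoose_eq, Nat.choose]) (r := 4) (by norm_num) le_rfl).get (by decide)

lemma quartic_4 : PA 4 4 ∧ PB 4 4 := by
  refine ⟨(num_step_quartic_ah (u := 4) (s := 4) (quartic_3.1.get 4 (by decide)) BS.k4d3.ah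
    (by decide)).get (by decide), fun r h0 hr _ hne => ?_⟩
  have h := num_step_quartic (u := 3) (e := 0) (s := 4) (r := 7) (quartic_3.1.get 3 (by decide))
    BS.k4d3 (by decide)
  simp [Nat.multichoose_eq, Nat.choose] at hr hne
  exact h.le h0 (by omega)

lemma quartic_5 : PA 5 4 ∧ PB 5 4 :=
  (num_step_quartic (u := 8) (e := 0) (s := 5) (r := 13) (quartic_4.1.get 8 (by decide))
    (BS.k5d3.le (by norm_num) (by norm_num)) (by decide)).get (by decide)

lemma quartic_6 : PA 6 4 ∧ PB 6 4 :=
  (num_step_quartic (u := 13) (e := 0) (s := 7) (r := 20) (quartic_5.1.get 13 (by decide))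
    (BS.k6d3.le (by norm_num) (by norm_num)) (by decide)).get (by decide)

lemma quartic_7 : PA 7 4 ∧ PB 7 4 :=
  (num_step_quartic (u := 20) (e := 0) (s := 9) (r := 29) (quartic_6.1.get 20 (by decide))
    (BS.k7d3.le (by norm_num) (by norm_num)) (by decide)).get (by decide)

/-- The number of points on the hyperplane is `30 = 21 + 9`, and those are independent for quartics
in seven variables by the step from the `21` points of `AH.k6d4`. -/
lemma quartic_8 : PA 8 4 ∧ PB 8 4 :=
  (num_step_quartic (u := 30) (e := 0) (s := 11) (r := 41)
    (num_step_quartic_ah (u := 21) (s := 9) AH.k6d4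
      (BS.k7d3.le (by norm_num) (by norm_num)).ah (by decide))
    (BS.k8d3.le (by norm_num) (by norm_num)) (by decide)).get (by decide)

lemma cubic_bs_get (k r : ℕ) (h : 2 ≤ k ∧ r * k < (k + 3 - 1).choose 3) :
    BS (Fin (k + 1)) 3 (Fin (r + 1)) := cubic_bs r h.1 (by rw [Nat.multichoose_eq]; exact h.2)

lemma quartic_9 : PA 9 4 ∧ PB 9 4 :=
  (num_step_quartic (u := 41) (e := 2) (s := 11) (r := 54) (quartic_8.1.get 41 (by decide))
    (cubic_bs_get 8 12 (by decide)) (by decide)).get (by decide)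

lemma quartic_10 : PA 10 4 ∧ PB 10 4 :=
  (num_step_quartic (u := 54) (e := 5) (s := 12) (r := 71) (quartic_9.1.get 54 (by decide))
    (cubic_bs_get 9 16 (by decide)) (by decide)).get (by decide)

lemma quartic_11 : PA 11 4 ∧ PB 11 4 :=
  (num_step_quartic (u := 71) (e := 5) (s := 14) (r := 90) (quartic_10.1.get 71 (by decide))
    (cubic_bs_get 10 18 (by decide)) (by decide)).get (by decide)

lemma quartic_12 : PA 12 4 ∧ PB 12 4 :=
  (num_step_quartic (u := 90) (e := 11) (s := 12) (r := 113) (quartic_11.1.get 90 (by decide))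
    (cubic_bs_get 11 22 (by decide)) (by decide)).get (by decide)

/-- A number is one more than a multiple of `k`, up to a remainder less than `k`. -/
lemma exists_rem {N k : ℕ} (hk : 0 < k) (hN : 0 < N) : ∃ u e, u * k + e = N ∧ 1 ≤ e ∧ e ≤ k := by
  refine ⟨(N - 1) / k, (N - 1) % k + 1, ?_, by omega, Nat.mod_lt _ hk⟩
  have := Nat.div_add_mod' (N - 1) k
  omega

lemma succ_mul_multichoose {k : ℕ} (hk : 0 < k) (d : ℕ) :
    (d + 1) * k.multichoose (d + 1) = (k + d) * k.multichoose d := by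
  obtain ⟨k, rfl⟩ : ∃ m, k = m + 1 := ⟨k - 1, by omega⟩
  rw [Nat.multichoose_eq, Nat.multichoose_eq]
  have := Nat.add_one_mul_choose_eq (k + d) d
  rw [show k + 1 + (d + 1) - 1 = k + d + 1 by omega, show k + 1 + d - 1 = k + d by omega,
    mul_comm (d + 1), ← this]
  ring

lemma multichoose_pos' {k : ℕ} (hk : 0 < k) (d : ℕ) : 0 < k.multichoose d := by
  rw [Nat.multichoose_eq]
  exact Nat.choose_pos (by omega)

lemma quartic_large {k : ℕ} (hk : 12 ≤ k) (h : PA k 4) : PA (k + 1) 4 ∧ PB (k + 1) 4 := by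
  have hN := succ_mul_multichoose (k := k) (by omega) 3
  have hM := succ_mul_multichoose (k := k + 1) (by omega) 3
  have hN3 := six_mul_multichoose k
  have hM3 := six_mul_multichoose (k + 1)
  simp only [Nat.reduceAdd] at hN hM
  have hNM : (k + 1).multichoose 4 = k.multichoose 4 + (k + 1).multichoose 3 :=
    Nat.multichoose_succ_succ k 3
  obtain ⟨u, e, hu, he1, he⟩ := exists_rem (N := k.multichoose 4) (k := k) (by omega) (multichoose_pos' (by omega) 4)
  obtain ⟨r, f, hr, hf1, hf⟩ := exists_rem (N := (k + 1).multichoose 4)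
    (k := k + 1) (by omega)     (multichoose_pos' (k := k + 1) (by omega) 4)
  -- `u` and `r` are within one of these two cubic polynomials
  have hu1 : 24 * u + 24 ≥ (k + 1) * (k + 2) * (k + 3) := by
    refine Nat.le_of_mul_le_mul_left (c := k) ?_ (by omega)
    nlinarith
  have hu2 : 24 * u < (k + 1) * (k + 2) * (k + 3) := by
    refine Nat.lt_of_mul_lt_mul_left (a := k) ?_
    nlinarith
  have hr1 : 24 * r + 24 ≥ (k + 2) * (k + 3) * (k + 4) := by
    refine Nat.le_of_mul_le_mul_left (c := k + 1) ?_ (by omega)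
    nlinarith
  have hr2 : 24 * r < (k + 2) * (k + 3) * (k + 4) := by
    refine Nat.lt_of_mul_lt_mul_left (a := k + 1) ?_
    nlinarith
  have hs1 : 24 * r ≥ 24 * u + 24 * e + 24 * (k + 1) := by nlinarith
  obtain ⟨s, rfl⟩ : ∃ s, r = u + e + s := ⟨r - u - e, by omega⟩
  have hs2 : 6 * (e + s) < (k + 1) * (k + 2) + 6 := by nlinarith
  obtain ⟨x, hx⟩ : ∃ x, e + s = x + 1 := ⟨e + s - 1, by omega⟩
  have hB : BS (Fin (k + 1)) 3 (Fin (e + s)) := by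
    rw [hx]
    refine cubic_bs x (by omega) ?_
    have : 6 * x < (k + 1) * (k + 2) := by omega
    nlinarith
  have hA : AH (Fin k) 4 (Fin u) := h u (by omega)
  exact (stepB hA hB (.quadric (by omega)) (by omega) he hu.le (by nlinarith) (by omega)
    le_rfl).both (by nlinarith)

lemma quartic : ∀ k, 2 ≤ k → PA k 4 ∧ PB k 4 := by
  intro k hk
  induction k, hk using Nat.le_induction with
  | base => exact ⟨binary_ah 4, binary_bs 4⟩
  | succ k hk ih =>
    obtain hk' | hk' := le_or_gt 12 k
    · exact quartic_large hk' ih.1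
    · interval_cases k
      exacts [quartic_3, quartic_4, quartic_5, quartic_6, quartic_7, quartic_8, quartic_9,
        quartic_10, quartic_11, quartic_12]

end Induction2

section Induction3

/-! ### Degree at least five -/

/-- The inequality used in `bound` passes from degree `d` to `d + 1`. -/
lemma bound_succ {j d : ℕ} (hd : 0 < d)
    (h : 2 * (j + 1) ^ 3 * (d + 1) ≤ (j + 1).multichoose d * (j * d)) :
    2 * (j + 1) ^ 3 * (d + 1 + 1) ≤ (j + 1).multichoose (d + 1) * (j * (d + 1)) := by
  have hN := succ_mul_multichoose (k := j + 1) (by omega) d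
  have h1 : (j + 1).multichoose (d + 1) * (j * (d + 1)) =
      (j + 1 + d) * ((j + 1).multichoose d * j) := by
    linear_combination j * hN
  rw [h1]
  refine Nat.le_of_mul_le_mul_left (c := d) ?_ hd
  calc d * (2 * (j + 1) ^ 3 * (d + 1 + 1)) = 2 * (j + 1) ^ 3 * (d * (d + 2)) := by ring
    _ ≤ 2 * (j + 1) ^ 3 * ((d + 1) * (j + 1 + d)) := Nat.mul_le_mul_left _ (by nlinarith)
    _ = (j + 1 + d) * (2 * (j + 1) ^ 3 * (d + 1)) := by ring
    _ ≤ (j + 1 + d) * ((j + 1).multichoose d * (j * d)) := Nat.mul_le_mul_left _ h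
    _ = d * ((j + 1 + d) * ((j + 1).multichoose d * j)) := by ring

lemma bound_le {j d d' : ℕ} (hd : 0 < d) (hdd : d ≤ d')
    (h : 2 * (j + 1) ^ 3 * (d + 1) ≤ (j + 1).multichoose d * (j * d)) :
    2 * (j + 1) ^ 3 * (d' + 1) ≤ (j + 1).multichoose d' * (j * d') := by
  induction d', hdd using Nat.le_induction with
  | base => exact h
  | succ d' hdd ih => exact bound_succ (by omega) ih

/-- The growth of the number of monomials behind the uniform choice of numbers in the induction. -/
lemma bound {j d : ℕ} (h : (j = 1 ∧ 16 ≤ d) ∨ (j = 2 ∧ 7 ≤ d) ∨ (j = 3 ∧ 5 ≤ d) ∨ (j = 4 ∧ 5 ≤ d) ∨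
    (5 ≤ j ∧ 4 ≤ d)) : 2 * (j + 1) ^ 3 * (d + 1) ≤ (j + 1).multichoose d * (j * d) := by
  rcases h with ⟨rfl, h⟩ | ⟨rfl, h⟩ | ⟨rfl, h⟩ | ⟨rfl, h⟩ | ⟨hj, h⟩
  · exact bound_le (by norm_num) h (by rw [Nat.multichoose_eq]; decide)
  · exact bound_le (by norm_num) h (by rw [Nat.multichoose_eq]; decide)
  · exact bound_le (by norm_num) h (by rw [Nat.multichoose_eq]; decide)
  · exact bound_le (by norm_num) h (by rw [Nat.multichoose_eq]; decide)
  · refine bound_le (by norm_num) h ?_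
    have hN := succ_mul_multichoose (k := j + 1) (by omega) 3
    have hN3 := six_mul_multichoose (j + 1)
    simp only [Nat.reduceAdd] at hN
    have h1 : 24 * (j + 1).multichoose 4 = (j + 1) * ((j + 2) * (j + 3) * (j + 4)) := by
      linear_combination 6 * hN + (j + 4) * hN3
    have h2 : 60 * (j + 1) ^ 2 ≤ (j + 2) * (j + 3) * (j + 4) * j := by
      obtain ⟨i, rfl⟩ : ∃ i, j = i + 5 := ⟨j - 5, by omega⟩
      ring_nf
      nlinarith [Nat.zero_le (i ^ 3), Nat.zero_le (i ^ 4)]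
    nlinarith

set_option maxHeartbeats 1000000 in
/-- The induction step with the numbers determined by the dimensions: as many points as possible
on the hyperplane, and as many lines as possible through the base point. -/
lemma uniform {j d : ℕ} (hA : PA (j + 1) (d + 3)) (hK : PA (j + 2) (d + 1))
    (hB : ∀ r, 0 < r → r * (j + 2) < (j + 2).multichoose (d + 2) → BS (Fin (j + 2)) (d + 2) (Fin r))
    (hb : 2 * (j + 1) ^ 3 * (d + 2 + 1) ≤ (j + 1).multichoose (d + 2) * (j * (d + 2))) :
    PA (j + 2) (d + 3) ∧ PB (j + 2) (d + 3) := by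
  have hAB := succ_mul_multichoose (k := j + 1) (by omega) (d + 2)
  have hN1 : (j + 2).multichoose (d + 3) = (j + 1).multichoose (d + 3) + (j + 2).multichoose (d + 2) :=
    Nat.multichoose_succ_succ _ _
  have hN2 : (j + 2).multichoose (d + 2) = (j + 1).multichoose (d + 2) + (j + 2).multichoose (d + 1) :=
    Nat.multichoose_succ_succ _ _
  have hC0 := multichoose_pos' (k := j + 2) (by omega) (d + 1)
  obtain ⟨u, e, hu, he1, he⟩ := exists_rem (N := (j + 1).multichoose (d + 3)) (k := j + 1)
    (by omega) (multichoose_pos' (by omega) _)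
  obtain ⟨r, f, hr, hf1, hf⟩ := exists_rem (N := (j + 2).multichoose (d + 3)) (k := j + 2)
    (by omega) (multichoose_pos' (by omega) _)
  obtain ⟨ρ, g, hρ, hg1, hg⟩ := exists_rem (N := (j + 2).multichoose (d + 1)) (k := j + 2)
    (by omega) hC0
  have hub : u < (j + 1).multichoose (d + 3) := by nlinarith
  have hA' : AH (Fin (j + 1)) (d + 3) (Fin u) := hA u (by omega)
  have hK' : ∀ s, s ≤ ρ → AH (Fin (j + 2)) (d + 1) (Fin s) := fun s hs => hK s (by nlinarith)
  generalize hA0 : (j + 1).multichoose (d + 2) = A at *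
  generalize hB0 : (j + 1).multichoose (d + 3) = B at *
  generalize hC0' : (j + 2).multichoose (d + 1) = C at *
  generalize hD0 : (j + 2).multichoose (d + 2) = D at *
  generalize hE0 : (j + 2).multichoose (d + 3) = E at *
  have hI : u + 2 * (j + 1) ^ 2 ≤ A := by
    have h1 : (d + 3) * (j + 1) * (u + 2 * (j + 1) ^ 2) ≤ (d + 3) * (j + 1) * A := by
      have h2 : (d + 3) * (u * (j + 1)) ≤ (d + 3) * B := Nat.mul_le_mul_left _ (by omega)
      nlinarith
    exact Nat.le_of_mul_le_mul_left h1 (by positivity)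
  have heu : e ≤ u := by
    by_contra! h
    have : A ≤ B := by nlinarith
    nlinarith
  have hj : 1 ≤ j := by
    by_contra! h
    obtain rfl : j = 0 := by omega
    simp at hb
  have heJ : e * (j + 1) ≤ (j + 1) * (j + 1) := Nat.mul_le_mul_right _ he
  have hjj : j ≤ j * j := Nat.le_mul_self j
  have hr1 : u + e + 1 ≤ r := by
    by_contra! h
    have : r * (j + 2) ≤ (u + e) * (j + 2) := Nat.mul_le_mul_right _ (by omega)
    ring_nf at *
    omega
  obtain ⟨s, rfl⟩ : ∃ s, r = u + e + s := ⟨r - u - e, by omega⟩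
  have hc : u + e * (j + 1) + s * (j + 2) < D := by
    ring_nf at hr hu hN1 ⊢
    omega
  have hB' : BS (Fin (j + 2)) (d + 2) (Fin (e + s)) :=
    hB _ (by omega) (by linarith [hc, Nat.zero_le e, Nat.zero_le u])
  have hlast : E ≤ (u + e + s + 1) * (j + 2) := by
    rw [add_mul _ 1]; omega
  rw [← hE0] at hlast
  refine BS.both (R := u + e + s) ?_ hlast
  obtain hs | hs := le_total s ρ
  · -- few points: the kernel in degree `d + 1` has the expected dimension
    have hsC : s * (j + 2) ≤ C := by
      have := Nat.mul_le_mul_right (j + 2) hs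
      omega
    refine stepB (κ := C - s * (j + 2)) hA' hB' (.of_AH (hK' s hs) (by omega)) (by omega) he
      (le_of_eq (hu.trans hB0.symm)) ?_ (by omega) le_rfl
    change _ < (j + 2).multichoose (d + 2)
    rw [hD0]
    have : C - s * (j + 2) + s * (j + 2) = C := Nat.sub_add_cancel hsC
    change u + (C - s * (j + 2)) + e * (j + 1) + s * (j + 2) < D
    ring_nf at *
    omega
  · -- many points: each point beyond `ρ` lowers the dimension of the kernel by two
    obtain ⟨m, rfl⟩ := Nat.exists_eq_add_of_le hs
    refine stepB (κ := g - 2 * m) hA' hB' ((KK.of_AH (hK' ρ le_rfl) (by omega)).add m) (by omega)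
      he (le_of_eq (hu.trans hB0.symm)) ?_ (by omega) le_rfl
    change _ < (j + 2).multichoose (d + 2)
    rw [hD0]
    change u + (g - 2 * m) + e * (j + 1) + (ρ + m) * (j + 2) < D
    obtain h | h := le_total g (2 * m)
    · rw [Nat.sub_eq_zero_of_le h]
      exact hc
    · have h1 : g - 2 * m + 2 * m = g := Nat.sub_add_cancel h
      have h2 : m ≤ j := by omega
      have h3 : m * j ≤ j * j := Nat.mul_le_mul_right _ h2
      ring_nf at *
      omega

end Induction3

section Induction4

/-! ### The remaining small cases -/

lemma ternary_5 : PA 3 5 ∧ PB 3 5 :=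
  (num_step (k := 2) (d := 2) (u := 2) (e := 0) (ρ := 3) (m := 1) (r := 6)
    (AH.binary 5 2 (by norm_num)) (quartic 3 (by norm_num)).2 (cubic_ah (by norm_num)) (by decide)).get (by decide)

/-- Plane sextics: nine points are independent, but only eight of them give the strong form. -/
lemma ternary_6 : PA 3 6 ∧ PB 3 6 := by
  have hK : KK 3 4 (4 + 2) (3 - 2 * 2) :=
    (KK.of_AH ((quartic 3 (by norm_num)).1.get 4 (by decide)) (by rw [Nat.multichoose_eq]; decide)).add 2
  refine ⟨AH.get (R := 9) (stepA (k := 2) (d := 4) (u := 3) (e := 0) (s := 6)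
    (AH.binary 6 3 (by norm_num)) (ternary_5.1.get 6 (by decide)) hK (by norm_num)
    (by rw [Nat.multichoose_eq]; decide) (by rw [Nat.multichoose_eq]; decide) (by norm_num))
    (by decide), fun r h0 hr hne _ => ?_⟩
  have h := num_step (k := 2) (d := 3) (u := 3) (e := 1) (ρ := 4) (m := 0) (r := 8)
    (AH.binary 6 3 (by norm_num)) ternary_5.2 (quartic 3 (by norm_num)).1 (by decide)
  simp [Nat.multichoose_eq, Nat.choose] at hr hne
  exact h.le h0 (by omega)

lemma ternary_7 : PA 3 7 ∧ PB 3 7 :=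
  (num_step (k := 2) (d := 4) (u := 3) (e := 0) (ρ := 6) (m := 2) (r := 11)
    (AH.binary 7 3 (by norm_num)) ternary_6.2 ternary_5.1 (by decide)).get (by decide)

lemma ternary_8 : PA 3 8 ∧ PB 3 8 :=
  (num_step (k := 2) (d := 5) (u := 4) (e := 0) (ρ := 9) (m := 1) (r := 14)
    (AH.binary 8 4 (by norm_num)) ternary_7.2 ternary_6.1 (by decide)).get (by decide)

lemma ternary_9 : PA 3 9 ∧ PB 3 9 :=
  (num_step (k := 2) (d := 6) (u := 5) (e := 0) (ρ := 11) (m := 2) (r := 18)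
    (AH.binary 9 5 (by norm_num)) ternary_8.2 ternary_7.1 (by decide)).get (by decide)

lemma ternary_10 : PA 3 10 ∧ PB 3 10 :=
  (num_step (k := 2) (d := 7) (u := 5) (e := 0) (ρ := 14) (m := 2) (r := 21)
    (AH.binary 10 5 (by norm_num)) ternary_9.2 ternary_8.1 (by decide)).get (by decide)

lemma ternary_11 : PA 3 11 ∧ PB 3 11 :=
  (num_step (k := 2) (d := 8) (u := 6) (e := 0) (ρ := 18) (m := 1) (r := 25)
    (AH.binary 11 6 (by norm_num)) ternary_10.2 ternary_9.1 (by decide)).get (by decide)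

lemma ternary_12 : PA 3 12 ∧ PB 3 12 :=
  (num_step (k := 2) (d := 9) (u := 6) (e := 1) (ρ := 21) (m := 2) (r := 30)
    (AH.binary 12 6 (by norm_num)) ternary_11.2 ternary_10.1 (by decide)).get (by decide)

lemma ternary_13 : PA 3 13 ∧ PB 3 13 :=
  (num_step (k := 2) (d := 10) (u := 7) (e := 0) (ρ := 25) (m := 2) (r := 34)
    (AH.binary 13 7 (by norm_num)) ternary_12.2 ternary_11.1 (by decide)).get (by decide)

lemma ternary_14 : PA 3 14 ∧ PB 3 14 :=
  (num_step (k := 2) (d := 11) (u := 7) (e := 0) (ρ := 30) (m := 2) (r := 39)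
    (AH.binary 14 7 (by norm_num)) ternary_13.2 ternary_12.1 (by decide)).get (by decide)

lemma ternary_15 : PA 3 15 ∧ PB 3 15 :=
  (num_step (k := 2) (d := 12) (u := 8) (e := 0) (ρ := 34) (m := 3) (r := 45)
    (AH.binary 15 8 (by norm_num)) ternary_14.2 ternary_13.1 (by decide)).get (by decide)

lemma ternary_16 : PA 3 16 ∧ PB 3 16 :=
  (num_step (k := 2) (d := 13) (u := 8) (e := 0) (ρ := 39) (m := 3) (r := 50)
    (AH.binary 16 8 (by norm_num)) ternary_15.2 ternary_14.1 (by decide)).get (by decide)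

lemma ternary {D : ℕ} (h4 : 4 ≤ D) (h16 : D ≤ 16) : PA 3 D ∧ PB 3 D := by
  interval_cases D
  exacts [quartic 3 (by norm_num), ternary_5, ternary_6, ternary_7, ternary_8, ternary_9, ternary_10,
    ternary_11, ternary_12, ternary_13, ternary_14, ternary_15, ternary_16]

lemma quaternary_5 : PA 4 5 ∧ PB 4 5 :=
  (num_step (k := 3) (d := 2) (u := 6) (e := 0) (ρ := 4) (m := 3) (r := 13)
    ((ternary (D := 5) (by norm_num) (by norm_num)).1.get 6 (by decide)) (quartic 4 (by norm_num)).2 (cubic_ah (by norm_num))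
    (by decide)).get (by decide)

lemma quaternary_6 : PA 4 6 ∧ PB 4 6 :=
  (num_step (k := 3) (d := 3) (u := 9) (e := 1) (ρ := 8) (m := 2) (r := 20)
    ((ternary (D := 6) (by norm_num) (by norm_num)).1.get 9 (by decide)) quaternary_5.2 (quartic 4 (by norm_num)).1
    (by decide)).get (by decide)

lemma quaternary_7 : PA 4 7 ∧ PB 4 7 :=
  (num_step (k := 3) (d := 4) (u := 11) (e := 3) (ρ := 13) (m := 2) (r := 29)
    ((ternary (D := 7) (by norm_num) (by norm_num)).1.get 11 (by decide)) quaternary_6.2 quaternary_5.1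
    (by decide)).get (by decide)

/-- Quintics in three variables: the seven points fill the space exactly. -/
lemma AH.k3d5 : AH (Fin 3) 5 (Fin 7) := by
  have hK : KK 3 3 (3 + 1) (1 - 2 * 1) :=
    (KK.of_AH ((cubic_ah (k := 3) (by norm_num)).get 3 (by decide)) (by rw [Nat.multichoose_eq]; decide)).add 1
  exact stepA (k := 2) (d := 3) (u := 3) (e := 0) (s := 4) (AH.binary 5 3 (by norm_num))
    ((quartic 3 (by norm_num)).1.get 4 (by decide)) hK (by norm_num)
    (by rw [Nat.multichoose_eq]; decide) (by rw [Nat.multichoose_eq]; decide) (by norm_num)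

/-- Quintics in four variables: the fourteen points fill the space exactly. -/
lemma AH.k4d5 : AH (Fin 4) 5 (Fin 14) := by
  have hK : KK 4 3 (4 + 3) (4 - 2 * 3) :=
    (KK.of_AH ((cubic_ah (k := 4) (by norm_num)).get 4 (by decide)) (by rw [Nat.multichoose_eq]; decide)).add 3
  exact stepA (k := 3) (d := 3) (u := 7) (e := 0) (s := 7) AH.k3d5
    ((quartic 4 (by norm_num)).1.get 7 (by decide)) hK (by norm_num)
    (by rw [Nat.multichoose_eq]; decide) (by rw [Nat.multichoose_eq]; decide) (by norm_num)

lemma quinary_5 : PA 5 5 ∧ PB 5 5 :=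
  (num_step (k := 4) (d := 2) (u := 14) (e := 0) (ρ := 6) (m := 5) (r := 25) AH.k4d5
    (quartic 5 (by norm_num)).2 (cubic_ah (by norm_num)) (by decide)).get (by decide)

lemma senary_5 : PA 6 5 ∧ PB 6 5 :=
  (num_step (k := 5) (d := 2) (u := 25) (e := 1) (ρ := 9) (m := 6) (r := 41)
    (quinary_5.1.get 25 (by decide)) (quartic 6 (by norm_num)).2 (cubic_ah (by norm_num))
    (by decide)).get (by decide)

/-- The theorem in all degrees at least four. -/
lemma main_induction : ∀ D, 4 ≤ D → ∀ k, 2 ≤ k → PA k D ∧ PB k D := by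
  intro D
  induction D using Nat.strong_induction_on with
  | _ D ihD =>
  intro hD k hk
  obtain rfl | hD := hD.eq_or_lt
  · exact quartic k hk
  obtain ⟨d, rfl⟩ : ∃ d, D = d + 3 := ⟨D - 3, by omega⟩
  induction k, hk using Nat.le_induction with
  | base => exact ⟨binary_ah _, binary_bs _⟩
  | succ k hk ih =>
    obtain ⟨j, rfl⟩ : ∃ j, k = j + 1 := ⟨k - 1, by omega⟩
    have hU : (j = 1 ∧ 16 ≤ d + 2) ∨ (j = 2 ∧ 7 ≤ d + 2) ∨ (j = 3 ∧ 5 ≤ d + 2) ∨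
        (j = 4 ∧ 5 ≤ d + 2) ∨ (5 ≤ j ∧ 4 ≤ d + 2) → PA (j + 2) (d + 3) ∧ PB (j + 2) (d + 3) := by
      intro h
      refine uniform ih.1 ?_ (fun r h0 hr => ?_) (bound h)
      · obtain rfl | h2 := eq_or_ne d 2
        · exact cubic_ah (by omega)
        · exact (ihD (d + 1) (by omega) (by omega) _ (by omega)).1
      · refine (ihD (d + 2) (by omega) (by omega) _ (by omega)).2 r h0 hr ?_ ?_ <;>
        · simp only [ne_eq, Prod.mk.injEq]
          omega
    obtain h | h | h | h | h : j = 1 ∨ j = 2 ∨ j = 3 ∨ j = 4 ∨ 5 ≤ j := by omega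
    · obtain h' | h' := le_or_gt 14 d
      · exact hU (by omega)
      · subst h
        exact ternary (by omega) (by omega)
    · obtain h' | h' := le_or_gt 5 d
      · exact hU (by omega)
      · subst h
        have hd2 : 2 ≤ d := by omega
        interval_cases d
        exacts [quaternary_5, quaternary_6, quaternary_7]
    · obtain h' | h' := le_or_gt 3 d
      · exact hU (by omega)
      · subst h
        obtain rfl : d = 2 := by omega
        exact quinary_5
    · obtain h' | h' := le_or_gt 3 d
      · exact hU (by omega)
      · subst h
        obtain rfl : d = 2 := by omega
        exact senary_5
    · exact hU (by omega)

end Induction4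

lemma bj_of_not_exceptional {d n r : ℕ} (hd : 3 ≤ d) (hn : 1 ≤ n)
    (hsub : r * (n + 1) < Nat.choose (n + d) d)
    (h1 : (d, n, r) ≠ (6, 2, 9)) (h2 : (d, n, r) ≠ (4, 3, 8)) (h3 : (d, n, r) ≠ (3, 5, 9))
    (i : Fin r) : BJ (Fin (n + 1)) d i := by
  have hm : r * (n + 1) < (n + 1).multichoose d := by
    rwa [Nat.multichoose_eq, show n + 1 + d - 1 = n + d by omega]
  simp only [ne_eq, Prod.mk.injEq] at h1 h2 h3
  obtain ⟨e, rfl⟩ : ∃ e, d = e + 2 := ⟨d - 2, by omega⟩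
  obtain rfl | hn := hn.eq_or_lt
  · exact (binary_bs _ r i.pos hm (by simp) (by simp)).bj i
  obtain hd | hd := hd.eq_or_lt
  · obtain rfl : e = 1 := by omega
    exact cubic_bj (by omega) hm (by omega) i
  · refine ((main_induction (e + 2) hd (n + 1) (by omega)).2 r i.pos hm ?_ ?_).bj i <;>
    · simp only [ne_eq, Prod.mk.injEq]
      omega

end Main

theorem common_singular_locus_generic (d n r : ℕ) (hd : 3 ≤ d) (hn : 1 ≤ n) (hr : 1 ≤ r)
    (hsub : r * (n + 1) < Nat.choose (n + d) d)
    (h1 : (d, n, r) ≠ (6, 2, 9)) (h2 : (d, n, r) ≠ (4, 3, 8)) (h3 : (d, n, r) ≠ (3, 5, 9)) :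
    Generic (ι := Fin r × Fin (n + 1)) fun t =>
      let p : Fin r → Fin (n + 1) → ℂ := fun i j => t (i, j)
      ∀ q : Fin (n + 1) → ℂ, q ≠ 0 →
        (∀ f : MvPolynomial (Fin (n + 1)) ℂ, f.IsHomogeneous d →
          (∀ i, SingularAt f (p i)) → SingularAt f q) →
        ∃ (i : Fin r) (c : ℂ), q = c • p i := by
  have : Nonempty (Fin r) := ⟨⟨0, hr⟩⟩
  obtain ⟨F, hF, h⟩ := generic_of_BJ (by omega)
    (bj_of_not_exceptional hd hn hsub h1 h2 h3)
  have hs : ∀ (f : MvPolynomial (Fin (n + 1)) ℂ) (p : Fin (n + 1) → ℂ),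
      SingularAt f p ↔ grad p f = 0 := fun f p => funext_iff.symm
  refine ⟨F, hF, fun t ht q _ hq => h t ht q fun f hf hp => ?_⟩
  exact (hs f q).1 (hq f hf fun i => (hs f _).2 (hp i))
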